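/- There exists a group G of cardinality ℵ₁ such that for every uncountable subset Y ⊆ G there exists a natural number n such that every element of G can be written as a product g₁g₂···g_m with 1 ≤ m ≤ n and each g_i ∈ Y (no inverses of elements of Y are used). -/

import Mathlib

/-- `wordSet Y n` is the set `Y^{[n]}` of all products of length at most `n`
of elements of `Y` and their inverses. -/
def wordSet {H : Type*} [Group H] (Y : Set H) (n : ℕ) : Set H :=
  {h | ∃ m : ℕ, m ≤ n ∧ ∃ g : Fin m → H,
    (∀ i, g i ∈ Y ∨ (g i)⁻¹ ∈ Y) ∧ h = (List.ofFn g).prod}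

/-- A subgroup `K` of `G` is malnormal if `K ∩ gKg⁻¹ = {1}` for all `g ∉ K`. -/
def Malnormal {G : Type*} [Group G] (K : Subgroup G) : Prop :=
  ∀ g : G, g ∉ K → ∀ y : G, y ∈ K → g⁻¹ * y * g ∈ K → y = 1

/-- A group is strongly bounded if every action by isometries on a metric
space has bounded orbits. -/
def StronglyBounded (H : Type*) [Group H] : Prop :=
  ∀ (X : Type) (_ : MetricSpace X) (_ : MulAction H X),
    (∀ h : H, Isometry (fun x : X => h • x)) →
    ∀ x : X, Bornology.IsBounded (MulAction.orbit H x)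

/-- A group is Jónsson if every proper subgroup has strictly smaller cardinality. -/
def Jonsson (H : Type*) [Group H] : Prop :=
  ∀ K : Subgroup H, K ≠ ⊤ → Cardinal.mk K < Cardinal.mk H

/-!
Let `X` be a well order of type `ω₁`, and let `f` be a coloring of the pairs `a < b` of `X` that
takes every value on every uncountable set. We construct `G`, generated by `v γ` for `γ : X`, such
that the subgroup generated by the `v γ` with `γ ≤ β` is a suitable extension of the countable
subgroup generated by those with `γ < β`: every new element `y` comes with a bound `n` such that,
for all nontrivial old `c`, all old `x` outside some finitely generated subgroup express an old
element, which may be prescribed as a function of `x`, as a positive word of length at most `n` in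
`y`, `x` and `c`. We let `f` prescribe it in terms of the levels of `x` and `y`, the stages at which
they appear. An uncountable set `Y` has elements at uncountably many levels, and by the pigeonhole
principle uncountably many of them share the same bound `n`. As a finitely generated group of old
elements has finitely many levels, `f` then provides for every `g : G` elements `x` and `y` of `Y`
that express `g` together with a fixed `c ∈ Y`.

The extension is the union of a chain in which `G₀ ≤ M` becomes `L ≤ P ⧸ N`, where `G₀ ≤ L` are
finitely generated groups of old elements, `P` is the amalgamated product of `L` and `M` over `G₀`,
and `N` is generated by the conjugates of the relators identifying the positive words with the
prescribed elements. The malnormality of `G₀` in `M` is preserved. Every conjugate of a relator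
translates an axis in the Bass–Serre tree of `P`, and the exponents of the words are chosen such
that two of these axes overlap only in a short part of a period. In the manner of a windmill, the
translations are added to a growing subgroup of `N` axis by axis, the nearest ones first; normal
forms with respect to the last step show that every nontrivial element of `N` moves each vertex a
long way, so that `L` and `M` embed into the quotient.
-/

namespace JonssonSemigroup

/-! ### Colorings with all values on every uncountable set -/

section Coloring

open Cardinal PiNat Set

section CountableInitialSegments

variable {X : Type*} [LinearOrder X] [∀ a : X, Countable (Iio a)]

lemma countable_Iic_of_countable_Iio (a : X) : (Iic a).Countable := by
  rw [← Iio_insert]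
  exact (Iio a).to_countable.insert a

lemma exists_mem_gt_of_not_countable {s : Set X} (hs : ¬ s.Countable) (a : X) : ∃ b ∈ s, a < b := by
  by_contra! h
  exact hs ((countable_Iic_of_countable_Iio a).mono h)

lemma exists_injOn_Iio : ∃ e : X → X → ℕ, ∀ b, InjOn (e b) (Iio b) := by
  choose e he using fun b : X => countable_iff_exists_injOn.1 (Iio b).to_countable
  exact ⟨e, he⟩

variable [Uncountable X]

lemma exists_forall_lt_of_countable {s : Set X} (hs : s.Countable) : ∃ b, ∀ a ∈ s, a < b := by
  by_contra! h
  refine not_countable_univ ((hs.biUnion fun a _ => countable_Iic_of_countable_Iio a).mono ?_)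
  intro b _
  obtain ⟨a, ha, hba⟩ := h b
  exact mem_biUnion ha hba

/-- The points of a linear order, other than its least element, below which `f` maps an initial
segment to itself. On an order of type `ω₁` these are the typical members of a closed unbounded
set. -/
def closurePoints (f : X → X) : Set X := {d | (Iio d).Nonempty ∧ MapsTo f (Iio d) (Iio d)}

lemma exists_gt_mem_closurePoints [WellFoundedLT X] (f : X → X) (a : X) :
    ∃ d ∈ closurePoints f, a < d := by
  have bound : ∀ x, ∃ y, ∀ z ≤ x, f z < y := fun x => by
    simpa using exists_forall_lt_of_countable ((countable_Iic_of_countable_Iio x).image f)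
  choose g hg using bound
  obtain ⟨b, hb⟩ := exists_forall_lt_of_countable (countable_range fun k => g^[k] a)
  obtain ⟨d, hd, hmin⟩ := wellFounded_lt.has_min {d | ∀ k, g^[k] a < d} ⟨b, fun k => hb _ ⟨k, rfl⟩⟩
  refine ⟨d, ⟨⟨a, hd 0⟩, fun z hz => ?_⟩, hd 0⟩
  obtain ⟨k, hk⟩ : ∃ k, z ≤ g^[k] a := by
    by_contra! h
    exact hmin z h hz
  have hfz := hg _ z hk
  rw [← Function.iterate_succ_apply' g] at hfz
  exact hfz.trans (hd (k + 1))

lemma exists_forall_exists_mem_closurePoints [WellFoundedLT X] (e : X → X → ℕ) (x : X) :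
    ∃ n, ∀ f : X → X, ∃ d ∈ closurePoints f, x < d ∧ e d x = n := by
  by_contra! h
  choose f hf using h
  have bound : ∀ z, ∃ y, ∀ n, f n z < y := fun z => by
    simpa using exists_forall_lt_of_countable (countable_range fun n => f n z)
  choose g hg using bound
  obtain ⟨d, hd, hxd⟩ := exists_gt_mem_closurePoints g x
  exact hf (e d x) d ⟨hd.1, fun z hz => (hg z _).trans (hd.2 hz)⟩ hxd rfl

lemma exists_bound_of_countable_family {ι : Type*} [Countable ι] (C : ι → Set X) (x : X) :
    ∃ y, ∀ i, (¬ (C i).Countable → ∃ a ∈ C i, x < a ∧ a ≤ y) ∧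
      ((C i).Countable → ∀ a ∈ C i, a ≤ y) := by
  have bound : ∀ i, ∃ y, (¬ (C i).Countable → ∃ a ∈ C i, x < a ∧ a ≤ y) ∧
      ((C i).Countable → ∀ a ∈ C i, a ≤ y) := by
    intro i
    by_cases h : (C i).Countable
    · obtain ⟨b, hb⟩ := exists_forall_lt_of_countable h
      exact ⟨b, absurd h, fun _ a ha => (hb a ha).le⟩
    · obtain ⟨a, ha, hxa⟩ := exists_mem_gt_of_not_countable h x
      exact ⟨a, fun _ => ⟨a, ha, hxa, le_rfl⟩, fun h' => absurd h' h⟩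
  choose y hy_unc hy_count using bound
  obtain ⟨b, hb⟩ := exists_forall_lt_of_countable (countable_range y)
  have hyb : ∀ i, y i ≤ b := fun i => (hb _ ⟨i, rfl⟩).le
  refine ⟨b, fun i => ⟨fun h => ?_, fun h a ha => (hy_count i h a ha).trans (hyb i)⟩⟩
  obtain ⟨a, ha, hxa, hay⟩ := hy_unc i h
  exact ⟨a, ha, hxa, hay.trans (hyb i)⟩

end CountableInitialSegments

lemma exists_surjective_domRestrict_of_embedding {α β : Type*} [Nonempty β] {s : Set α}
    (h : Nonempty (β ↪ s)) : ∃ g : α → β, Function.Surjective (s.domRestrict g) := by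
  obtain ⟨i⟩ := h
  refine ⟨Function.invFun fun c => (i c).1, fun c => ⟨i c, ?_⟩⟩
  exact Function.leftInverse_invFun (Subtype.val_injective.comp i.injective) c

-- An Ulam matrix splits an order of type `ω₁` into `ℵ₁` stationary sets.
lemma exists_forall_exists_mem_closurePoints_eq {X : Type*} [LinearOrder X] [WellFoundedLT X]
    [∀ a : X, Countable (Iio a)] (hX : #X = ℵ₁) :
    ∃ col : X → X, ∀ (f : X → X) c, ∃ d ∈ closurePoints f, col d = c := by
  have : Uncountable X := by
    rw [← aleph0_lt_mk_iff, hX]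
    exact aleph0_lt_aleph_one
  obtain ⟨e, he⟩ := exists_injOn_Iio (X := X)
  choose N hN using exists_forall_exists_mem_closurePoints e
  obtain ⟨n, hn⟩ : ∃ n, ¬ (N ⁻¹' {n}).Countable := by
    by_contra! h
    exact not_countable_univ ((countable_iUnion h).mono fun x _ => mem_iUnion.2 ⟨N x, rfl⟩)
  obtain ⟨g, hg⟩ : ∃ g : X → X, Function.Surjective ((N ⁻¹' {n}).domRestrict g) := by
    refine exists_surjective_domRestrict_of_embedding ?_
    rw [← le_def, hX, ← succ_aleph0, Order.succ_le_iff, ← not_le, le_aleph0_iff_set_countable]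
    exact hn
  have hcol : ∀ d, ∃ c, ∀ x < d, e d x = n → g x = c := by
    intro d
    by_cases h : ∃ x < d, e d x = n
    · obtain ⟨x, hx, hxn⟩ := h
      exact ⟨g x, fun y hy hyn => by rw [he d hx hy (hxn.trans hyn.symm)]⟩
    · exact ⟨d, fun x hx hxn => absurd ⟨x, hx, hxn⟩ h⟩
  choose col hcol using hcol
  refine ⟨col, fun f c => ?_⟩
  obtain ⟨x, rfl⟩ := hg c
  obtain ⟨d, hd, hxd, hed⟩ := hN x f
  exact ⟨d, hd, (hcol d x hxd (hed.trans x.2)).symm⟩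

lemma countable_setOf_cylinder {E : ℕ → Type*} [∀ n, Countable (E n)] :
    {s | ∃ (x : ∀ n, E n) (n : ℕ), s = cylinder x n}.Countable := by
  refine (countable_range fun p : Σ n, ∀ i : Fin n, E i =>
    {y : ∀ n, E n | ∀ i : Fin p.1, y i = p.2 i}).mono ?_
  rintro _ ⟨x, n, rfl⟩
  exact ⟨⟨n, fun i => x i⟩, by ext y; simp [cylinder, Fin.forall_iff]⟩

/-- The branches that leave the branch `x` of the binary tree exactly at the place `n`. -/
def sibling (x : ℕ → Bool) (n : ℕ) : Set (ℕ → Bool) :=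
  cylinder (Function.update x n (!x n)) (n + 1)

lemma mem_sibling_iff {x y : ℕ → Bool} {n : ℕ} : y ∈ sibling x n ↔ y ≠ x ∧ firstDiff y x = n := by
  have hmem : y ∈ sibling x n ↔ (∀ i < n, y i = x i) ∧ y n ≠ x n := by
    simp only [sibling, cylinder, mem_ofPred_eq, Nat.forall_lt_succ_right, Function.update_self,
      Bool.eq_not, ne_eq]
    refine and_congr_left' (forall₂_congr fun i hi => ?_)
    rw [Function.update_of_ne hi.ne]
  rw [hmem]
  constructor
  · rintro ⟨hlt, hne⟩
    have hyx : y ≠ x := fun h => hne (congrFun h n)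
    refine ⟨hyx, le_antisymm ?_ ((mem_cylinder_iff_le_firstDiff hyx n).1 hlt)⟩
    by_contra! h
    exact hne (apply_eq_of_lt_firstDiff h)
  · rintro ⟨hyx, rfl⟩
    exact ⟨fun i => apply_eq_of_lt_firstDiff, apply_firstDiff_ne hyx⟩

lemma exists_uncountable_sibling {X : Type*} {r : X → ℕ → Bool} (hr : Function.Injective r)
    {Z : Set X} {b : X} (n₀ : ℕ) (hb : ¬ (Z ∩ r ⁻¹' cylinder (r b) n₀).Countable) :
    ∃ n ≥ n₀, ¬ (Z ∩ r ⁻¹' sibling (r b) n).Countable := by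
  by_contra! h
  refine hb (((countable_iUnion fun n : {n // n₀ ≤ n} => h n.1 n.2).insert b).mono ?_)
  rintro a ⟨haZ, ha⟩
  rcases eq_or_ne a b with rfl | hab
  · exact Or.inl rfl
  · have hrab := hr.ne hab
    exact Or.inr (mem_iUnion.2 ⟨⟨_, (mem_cylinder_iff_le_firstDiff hrab n₀).1 ha⟩, haZ,
      mem_sibling_iff.2 ⟨hrab, rfl⟩⟩)

section Walk

variable {X : Type*} [LinearOrder X] [WellFoundedLT X]

/-- The least `x ∈ [a, b)` with `e b x ≤ n`, or `b` if there is none: the first step of a walk from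
`b` towards `a` along the finite sets `{x < b | e b x ≤ n}`. -/
noncomputable def walkStep (e : X → X → ℕ) (n : ℕ) (a b : X) : X :=
  (wellFounded_lt (α := X)).min {x | x = b ∨ a ≤ x ∧ x < b ∧ e b x ≤ n} ⟨b, Or.inl rfl⟩

lemma walkStep_eq {e : X → X → ℕ} {n : ℕ} {a b d : X} (had : a ≤ d) (hdb : d ≤ b)
    (hd : e b d ≤ n) (hmin : ∀ x, a ≤ x → x < d → n < e b x) : walkStep e n a b = d := by
  have hspec := (wellFounded_lt (α := X)).min_mem {x | x = b ∨ a ≤ x ∧ x < b ∧ e b x ≤ n}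
    ⟨b, Or.inl rfl⟩
  refine le_antisymm (wellFounded_lt.min_le ?_) ?_
  · exact hdb.eq_or_lt.imp id fun h => ⟨had, h, hd⟩
  · rcases hspec with h | ⟨h1, -, h2⟩
    · exact hdb.trans_eq h.symm
    · exact not_lt.1 fun h => (hmin _ h1 h).not_ge h2

variable [∀ a : X, Countable (Iio a)] [Uncountable X]

/- Below a closure point `d` of the bounding function of `exists_bound_of_countable_family`, every
uncountable cylinder has members above any finite set; so for `b ≥ d` some `a < d` branches off
from `b` so late that `d` itself is the first place of the walk from `b` above `a`. -/
lemma exists_walkStep_mem {r : X → ℕ → Bool} (hr : Function.Injective r) {e : X → X → ℕ}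
    (he : ∀ b, InjOn (e b) (Iio b)) {Z : Set X} (hZ : ¬ Z.Countable) (F : X → Finset X) :
    ∃ f : X → X, ∀ d ∈ closurePoints f, ∃ a ∈ Z, ∃ b ∈ Z, a < b ∧ a ∉ F b ∧
      walkStep e (firstDiff (r a) (r b)) a b = d := by
  have : Countable {s | ∃ (x : ℕ → Bool) (n : ℕ), s = cylinder x n} :=
    countable_setOf_cylinder.to_subtype
  choose f hf using exists_bound_of_countable_family
    fun s : {s | ∃ (x : ℕ → Bool) (n : ℕ), s = cylinder x n} => Z ∩ r ⁻¹' s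
  refine ⟨f, ?_⟩
  rintro d ⟨⟨x₀, hx₀⟩, hd⟩
  obtain ⟨b, hbZ, hdb⟩ := exists_mem_gt_of_not_countable hZ d
  have hcyl : ¬ (Z ∩ r ⁻¹' cylinder (r b) (e b d)).Countable := fun h =>
    ((hf x₀ ⟨_, _, _, rfl⟩).2 h b ⟨hbZ, self_mem_cylinder _ _⟩).not_gt ((hd hx₀).trans hdb)
  obtain ⟨n, hn, hsib⟩ := exists_uncountable_sibling hr _ hcyl
  have hfin : {x | x < d ∧ (e b x ≤ n ∨ x ∈ F b ∨ x = x₀)}.Finite := by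
    have hladder : {x | x < d ∧ e b x ≤ n}.Finite :=
      Finite.of_finite_image ((finite_Iic n).subset (image_subset_iff.2 fun x hx => hx.2))
        ((he b).mono fun x hx => hx.1.trans hdb)
    refine (hladder.union ((F b).finite_toSet.union (finite_singleton x₀))).subset ?_
    rintro x ⟨hxd, hx | hx⟩
    · exact Or.inl ⟨hxd, hx⟩
    · exact Or.inr hx
  obtain ⟨m, hm, hmax⟩ := exists_max_image _ id hfin ⟨x₀, hx₀, Or.inr (Or.inr rfl)⟩
  obtain ⟨a, ⟨haZ, ha⟩, hma, haf⟩ := (hf m ⟨_, _, _, rfl⟩).1 hsib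
  have had : a < d := haf.trans_lt (hd hm.1)
  refine ⟨a, haZ, b, hbZ, had.trans hdb, fun haF => ?_, ?_⟩
  · exact (hmax a ⟨had, Or.inr (Or.inl haF)⟩).not_gt hma
  · rw [(mem_sibling_iff.1 ha).2]
    refine walkStep_eq had.le hdb.le hn fun x hax hxd => not_le.1 fun hx => ?_
    exact (hmax x ⟨hxd, Or.inl hx⟩).not_gt (hma.trans_le hax)

end Walk

/-- The coloring `f` of the pairs `a < b` takes every value on every uncountable set, even on the
pairs for which `a` avoids a finite set that depends on `b`. -/
def IsStrongColoring {X C : Type*} [LT X] (f : X → X → C) : Prop :=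
  ∀ Z : Set X, ¬ Z.Countable → ∀ (F : X → Finset X) (c : C),
    ∃ a ∈ Z, ∃ b ∈ Z, a < b ∧ a ∉ F b ∧ f a b = c

lemma IsStrongColoring.comp {X C C' : Type*} [LT X] {f : X → X → C} (hf : IsStrongColoring f)
    {φ : C → C'} (hφ : Function.Surjective φ) : IsStrongColoring fun a b => φ (f a b) := by
  intro Z hZ F c'
  obtain ⟨c, rfl⟩ := hφ c'
  obtain ⟨a, ha, b, hb, hab, haF, rfl⟩ := hf Z hZ F c
  exact ⟨a, ha, b, hb, hab, haF, rfl⟩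

theorem exists_isStrongColoring {X : Type*} [LinearOrder X] [WellFoundedLT X]
    [∀ a : X, Countable (Iio a)] (hX : #X = ℵ₁) : ∃ f : X → X → X, IsStrongColoring f := by
  have : Uncountable X := by
    rw [← aleph0_lt_mk_iff, hX]
    exact aleph0_lt_aleph_one
  obtain ⟨r⟩ : Nonempty (X ↪ (ℕ → Bool)) := by
    rw [← lift_mk_le', hX]
    simpa using aleph_one_le_continuum
  obtain ⟨e, he⟩ := exists_injOn_Iio (X := X)
  obtain ⟨col, hcol⟩ := exists_forall_exists_mem_closurePoints_eq hX
  refine ⟨fun a b => col (walkStep e (firstDiff (r a) (r b)) a b), fun Z hZ F c => ?_⟩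
  obtain ⟨f, hf⟩ := exists_walkStep_mem r.injective he hZ F
  obtain ⟨d, hd, rfl⟩ := hcol f c
  obtain ⟨a, ha, b, hb, hab, haF, rfl⟩ := hf d hd
  exact ⟨a, ha, b, hb, hab, haF, rfl⟩

end Coloring

/-! ### Projections to axes -/

/-- A group `P` acting on a connected graph that contains a family of bi-infinite axes indexed by
`I`. The vertices of the axis `A` are `axis A i` for `i : ℤ`, the projection of `x` to `A` is
`axis A (proj A x)`, and `shift A` translates `A` by `period A`. `Parallel` indices describe the
same axis with possibly different base points; axes that are not parallel overlap in length at most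
`bound A`. -/
structure AxisSystem (P V I : Type*) [Group P] [MulAction P V] [MulAction P I]
    (Γ : SimpleGraph V) where
  axis : I → ℤ → V
  proj : I → V → ℤ
  shift : I → P
  period : I → ℤ
  bound : I → ℤ
  Parallel : I → I → Prop
  connected : Γ.Connected
  adj_smul : ∀ (g : P) {x y}, Γ.Adj x y → Γ.Adj (g • x) (g • y)
  axis_adj : ∀ A i, Γ.Adj (axis A i) (axis A (i + 1))
  proj_axis : ∀ A i, proj A (axis A i) = i
  proj_adj : ∀ A {x y}, Γ.Adj x y → proj A x = proj A y ∨
    ∃ i, (x = axis A i ∧ y = axis A (i + 1)) ∨ (y = axis A i ∧ x = axis A (i + 1))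
  proj_smul : ∀ (g : P) A x, proj (g • A) (g • x) = proj A x
  axis_smul : ∀ (g : P) A i, axis (g • A) i = g • axis A i
  shift_smul : ∀ (g : P) A, shift (g • A) = g * shift A * g⁻¹
  bound_smul : ∀ (g : P) A, bound (g • A) = bound A
  proj_shift : ∀ A x, proj A (shift A • x) = proj A x + period A
  axis_shift : ∀ A i, axis A (i + period A) = shift A • axis A i
  equivalence_parallel : Equivalence Parallel
  parallel_smul : ∀ (g : P) {A B}, Parallel A B → Parallel (g • A) (g • B)
  shift_eq_of_parallel : ∀ {A B}, Parallel A B → shift A = shift B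
  exists_zpow_eq : ∀ (g : P) {A}, Parallel A (g • A) → ∃ k : ℤ, g = shift A ^ k
  exists_axis_eq_of_parallel : ∀ {A B}, Parallel A B → ∀ i, ∃ j, axis A i = axis B j
  overlap_le : ∀ {A B}, ¬ Parallel A B → ∀ i j, |proj A (axis B i) - proj A (axis B j)| ≤ bound A
  bound_pos : ∀ A, 0 < bound A
  ten_mul_bound_le_period : ∀ A, 10 * bound A ≤ period A

namespace AxisSystem

variable {P V I : Type*} [Group P] [MulAction P V] [MulAction P I] {Γ : SimpleGraph V}
  (D : AxisSystem P V I Γ)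

lemma period_pos (A : I) : 0 < D.period A := by
  have := D.bound_pos A
  have := D.ten_mul_bound_le_period A
  omega

lemma proj_smul_left (g : P) (A : I) (x : V) : D.proj (g • A) x = D.proj A (g⁻¹ • x) := by
  rw [← D.proj_smul g A, smul_inv_smul]

lemma period_smul (g : P) (A : I) : D.period (g • A) = D.period A := by
  have h₁ := D.proj_shift (g • A) (g • D.axis A 0)
  have h₂ := D.proj_shift A (D.axis A 0)
  rw [D.shift_smul, mul_smul, inv_smul_smul, mul_smul, D.proj_smul, D.proj_smul] at h₁
  linarith

lemma proj_zpow_smul (A : I) (k : ℤ) (x : V) :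
    D.proj A (D.shift A ^ k • x) = D.proj A x + k * D.period A := by
  induction k generalizing x with
  | zero => simp
  | succ k ih => rw [zpow_add_one, mul_smul, ih, D.proj_shift]; ring
  | pred k ih =>
    have h := D.proj_shift A ((D.shift A)⁻¹ • x)
    rw [smul_inv_smul] at h
    rw [zpow_sub_one, mul_smul, ih]
    linarith

lemma axis_add_mul_period (A : I) (k i : ℤ) :
    D.axis A (i + k * D.period A) = D.shift A ^ k • D.axis A i := by
  induction k generalizing i with
  | zero => simp
  | succ k ih =>
    rw [zpow_add_one, mul_smul, ← D.axis_shift, ← ih]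
    congr 1; ring
  | pred k ih =>
    have h : D.axis A (i - D.period A) = (D.shift A)⁻¹ • D.axis A i := by
      rw [eq_inv_smul_iff, ← D.axis_shift, sub_add_cancel]
    rw [zpow_sub_one, mul_smul, ← h, ← ih]
    congr 1; ring

include D in
lemma induction_adj {p : V → Prop} (x₀ : V) (h₀ : p x₀)
    (h : ∀ x y, Γ.Adj x y → p x → p y) (x : V) : p x := by
  obtain ⟨w⟩ := D.connected.preconnected x₀ x
  induction w with
  | nil => exact h₀
  | cons hadj _ ih => exact ih (h _ _ hadj h₀)

lemma proj_eq_or_of_adj (A : I) {x y : V} (hxy : Γ.Adj x y) : D.proj A x = D.proj A y ∨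
    |D.proj A x - D.proj A y| = 1 ∧ D.axis A (D.proj A x) = x ∧ D.axis A (D.proj A y) = y := by
  rcases D.proj_adj A hxy with h | ⟨i, ⟨rfl, rfl⟩ | ⟨rfl, rfl⟩⟩
  · exact Or.inl h
  all_goals exact Or.inr (by simp [D.proj_axis])

/-! ### Separation by the edges of the axes -/

lemma eq_axis_of_adj (C : I) {n : ℤ} {x y : V} (hxy : Γ.Adj x y)
    (h : ¬ (D.proj C x ≤ n ↔ D.proj C y ≤ n)) :
    (x = D.axis C n ∧ y = D.axis C (n + 1)) ∨ (x = D.axis C (n + 1) ∧ y = D.axis C n) := by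
  rcases D.proj_adj C hxy with hC | ⟨i, ⟨rfl, rfl⟩ | ⟨rfl, rfl⟩⟩
  · exact absurd (by rw [hC]) h
  all_goals
    simp only [D.proj_axis] at h
    obtain rfl : i = n := by omega
    simp

lemma exists_proj_eq_or (A B : I) (x : V) :
    (∃ j, D.proj A x = D.proj A (D.axis B j)) ∨ ∃ i, D.proj B x = D.proj B (D.axis A i) := by
  refine D.induction_adj (p := fun x => (∃ j, D.proj A x = D.proj A (D.axis B j)) ∨
    ∃ i, D.proj B x = D.proj B (D.axis A i)) (D.axis A 0) (Or.inr ⟨0, rfl⟩) ?_ x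
  intro x y hxy hx
  rcases D.proj_eq_or_of_adj A hxy with hA | ⟨-, -, hA⟩
  · rcases D.proj_eq_or_of_adj B hxy with hB | ⟨-, -, hB⟩
    · rwa [hA, hB] at hx
    · exact Or.inl ⟨_, by rw [hB]⟩
  · exact Or.inr ⟨_, by rw [hA]⟩

lemma proj_axis_eq_of_separates (B C : I) (n : ℤ) (x : V)
    (h : ¬ (D.proj C x ≤ n ↔ D.proj C (D.axis B (D.proj B x)) ≤ n)) :
    D.proj B (D.axis C n) = D.proj B x ∧ D.proj B (D.axis C (n + 1)) = D.proj B x := by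
  revert h
  refine D.induction_adj (p := fun x =>
    ¬ (D.proj C x ≤ n ↔ D.proj C (D.axis B (D.proj B x)) ≤ n) →
    D.proj B (D.axis C n) = D.proj B x ∧ D.proj B (D.axis C (n + 1)) = D.proj B x)
    (D.axis B 0) (fun h => absurd (by rw [D.proj_axis]) h) ?_ x
  intro x y hxy hx h
  rcases D.proj_eq_or_of_adj B hxy with hB | ⟨-, -, hB⟩
  · rw [← hB] at h ⊢
    by_cases hC : D.proj C x ≤ n ↔ D.proj C y ≤ n
    · exact hx (by rwa [hC])
    · rcases D.eq_axis_of_adj C hxy hC with ⟨rfl, rfl⟩ | ⟨rfl, rfl⟩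
      · exact ⟨rfl, hB.symm⟩
      · exact ⟨hB.symm, rfl⟩
  · exact absurd (by rw [hB]) h

lemma proj_axis_ne_of_separates (B C : I) (n i j : ℤ)
    (h : ¬ (D.proj C (D.axis B i) ≤ n ↔ D.proj C (D.axis B j) ≤ n)) :
    D.proj B (D.axis C n) ≠ D.proj B (D.axis C (n + 1)) := by
  intro heq
  have succ_iff : ∀ k, D.proj C (D.axis B k) ≤ n ↔ D.proj C (D.axis B (k + 1)) ≤ n := by
    intro k
    by_contra hk
    rcases D.eq_axis_of_adj C (D.axis_adj B k) hk with ⟨h₁, h₂⟩ | ⟨h₁, h₂⟩ <;>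
    · rw [← h₁, ← h₂, D.proj_axis, D.proj_axis] at heq
      omega
  have iff_zero : ∀ k, D.proj C (D.axis B k) ≤ n ↔ D.proj C (D.axis B 0) ≤ n := by
    intro k
    induction k with
    | zero => exact Iff.rfl
    | succ k ih => rw [← succ_iff]; exact ih
    | pred k ih => rw [succ_iff, sub_add_cancel]; exact ih
  exact h ((iff_zero i).trans (iff_zero j).symm)

/-- The points that no edge of an axis separates from both `x` and `y`. -/
def hull (x y : V) : Set V := {w | ∀ B, D.proj B w ∈ Set.uIcc (D.proj B x) (D.proj B y)}

lemma left_mem_hull (x y : V) : x ∈ D.hull x y := fun _ => Set.left_mem_uIcc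

lemma smul_mem_hull (g : P) {x y w : V} (hw : w ∈ D.hull x y) :
    g • w ∈ D.hull (g • x) (g • y) := by
  intro B
  have h : ∀ z, D.proj B (g • z) = D.proj (g⁻¹ • B) z := fun z => by
    rw [D.proj_smul_left, inv_inv]
  rw [h, h, h]
  exact hw (g⁻¹ • B)

lemma axis_mem_hull (B : I) (x y : V) (h : D.proj B x ≠ D.proj B y) :
    D.axis B (D.proj B x) ∈ D.hull x y := by
  intro C
  set w := D.proj C (D.axis B (D.proj B x))
  have not_separates : ∀ n, ¬ (D.proj C x ≤ n ↔ w ≤ n) → ¬ (D.proj C y ≤ n ↔ w ≤ n) → False := by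
    intro n hx hy
    obtain ⟨h₀, h₁⟩ := D.proj_axis_eq_of_separates B C n x hx
    by_cases hn : D.proj C y ≤ n ↔ D.proj C (D.axis B (D.proj B y)) ≤ n
    · rw [hn] at hy
      exact D.proj_axis_ne_of_separates B C n _ _ hy (h₀.trans h₁.symm)
    · exact h (h₀.symm.trans (D.proj_axis_eq_of_separates B C n y hn).1)
  rw [Set.mem_uIcc]
  by_contra hcon
  rcases le_or_gt (D.proj C x) w with hx | hx
  · exact not_separates (w - 1) (by omega) (by omega)
  · exact not_separates w (by omega) (by omega)

/-! ### Windmills -/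

/-- The group generated by the translations along the axes in `S`. -/
def shiftGroup (S : Set I) : Subgroup P := Subgroup.closure (D.shift '' S)

variable {D}

lemma shift_mem_shiftGroup {S : Set I} {A : I} (hA : A ∈ S) : D.shift A ∈ D.shiftGroup S :=
  Subgroup.subset_closure ⟨A, hA, rfl⟩

lemma shiftGroup_mono {S T : Set I} (h : S ⊆ T) : D.shiftGroup S ≤ D.shiftGroup T :=
  Subgroup.closure_mono (Set.image_mono h)

variable (D) in
instance shiftGroup_univ_normal : (D.shiftGroup Set.univ).Normal := by
  have h : Group.conjugatesOfSet (D.shift '' Set.univ) = D.shift '' Set.univ := by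
    refine Set.Subset.antisymm (fun x hx => ?_) Group.subset_conjugatesOfSet
    obtain ⟨_, ⟨A, -, rfl⟩, hA⟩ := Group.mem_conjugatesOfSet_iff.1 hx
    obtain ⟨g, rfl⟩ := isConj_iff.1 hA
    exact ⟨g • A, trivial, D.shift_smul g A⟩
  rw [shiftGroup, ← h]
  exact Subgroup.normalClosure_normal

variable (D) in
/-- The invariant of the inductive construction of the group generated by all translations: axes
outside `S` hardly notice that `shiftGroup S` moves `v`, whereas some axis records every such
movement by a nontrivial element. -/
structure IsWindmill (v : V) (S : Set I) : Prop where
  smul_mem : ∀ s ∈ D.shiftGroup S, ∀ A ∈ S, s • A ∈ S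
  mem_of_parallel : ∀ {A B}, A ∈ S → D.Parallel A B → B ∈ S
  abs_sub_le : ∀ B ∉ S, ∀ s ∈ D.shiftGroup S, |D.proj B v - D.proj B (s • v)| ≤ 2 * D.bound B
  exists_le : ∀ s ∈ D.shiftGroup S, s ≠ 1 →
    ∃ A, D.period A - 3 * D.bound A ≤ |D.proj A v - D.proj A (s • v)|

lemma IsWindmill.smul_notMem {v : V} {S : Set I} (hS : D.IsWindmill v S) {s : P}
    (hs : s ∈ D.shiftGroup S) {A : I} (hA : A ∉ S) : s • A ∉ S :=
  fun h => hA (by simpa using hS.smul_mem s⁻¹ (inv_mem hs) _ h)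

variable (D) in
/-- The union of the hulls of pairs of points in the orbit of `v` under `shiftGroup S`. -/
def span (v : V) (S : Set I) : Set V :=
  {w | ∃ s ∈ D.shiftGroup S, ∃ s' ∈ D.shiftGroup S, w ∈ D.hull (s • v) (s' • v)}

section Span

variable {v : V} {S : Set I}

lemma smul_mem_span_of_mem {s : P} (hs : s ∈ D.shiftGroup S) : s • v ∈ D.span v S :=
  ⟨s, hs, s, hs, D.left_mem_hull _ _⟩

lemma self_mem_span : v ∈ D.span v S := by
  simpa using smul_mem_span_of_mem (v := v) (one_mem (D.shiftGroup S))

lemma smul_mem_span {s : P} (hs : s ∈ D.shiftGroup S) {w : V} (hw : w ∈ D.span v S) :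
    s • w ∈ D.span v S := by
  obtain ⟨s₁, h₁, s₂, h₂, h⟩ := hw
  refine ⟨s * s₁, mul_mem hs h₁, s * s₂, mul_mem hs h₂, ?_⟩
  rw [mul_smul, mul_smul]
  exact D.smul_mem_hull s h

lemma IsWindmill.abs_sub_le_of_mem_span (hS : D.IsWindmill v S) {B : I} (hB : B ∉ S) {w : V}
    (hw : w ∈ D.span v S) : |D.proj B v - D.proj B w| ≤ 2 * D.bound B := by
  obtain ⟨s₁, h₁, s₂, h₂, h⟩ := hw
  have h₁' := hS.abs_sub_le B hB s₁ h₁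
  have h₂' := hS.abs_sub_le B hB s₂ h₂
  have h' := Set.mem_uIcc.1 (h B)
  rw [abs_le] at *
  omega

lemma proj_eq_of_mem_span {B : I} (hB : ∀ i, D.axis B i ∉ D.span v S) {w : V}
    (hw : w ∈ D.span v S) : D.proj B w = D.proj B v := by
  have orbit : ∀ s ∈ D.shiftGroup S, D.proj B (s • v) = D.proj B v := by
    intro s hs
    by_contra h
    refine hB (D.proj B (s • v)) ⟨s, hs, 1, one_mem _, ?_⟩
    rw [one_smul]
    exact D.axis_mem_hull B _ _ h
  obtain ⟨s₁, h₁, s₂, h₂, h⟩ := hw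
  have h' := Set.mem_uIcc.1 (h B)
  rw [orbit _ h₁, orbit _ h₂] at h'
  omega

end Span

section Nearest

variable {v : V} {S : Set I}

variable (D) in
/-- `T` consists of the axes outside `S` that are closest to the span. -/
structure IsNearest (v : V) (S T : Set I) : Prop where
  notMem : ∀ A ∈ T, A ∉ S
  smul_mem : ∀ s ∈ D.shiftGroup S, ∀ A ∈ T, s • A ∈ T
  mem_of_parallel : ∀ {A B}, A ∈ T → D.Parallel A B → B ∈ T
  exists_axis : ∀ A ∈ T, ∃ i, ∃ w ∈ D.span v S, ∀ B ∉ S, D.proj B (D.axis A i) = D.proj B w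
  axis_notMem : ∀ B ∉ S, B ∉ T → ∀ i, D.axis B i ∉ D.span v S

variable (D) in
/-- The axis `A` lies outside `S` and is reached from the span by a path of length `n`. -/
def IsReached (v : V) (S : Set I) (n : ℕ) (A : I) : Prop :=
  A ∉ S ∧ ∃ w ∈ D.span v S, ∃ i, ∃ p : Γ.Walk w (D.axis A i), p.length = n

/-- A path from the span that is too short to reach any axis outside `S` does not move the
projections to these axes. -/
lemma proj_eq_of_walk {m : ℕ} (hm : ∀ n A, D.IsReached v S n A → m ≤ n) {w : V}
    (hw : w ∈ D.span v S) {B : I} (hB : B ∉ S) {x : V} (p : Γ.Walk x w) (hp : p.length ≤ m) :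
    D.proj B x = D.proj B w := by
  induction p with
  | nil => rfl
  | cons hadj q ih =>
    rw [SimpleGraph.Walk.length_cons] at hp
    rw [← ih hw (by omega)]
    rcases D.proj_eq_or_of_adj B hadj with h | ⟨-, -, h⟩
    · exact h
    · have hq := hm q.length B ⟨hB, _, hw, _, (q.copy h.symm rfl).reverse, by simp⟩
      omega

lemma IsWindmill.isReached_smul (hS : D.IsWindmill v S) {n : ℕ} {s : P}
    (hs : s ∈ D.shiftGroup S) {A : I} (hA : D.IsReached v S n A) : D.IsReached v S n (s • A) := by
  obtain ⟨hA, w, hw, i, p, hp⟩ := hA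
  refine ⟨hS.smul_notMem hs hA, s • w, smul_mem_span hs hw, i, ?_⟩
  rw [D.axis_smul]
  let φ : Γ →g Γ := ⟨fun x => s • x, fun h => D.adj_smul s h⟩
  exact ⟨p.map φ, by simpa using hp⟩

lemma IsWindmill.isReached_of_parallel (hS : D.IsWindmill v S) {n : ℕ} {A B : I}
    (hA : D.IsReached v S n A) (hAB : D.Parallel A B) : D.IsReached v S n B := by
  obtain ⟨hA, w, hw, i, p, hp⟩ := hA
  refine ⟨fun hB => hA (hS.mem_of_parallel hB (D.equivalence_parallel.symm hAB)), w, hw, ?_⟩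
  obtain ⟨j, hj⟩ := D.exists_axis_eq_of_parallel hAB i
  exact ⟨j, p.copy rfl hj, by simpa using hp⟩

lemma IsWindmill.exists_isNearest (hS : D.IsWindmill v S) (hne : S ≠ Set.univ) :
    ∃ T, T.Nonempty ∧ D.IsNearest v S T := by
  classical
  have hex : ∃ n, ∃ A, D.IsReached v S n A := by
    obtain ⟨A₀, hA₀⟩ := (Set.ne_univ_iff_exists_notMem S).1 hne
    obtain ⟨p⟩ := D.connected.preconnected v (D.axis A₀ 0)
    exact ⟨p.length, A₀, hA₀, v, self_mem_span, 0, p, rfl⟩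
  have hmin : ∀ n A, D.IsReached v S n A → Nat.find hex ≤ n := fun n A h =>
    Nat.find_min' hex ⟨A, h⟩
  refine ⟨{A | D.IsReached v S (Nat.find hex) A}, Nat.find_spec hex, fun A hA => hA.1,
    fun s hs A hA => hS.isReached_smul hs hA, fun hA hAB => hS.isReached_of_parallel hA hAB, ?_, ?_⟩
  · rintro A ⟨-, w, hw, i, p, hp⟩
    exact ⟨i, w, hw, fun B hB => proj_eq_of_walk hmin hw hB p.reverse (by simp [hp])⟩
  · intro B hB hBT i hi
    have hreach : D.IsReached v S 0 B := ⟨hB, _, hi, i, SimpleGraph.Walk.nil, rfl⟩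
    exact hBT (Nat.le_zero.1 (hmin 0 B hreach) ▸ hreach)

lemma IsNearest.exists_proj_eq {T : Set I} (hT : D.IsNearest v S T) {A B : I} (hA : A ∈ T)
    (hB : B ∉ S) (hBT : B ∉ T) : ∃ i, D.proj B v = D.proj B (D.axis A i) := by
  obtain ⟨i, w, hw, h⟩ := hT.exists_axis A hA
  exact ⟨i, by rw [h B hB, proj_eq_of_mem_span (hT.axis_notMem B hB hBT) hw]⟩

lemma IsWindmill.abs_sub_axis_le {T : Set I} (hS : D.IsWindmill v S) (hT : D.IsNearest v S T)
    {A B : I} (hA : A ∈ T) (hB : B ∉ S) (hAB : ¬ D.Parallel B A) (j : ℤ) :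
    |D.proj B v - D.proj B (D.axis A j)| ≤ 3 * D.bound B := by
  obtain ⟨i, w, hw, h⟩ := hT.exists_axis A hA
  have h₁ := hS.abs_sub_le_of_mem_span hB hw
  rw [← h B hB] at h₁
  have h₂ := D.overlap_le hAB i j
  rw [abs_le] at *
  omega

lemma IsWindmill.abs_sub_le_of_le_abs_sub {T : Set I} (hS : D.IsWindmill v S)
    (hT : D.IsNearest v S T) {A B : I} (hA : A ∈ T) (hB : B ∈ T) (hBA : ¬ D.Parallel B A) {x : V}
    (hx : D.period A - 3 * D.bound A ≤ |D.proj A v - D.proj A x|) :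
    |D.proj B v - D.proj B x| ≤ 3 * D.bound B := by
  rcases D.exists_proj_eq_or A B x with ⟨j, hj⟩ | ⟨i, hi⟩
  · have h := hS.abs_sub_axis_le hT hB (hT.notMem A hA)
      (fun h => hBA (D.equivalence_parallel.symm h)) j
    rw [hj] at hx
    have := D.bound_pos A
    have := D.ten_mul_bound_le_period A
    omega
  · rw [hi]
    exact hS.abs_sub_axis_le hT hA (hT.notMem B hB) hBA i

end Nearest

/-! ### Normal forms -/

variable (D) in
/-- Normal forms of elements of the group generated by the translations along `S` and `T`: products
`ρ₁ ^ k₁ * ⋯ * ρₙ ^ kₙ * s` with `s ∈ shiftGroup S`, where the `ρᵢ` are translations along axes in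
`T` and successive axes are not parallel. The index is the first of these axes. -/
inductive NormalForm (S T : Set I) : I → P → Prop
  | base {A : I} {k : ℤ} {s : P} :
      A ∈ T → k ≠ 0 → s ∈ D.shiftGroup S → NormalForm S T A (D.shift A ^ k * s)
  | cons {A B : I} {k : ℤ} {n : P} :
      A ∈ T → k ≠ 0 → NormalForm S T B n → ¬ D.Parallel A B →
      NormalForm S T A (D.shift A ^ k * n)

section NormalForm

variable {v : V} {S T : Set I}

lemma NormalForm.mem {A : I} {n : P} (h : D.NormalForm S T A n) : A ∈ T := by
  cases h <;> assumption

lemma NormalForm.exists_eq {A : I} {n : P} (h : D.NormalForm S T A n) : ∃ (k : ℤ) (n' : P),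
    n = D.shift A ^ k * n' ∧
      (n' ∈ D.shiftGroup S ∨ ∃ B, D.NormalForm S T B n' ∧ ¬ D.Parallel A B) := by
  cases h with
  | base _ _ hs => exact ⟨_, _, rfl, Or.inl hs⟩
  | cons _ _ hn hAB => exact ⟨_, _, rfl, Or.inr ⟨_, hn, hAB⟩⟩

lemma IsNearest.normalForm_smul (hT : D.IsNearest v S T) {s : P} (hs : s ∈ D.shiftGroup S) {A : I}
    {n : P} (h : D.NormalForm S T A n) : D.NormalForm S T (s • A) (s * n) := by
  have hconj : ∀ A (k : ℤ) n, s * (D.shift A ^ k * n) = D.shift (s • A) ^ k * (s * n) := by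
    intro A k n
    rw [D.shift_smul, conj_zpow]
    group
  induction h with
  | base hA hk hs' =>
    rw [hconj]
    exact .base (hT.smul_mem s hs _ hA) hk (mul_mem hs hs')
  | cons hA hk _ hAB ih =>
    rw [hconj]
    refine .cons (hT.smul_mem s hs _ hA) hk ih fun h => hAB ?_
    simpa using D.parallel_smul s⁻¹ h

lemma exists_normalForm_zpow_mul {A : I} (hA : A ∈ T) (k : ℤ) {n : P}
    (h : n ∈ D.shiftGroup S ∨ ∃ B, D.NormalForm S T B n) :
    D.shift A ^ k * n ∈ D.shiftGroup S ∨ ∃ B, D.NormalForm S T B (D.shift A ^ k * n) := by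
  by_cases hk : k = 0
  · simpa [hk] using h
  rcases h with h | ⟨B, h⟩
  · exact Or.inr ⟨A, .base hA hk h⟩
  by_cases hAB : D.Parallel A B
  · obtain ⟨l, n', rfl, h'⟩ := h.exists_eq
    rw [← D.shift_eq_of_parallel hAB, ← mul_assoc, ← zpow_add]
    by_cases hkl : k + l = 0
    · rw [hkl, zpow_zero, one_mul]
      exact h'.imp_right fun ⟨C, hC, _⟩ => ⟨C, hC⟩
    · rcases h' with h' | ⟨C, h', hBC⟩
      · exact Or.inr ⟨A, .base hA hkl h'⟩
      · exact Or.inr ⟨A, .cons hA hkl h' fun hAC =>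
          hBC (D.equivalence_parallel.trans (D.equivalence_parallel.symm hAB) hAC)⟩
  · exact Or.inr ⟨A, .cons hA hk h hAB⟩

lemma IsNearest.exists_normalForm (hT : D.IsNearest v S T) {n : P}
    (hn : n ∈ D.shiftGroup (S ∪ T)) : n ∈ D.shiftGroup S ∨ ∃ A, D.NormalForm S T A n := by
  have mul_left : ∀ s ∈ D.shiftGroup S, ∀ n, (n ∈ D.shiftGroup S ∨ ∃ A, D.NormalForm S T A n) →
      (s * n ∈ D.shiftGroup S ∨ ∃ B, D.NormalForm S T B (s * n)) := by
    rintro s hs n (h | ⟨A, h⟩)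
    · exact Or.inl (mul_mem hs h)
    · exact Or.inr ⟨_, hT.normalForm_smul hs h⟩
  refine Subgroup.closure_induction_left
    (p := fun n _ => n ∈ D.shiftGroup S ∨ ∃ A, D.NormalForm S T A n) (Or.inl (one_mem _)) ?_ ?_ hn
  · rintro _ ⟨A, hA | hA, rfl⟩ n _ h
    · exact mul_left _ (shift_mem_shiftGroup hA) _ h
    · simpa using exists_normalForm_zpow_mul hA 1 h
  · rintro _ ⟨A, hA | hA, rfl⟩ n _ h
    · exact mul_left _ (inv_mem (shift_mem_shiftGroup hA)) _ h
    · simpa using exists_normalForm_zpow_mul hA (-1) h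

lemma sub_le_abs_proj_sub_zpow_smul (A : I) {k : ℤ} (hk : k ≠ 0) {x y : V}
    (h : |D.proj A x - D.proj A y| ≤ 3 * D.bound A) :
    D.period A - 3 * D.bound A ≤ |D.proj A x - D.proj A (D.shift A ^ k • y)| := by
  have hk' : D.period A ≤ |k * D.period A| := by
    rw [abs_mul, abs_of_pos (D.period_pos A)]
    exact le_mul_of_one_le_left (D.period_pos A).le (Int.one_le_abs hk)
  have htri := abs_sub (D.proj A x - D.proj A y) (D.proj A x - D.proj A (D.shift A ^ k • y))
  rw [show D.proj A x - D.proj A y - (D.proj A x - D.proj A (D.shift A ^ k • y)) =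
    k * D.period A by rw [D.proj_zpow_smul]; ring] at htri
  linarith

lemma IsWindmill.sub_le_abs_proj_sub (hS : D.IsWindmill v S) (hT : D.IsNearest v S T) {A : I}
    {n : P} (h : D.NormalForm S T A n) :
    D.period A - 3 * D.bound A ≤ |D.proj A v - D.proj A (n • v)| := by
  induction h with
  | @base A k s hA hk hs =>
    rw [mul_smul]
    refine sub_le_abs_proj_sub_zpow_smul A hk ?_
    have := hS.abs_sub_le A (hT.notMem A hA) s hs
    have := D.bound_pos A
    omega
  | @cons A B k n hA hk hn hAB ih =>
    rw [mul_smul]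
    exact sub_le_abs_proj_sub_zpow_smul A hk (hS.abs_sub_le_of_le_abs_sub hT hn.mem hA hAB ih)

end NormalForm

section Saturation

variable {v : V} {S T : Set I}

variable (D) in
/-- The orbit of `S ∪ T` under the group generated by its translations. -/
def saturation (S T : Set I) : Set I :=
  {C | ∃ g ∈ D.shiftGroup (S ∪ T), ∃ A ∈ S ∪ T, C = g • A}

lemma subset_saturation : S ∪ T ⊆ D.saturation S T := fun A hA =>
  ⟨1, one_mem _, A, hA, by simp⟩

lemma smul_notMem_saturation {g : P} (hg : g ∈ D.shiftGroup (S ∪ T)) {C : I}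
    (hC : C ∉ D.saturation S T) : g • C ∉ D.saturation S T := by
  rintro ⟨g', hg', A, hA, h⟩
  refine hC ⟨g⁻¹ * g', mul_mem (inv_mem hg) hg', A, hA, ?_⟩
  rw [mul_smul, ← h, inv_smul_smul]

lemma shiftGroup_saturation : D.shiftGroup (D.saturation S T) = D.shiftGroup (S ∪ T) := by
  refine le_antisymm ((Subgroup.closure_le _).2 ?_) (shiftGroup_mono subset_saturation)
  rintro _ ⟨_, ⟨g, hg, A, hA, rfl⟩, rfl⟩
  rw [D.shift_smul]
  exact mul_mem (mul_mem hg (shift_mem_shiftGroup hA)) (inv_mem hg)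

lemma IsWindmill.mem_saturation_of_parallel (hS : D.IsWindmill v S) (hT : D.IsNearest v S T)
    {A B : I} (hA : A ∈ D.saturation S T) (h : D.Parallel A B) : B ∈ D.saturation S T := by
  obtain ⟨g, hg, A, hA, rfl⟩ := hA
  refine ⟨g, hg, g⁻¹ • B, ?_, by simp⟩
  have h' : D.Parallel A (g⁻¹ • B) := by simpa using D.parallel_smul g⁻¹ h
  exact hA.imp (fun hA => hS.mem_of_parallel hA h') fun hA => hT.mem_of_parallel hA h'

lemma IsWindmill.not_parallel_of_notMem_saturation (hS : D.IsWindmill v S)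
    (hT : D.IsNearest v S T) {A C : I} (hA : A ∈ T) (hC : C ∉ D.saturation S T) :
    ¬ D.Parallel A C :=
  fun h => hC (hS.mem_saturation_of_parallel hT (subset_saturation (Or.inr hA)) h)

lemma IsWindmill.abs_sub_le_of_forall_proj_ne (hS : D.IsWindmill v S) (hT : D.IsNearest v S T)
    {A C : I} (hA : A ∈ T) (hC : C ∉ D.saturation S T) {x : V}
    (hx : ∀ j, D.proj A x ≠ D.proj A (D.axis C j)) :
    |D.proj C x - D.proj C v| ≤ D.bound C := by
  have hCA : ¬ D.Parallel C A := fun h =>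
    hS.not_parallel_of_notMem_saturation hT hA hC (D.equivalence_parallel.symm h)
  obtain ⟨i, hi⟩ := (D.exists_proj_eq_or A C x).resolve_left (not_exists.2 hx)
  obtain ⟨j, hj⟩ := hT.exists_proj_eq hA (fun h => hC (subset_saturation (Or.inl h)))
    fun h => hC (subset_saturation (Or.inr h))
  rw [hi, hj]
  exact D.overlap_le hCA i j

/-- The inductive step along a normal form. Either `shift A ^ k * n • v` projects to `A` outside
the projection of `C` to `A`, so that it projects to `C` near `v`, or one translates everything by
`shift A ^ (-k)`. -/
lemma IsWindmill.abs_sub_zpow_mul_smul_le (hS : D.IsWindmill v S) (hT : D.IsNearest v S T)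
    {A : I} (hA : A ∈ T) {k : ℤ} (hk : k ≠ 0) {n : P}
    (hn : |D.proj A v - D.proj A (n • v)| ≤ 3 * D.bound A)
    (ih : ∀ C ∉ D.saturation S T, ∀ z, |D.proj C z - D.proj C v| ≤ D.bound C →
      (∀ B ∈ T, ¬ D.Parallel B A → |D.proj B v - D.proj B z| ≤ 3 * D.bound B) →
      |D.proj C z - D.proj C (n • v)| ≤ 2 * D.bound C)
    {C : I} (hC : C ∉ D.saturation S T) {z : V} (hz : |D.proj C z - D.proj C v| ≤ D.bound C)
    (hzA : |D.proj A v - D.proj A z| ≤ 3 * D.bound A) :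
    |D.proj C z - D.proj C ((D.shift A ^ k * n) • v)| ≤ 2 * D.bound C := by
  obtain ⟨j, hj⟩ | hj := em (∃ j, D.proj A ((D.shift A ^ k * n) • v) = D.proj A (D.axis C j))
  swap
  · have hCx := hS.abs_sub_le_of_forall_proj_ne hT hA hC (not_exists.1 hj)
    rw [abs_sub_comm] at hCx
    have := _root_.abs_sub_le (D.proj C z) (D.proj C v) (D.proj C ((D.shift A ^ k * n) • v))
    linarith
  set g := D.shift A ^ (-k) with hg
  have hC' : g • C ∉ D.saturation S T :=
    smul_notMem_saturation (zpow_mem (shift_mem_shiftGroup (Set.mem_union_right S hA)) (-k)) hC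
  have hgn : g • (D.shift A ^ k * n) • v = n • v := by
    rw [← mul_smul, hg, ← mul_assoc, ← zpow_add, neg_add_cancel, zpow_zero, one_mul]
  have hnA : D.proj A (n • v) = D.proj A (D.axis (g • C) j) := by
    rw [D.axis_smul, ← hgn, hg, D.proj_zpow_smul, D.proj_zpow_smul, hj]
  have far : D.period A - 3 * D.bound A ≤ |D.proj A v - D.proj A (g • z)| :=
    sub_le_abs_proj_sub_zpow_smul A (neg_ne_zero.2 hk) hzA
  have outside : ∀ i, D.proj A (g • z) ≠ D.proj A (D.axis (g • C) i) := by
    intro i hi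
    have h := D.overlap_le (hS.not_parallel_of_notMem_saturation hT hA hC') i j
    rw [← hi, ← hnA] at h
    have := _root_.abs_sub_le (D.proj A v) (D.proj A (n • v)) (D.proj A (g • z))
    rw [abs_sub_comm (D.proj A (n • v))] at this
    linarith [D.bound_pos A, D.ten_mul_bound_le_period A]
  have key := ih (g • C) hC' (g • z) (hS.abs_sub_le_of_forall_proj_ne hT hA hC' outside)
    fun B hB hBA => hS.abs_sub_le_of_le_abs_sub hT hA hB hBA far
  rwa [D.proj_smul, ← hgn, D.proj_smul, D.bound_smul] at key

lemma IsWindmill.abs_sub_le_of_notMem_saturation (hS : D.IsWindmill v S)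
    (hT : D.IsNearest v S T) {A : I} {n : P} (h : D.NormalForm S T A n) :
    ∀ C ∉ D.saturation S T, ∀ z, |D.proj C z - D.proj C v| ≤ D.bound C →
      |D.proj A v - D.proj A z| ≤ 3 * D.bound A →
      |D.proj C z - D.proj C (n • v)| ≤ 2 * D.bound C := by
  induction h with
  | @base A k s hA hk hs =>
    intro C hC z hz hzA
    refine hS.abs_sub_zpow_mul_smul_le hT hA hk ?_ (fun C hC z hz _ => ?_) hC hz hzA
    · have := hS.abs_sub_le A (hT.notMem A hA) s hs
      have := D.bound_pos A
      omega
    · rw [proj_eq_of_mem_span (hT.axis_notMem C (fun h => hC (subset_saturation (Or.inl h)))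
        fun h => hC (subset_saturation (Or.inr h))) (smul_mem_span_of_mem hs)]
      have := D.bound_pos C
      omega
  | @cons A B k n hA hk hn hAB ih =>
    intro C hC z hz hzA
    exact hS.abs_sub_zpow_mul_smul_le hT hA hk
      (hS.abs_sub_le_of_le_abs_sub hT hn.mem hA hAB (hS.sub_le_abs_proj_sub hT hn))
      (fun C hC z hz hz' => ih C hC z hz
        (hz' B hn.mem fun h => hAB (D.equivalence_parallel.symm h))) hC hz hzA

lemma IsWindmill.saturation (hS : D.IsWindmill v S) (hT : D.IsNearest v S T) :
    D.IsWindmill v (D.saturation S T) where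
  smul_mem := by
    rw [shiftGroup_saturation]
    rintro s hs _ ⟨g, hg, A, hA, rfl⟩
    exact ⟨s * g, mul_mem hs hg, A, hA, by rw [mul_smul]⟩
  mem_of_parallel hA h := hS.mem_saturation_of_parallel hT hA h
  abs_sub_le C hC s hs := by
    rw [shiftGroup_saturation] at hs
    rcases hT.exists_normalForm hs with hs | ⟨A, hA⟩
    · exact hS.abs_sub_le C (fun h => hC (subset_saturation (Or.inl h))) s hs
    · refine hS.abs_sub_le_of_notMem_saturation hT hA C hC v ?_ ?_
      · simpa using (D.bound_pos C).le
      · simpa using (D.bound_pos A).le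
  exists_le s hs hs₁ := by
    rw [shiftGroup_saturation] at hs
    rcases hT.exists_normalForm hs with hs | ⟨A, hA⟩
    · exact hS.exists_le s hs hs₁
    · exact ⟨A, hS.sub_le_abs_proj_sub hT hA⟩

end Saturation

lemma isWindmill_empty (v : V) : D.IsWindmill v ∅ := by
  have eq_one : ∀ s ∈ D.shiftGroup ∅, s = 1 := fun s hs => by simpa [shiftGroup] using hs
  refine ⟨fun _ _ A hA => hA.elim, fun hA => hA.elim, fun B _ s hs => ?_,
    fun s hs h => absurd (eq_one s hs) h⟩
  rw [eq_one s hs]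
  simpa using (D.bound_pos B).le

lemma exists_mem_shiftGroup_of_mem_sUnion {𝒞 : Set (Set I)} (hc : IsChain (· ⊆ ·) 𝒞)
    (hne : 𝒞.Nonempty) {s : P} (hs : s ∈ D.shiftGroup (⋃₀ 𝒞)) : ∃ S ∈ 𝒞, s ∈ D.shiftGroup S := by
  induction hs using Subgroup.closure_induction with
  | mem x hx =>
    obtain ⟨A, ⟨S, hS, hA⟩, rfl⟩ := hx
    exact ⟨S, hS, shift_mem_shiftGroup hA⟩
  | one => exact hne.imp fun S hS => ⟨hS, one_mem _⟩
  | mul x y _ _ hx hy =>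
    obtain ⟨S, hS, hx⟩ := hx
    obtain ⟨T, hT, hy⟩ := hy
    rcases hc.total hS hT with h | h
    · exact ⟨T, hT, mul_mem (shiftGroup_mono h hx) hy⟩
    · exact ⟨S, hS, mul_mem hx (shiftGroup_mono h hy)⟩
  | inv x _ hx => exact hx.imp fun S hS => ⟨hS.1, inv_mem hS.2⟩

lemma isWindmill_sUnion {v : V} {𝒞 : Set (Set I)} (h𝒞 : ∀ S ∈ 𝒞, D.IsWindmill v S)
    (hc : IsChain (· ⊆ ·) 𝒞) (hne : 𝒞.Nonempty) : D.IsWindmill v (⋃₀ 𝒞) where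
  smul_mem := by
    rintro s hs A ⟨S, hS, hA⟩
    obtain ⟨T, hT, hs⟩ := exists_mem_shiftGroup_of_mem_sUnion hc hne hs
    rcases hc.total hS hT with h | h
    · exact ⟨T, hT, (h𝒞 T hT).smul_mem s hs A (h hA)⟩
    · exact ⟨S, hS, (h𝒞 S hS).smul_mem s (shiftGroup_mono h hs) A hA⟩
  mem_of_parallel := by
    rintro A B ⟨S, hS, hA⟩ h
    exact ⟨S, hS, (h𝒞 S hS).mem_of_parallel hA h⟩
  abs_sub_le B hB s hs := by
    obtain ⟨T, hT, hs⟩ := exists_mem_shiftGroup_of_mem_sUnion hc hne hs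
    exact (h𝒞 T hT).abs_sub_le B (fun h => hB ⟨T, hT, h⟩) s hs
  exists_le s hs h := by
    obtain ⟨T, hT, hs⟩ := exists_mem_shiftGroup_of_mem_sUnion hc hne hs
    exact (h𝒞 T hT).exists_le s hs h

variable (D) in
theorem exists_sub_le_abs_proj_sub (v : V) {n : P} (hn : n ∈ D.shiftGroup Set.univ)
    (hn₁ : n ≠ 1) : ∃ A, D.period A - 3 * D.bound A ≤ |D.proj A v - D.proj A (n • v)| := by
  obtain ⟨S, -, hS⟩ := zorn_subset_nonempty {S | D.IsWindmill v S}
    (fun 𝒞 h𝒞 hc hne => ⟨⋃₀ 𝒞, isWindmill_sUnion h𝒞 hc hne, fun S hS =>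
      Set.subset_sUnion_of_mem hS⟩) ∅ (isWindmill_empty v)
  have huniv : S = Set.univ := by
    by_contra hne
    obtain ⟨T, ⟨A, hA⟩, hT⟩ := hS.prop.exists_isNearest hne
    have hle := hS.le_of_ge (hS.prop.saturation hT)
      (Set.subset_union_left.trans subset_saturation)
    exact hT.notMem A hA (hle (subset_saturation (Or.inr hA)))
  exact (huniv ▸ hS.prop).exists_le n hn hn₁

/-! ### Distances to the axes -/

variable (D)

include D in
lemma dist_smul (g : P) (x y : V) : Γ.dist (g • x) (g • y) = Γ.dist x y := by
  have dist_le : ∀ (g : P) (x y : V), Γ.dist (g • x) (g • y) ≤ Γ.dist x y := by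
    intro g x y
    obtain ⟨p, hp⟩ := (D.connected.preconnected x y).exists_walk_length_eq_dist
    let φ : Γ →g Γ := ⟨fun x => g • x, fun h => D.adj_smul g h⟩
    rw [← hp]
    exact (SimpleGraph.dist_le (p.map φ)).trans (by simp)
  refine le_antisymm (dist_le g x y) ?_
  simpa using dist_le g⁻¹ (g • x) (g • y)

lemma abs_proj_sub_le_dist (A : I) (x y : V) : |D.proj A x - D.proj A y| ≤ Γ.dist x y := by
  obtain ⟨p, hp⟩ := (D.connected.preconnected x y).exists_walk_length_eq_dist
  rw [← hp]
  clear hp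
  induction p with
  | nil => simp
  | @cons a b c hadj q ih =>
    have hab : |D.proj A a - D.proj A b| ≤ 1 := by
      rcases D.proj_eq_or_of_adj A hadj with h | ⟨h, -⟩
      · simp [h]
      · exact h.le
    have := abs_sub_le (D.proj A a) (D.proj A b) (D.proj A c)
    rw [SimpleGraph.Walk.length_cons]
    omega

lemma dist_axis_le (A : I) (i j : ℤ) : (Γ.dist (D.axis A i) (D.axis A j) : ℤ) ≤ |i - j| := by
  have dist_add_le : ∀ (n : ℕ) (i : ℤ), Γ.dist (D.axis A i) (D.axis A (i + n)) ≤ n := by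
    intro n i
    induction n with
    | zero => simp
    | succ n ih =>
      have htri := D.connected.dist_triangle (u := D.axis A i) (v := D.axis A (i + n))
        (w := D.axis A (i + n + 1))
      have hadj := SimpleGraph.dist_eq_one_iff_adj.2 (D.axis_adj A (i + n))
      push_cast
      rw [← add_assoc]
      omega
  wlog hij : i ≤ j generalizing i j
  · rw [SimpleGraph.dist_comm, abs_sub_comm]
    exact this j i (le_of_not_ge hij)
  have h := dist_add_le (j - i).toNat i
  rw [show i + ((j - i).toNat : ℤ) = j by omega] at h
  rw [abs_sub_comm, abs_of_nonneg (by omega)]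
  omega

/-- Geodesics between points with different projections pass through both projections. -/
lemma le_dist_of_proj_ne (A : I) (x y : V) (h : D.proj A x ≠ D.proj A y) :
    Γ.dist x (D.axis A (D.proj A x)) + |D.proj A x - D.proj A y| +
      Γ.dist (D.axis A (D.proj A y)) y ≤ (Γ.dist x y : ℤ) := by
  obtain ⟨p, hp⟩ := (D.connected.preconnected x y).exists_walk_length_eq_dist
  rw [← hp]
  clear hp
  induction p with
  | nil => exact absurd rfl h
  | @cons a b c hadj q ih =>
    have hq : (Γ.dist b c : ℤ) ≤ q.length := by exact_mod_cast SimpleGraph.dist_le q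
    rw [SimpleGraph.Walk.length_cons]
    push_cast
    rcases D.proj_eq_or_of_adj A hadj with hab | ⟨hab, ha, hb⟩
    · have hbc := ih (hab ▸ h)
      have htri := D.connected.dist_triangle (u := a) (v := b) (w := D.axis A (D.proj A b))
      have hadj' := SimpleGraph.dist_eq_one_iff_adj.2 hadj
      rw [hab]
      omega
    · rw [ha, SimpleGraph.dist_self]
      by_cases hbc : D.proj A b = D.proj A c
      · rw [← hbc, hb]
        omega
      · have := ih hbc
        have := abs_sub_le (D.proj A a) (D.proj A b) (D.proj A c)
        omega

/-- The point `u` is at least as close to `v` as every other point of its orbit under the group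
generated by all translations. -/
def IsClosest (v u : V) : Prop :=
  ∀ n ∈ D.shiftGroup Set.univ, Γ.dist v u ≤ Γ.dist v (n • u)

lemma exists_isClosest (v u : V) : ∃ n ∈ D.shiftGroup Set.univ, D.IsClosest v (n • u) := by
  have hne : (Set.range fun n : D.shiftGroup Set.univ => Γ.dist v ((n : P) • u)).Nonempty :=
    ⟨_, 1, rfl⟩
  obtain ⟨n₀, hn₀⟩ := Nat.sInf_mem hne
  refine ⟨n₀, n₀.2, fun n hn => hn₀.le.trans (Nat.sInf_le ⟨⟨n, hn⟩ * n₀, ?_⟩)⟩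
  exact congrArg (Γ.dist v) (mul_smul n (n₀ : P) u)

variable {D}

lemma IsClosest.abs_sub_le_abs_sub_add {v u : V} (h : D.IsClosest v u) {A : I}
    (hne : D.proj A v ≠ D.proj A u) (k : ℤ) :
    |D.proj A v - D.proj A u| ≤ |D.proj A v - (D.proj A u + k * D.period A)| := by
  have hdist := D.le_dist_of_proj_ne A v u hne
  have hk := h _ (zpow_mem (shift_mem_shiftGroup (Set.mem_univ A)) k)
  have htri₁ := D.connected.dist_triangle (u := v) (v := D.axis A (D.proj A v))
    (w := D.shift A ^ k • u)
  have htri₂ := D.connected.dist_triangle (u := D.axis A (D.proj A v))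
    (v := D.axis A (D.proj A u + k * D.period A)) (w := D.shift A ^ k • u)
  have haxis := D.dist_axis_le A (D.proj A v) (D.proj A u + k * D.period A)
  have hsmul : Γ.dist (D.axis A (D.proj A u + k * D.period A)) (D.shift A ^ k • u) =
      Γ.dist (D.axis A (D.proj A u)) u := by
    rw [D.axis_add_mul_period, D.dist_smul]
  omega

lemma IsClosest.two_mul_abs_le {v u : V} (h : D.IsClosest v u) (A : I) :
    2 * |D.proj A v - D.proj A u| ≤ D.period A := by
  have hp := D.period_pos A
  by_cases hne : D.proj A v = D.proj A u
  · simpa [hne] using hp.le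
  have h₁ := h.abs_sub_le_abs_sub_add hne 1
  have h₂ := h.abs_sub_le_abs_sub_add hne (-1)
  rcases abs_cases (D.proj A v - D.proj A u) with ⟨h₄, _⟩ | ⟨h₄, _⟩ <;>
  rcases abs_cases (D.proj A v - (D.proj A u + 1 * D.period A)) with ⟨h₅, _⟩ | ⟨h₅, _⟩ <;>
  rcases abs_cases (D.proj A v - (D.proj A u + -1 * D.period A)) with ⟨h₆, _⟩ | ⟨h₆, _⟩ <;>
  omega

lemma proj_ne_of_dist_eq {B C : I} (hCB : ¬ D.Parallel C B) {v u : V}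
    (hd : Γ.dist v (D.axis B (D.proj B v)) = Γ.dist v (D.axis C (D.proj C v)))
    (hu : 2 * D.bound C ≤ |D.proj C v - D.proj C u|) (i : ℤ) :
    D.proj C u ≠ D.proj C (D.axis B i) := by
  intro hi
  have hov := D.overlap_le hCB (D.proj B v) i
  rw [← hi] at hov
  have hpos : 0 < |D.proj C v - D.proj C (D.axis B (D.proj B v))| := by
    have := abs_sub_le (D.proj C v) (D.proj C (D.axis B (D.proj B v))) (D.proj C u)
    have := D.bound_pos C
    omega
  have := D.le_dist_of_proj_ne C v (D.axis B (D.proj B v)) (sub_ne_zero.1 (abs_pos.1 hpos))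
  omega

/-- An element fixing `v` cannot move a point closest to `v` far along an axis `A`: otherwise both
`A` and `l • A` would lie between `v` and this point, at the same distance from `v`. -/
lemma IsClosest.abs_sub_lt_of_smul_eq {v u : V} (h : D.IsClosest v u) {l : P} (hl : l • v = v)
    (A : I) : |D.proj A u - D.proj A (l⁻¹ • u)| < D.period A - 3 * D.bound A := by
  have hb := D.bound_pos A
  have hbp := D.ten_mul_bound_le_period A
  by_contra! hA
  by_cases hlA : D.Parallel A (l • A)
  · obtain ⟨k, rfl⟩ := D.exists_zpow_eq l hlA
    have hk := D.proj_zpow_smul A k v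
    rw [hl, left_eq_add, mul_eq_zero, or_iff_left (D.period_pos A).ne'] at hk
    rw [hk, zpow_zero, inv_one, one_smul, sub_self, abs_zero] at hA
    omega
  have hv : D.proj (l • A) v = D.proj A v := by
    rw [D.proj_smul_left, inv_smul_eq_iff.2 hl.symm]
  have hdist : Γ.dist v (D.axis (l • A) (D.proj (l • A) v)) =
      Γ.dist v (D.axis A (D.proj A v)) := by
    rw [hv, D.axis_smul, ← D.dist_smul l v (D.axis A (D.proj A v)), hl]
  have h₁ := h.two_mul_abs_le A
  have h₂ := h.two_mul_abs_le (l • A)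
  rw [D.period_smul, hv, D.proj_smul_left] at h₂
  have htri := abs_sub_le (D.proj A u) (D.proj A v) (D.proj A (l⁻¹ • u))
  rw [abs_sub_comm (D.proj A u) (D.proj A v)] at htri
  rcases D.exists_proj_eq_or A (l • A) u with ⟨j, hj⟩ | ⟨i, hi⟩
  · exact proj_ne_of_dist_eq hlA hdist (by omega) j hj
  · refine proj_ne_of_dist_eq (fun h => hlA (D.equivalence_parallel.symm h)) hdist.symm ?_ i hi
    rw [D.bound_smul, hv, D.proj_smul_left]
    omega

/-- A relation `g * l = l' * g` between elements fixing `v` modulo the group generated by all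
translations already holds in `P`, after changing `g` modulo this group. -/
theorem exists_mul_eq_mul {v : V} {g l l' : P} (hl : l • v = v) (hl' : l' • v = v)
    (h : (g * l)⁻¹ * (l' * g) ∈ D.shiftGroup Set.univ) :
    ∃ g₀, g⁻¹ * g₀ ∈ D.shiftGroup Set.univ ∧ l' * g₀ = g₀ * l := by
  obtain ⟨n₀, hn₀, hmin⟩ := D.exists_isClosest v (g • v)
  rw [← mul_smul] at hmin
  have hg₀ : g⁻¹ * (n₀ * g) ∈ D.shiftGroup Set.univ := by
    have hconj := D.shiftGroup_univ_normal.conj_mem n₀ hn₀ g⁻¹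
    rwa [inv_inv, mul_assoc] at hconj
  refine ⟨n₀ * g, hg₀, ?_⟩
  set g₀ := n₀ * g
  set n := l'⁻¹ * g₀ * l * g₀⁻¹ with hn
  have hmem : n ∈ D.shiftGroup Set.univ := by
    rw [← QuotientGroup.eq] at h hg₀
    rw [← QuotientGroup.eq_one_iff, hn]
    simp only [QuotientGroup.mk_mul, QuotientGroup.mk_inv] at h hg₀ ⊢
    rw [← hg₀, mul_assoc _ (g : P ⧸ D.shiftGroup Set.univ), h]
    group
  have hnu : n • g₀ • v = l'⁻¹ • g₀ • v := by
    rw [← mul_smul, hn, inv_mul_cancel_right, mul_smul, hl, mul_smul]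
  have hn₁ : n = 1 := by
    by_contra hne
    obtain ⟨A, hA⟩ := D.exists_sub_le_abs_proj_sub (g₀ • v) hmem hne
    rw [hnu] at hA
    exact (hmin.abs_sub_lt_of_smul_eq hl' A).not_ge hA
  rw [hn, mul_inv_eq_one, mul_assoc, inv_mul_eq_iff_eq_mul] at hn₁
  exact hn₁.symm

end AxisSystem

/-! ### The Bass–Serre tree of an amalgamated product -/

section Amalgam

variable {P : Type*} [Group P] (K : Bool → Subgroup P)

/-- Alternating products: the letters are taken in turn from `K true` and `K false`, none of them
lies in both subgroups, and the first letter lies in `K i`. -/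
inductive Alt : Bool → P → Prop
  | single {i : Bool} {x : P} : x ∈ K i → x ∉ K (!i) → Alt i x
  | cons {i : Bool} {x g : P} : x ∈ K i → x ∉ K (!i) → Alt (!i) g → Alt i (x * g)

/-- `P` is the amalgamated product of its subgroups `K true` and `K false`, in the form of the
uniqueness part of the normal form theorem. -/
structure IsAmalgam : Prop where
  closure_eq_top : Subgroup.closure (⋃ i, (K i : Set P)) = ⊤
  notMem : ∀ {i g}, Alt K i g → ¬ ∀ j, g ∈ K j
  not_alt : ∀ {i g}, Alt K i g → ¬ Alt K (!i) g

variable {K}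

lemma forall_mem_of_mem {i : Bool} {x : P} (h1 : x ∈ K i) (h2 : x ∈ K (!i)) : ∀ j, x ∈ K j := by
  intro j
  cases i <;> cases j <;> assumption

lemma Alt.mul_left {i : Bool} {g h : P} (hg : Alt K i g) (hh : ∀ j, h ∈ K j) :
    Alt K i (h * g) := by
  cases hg with
  | single hx hx' =>
    exact .single (mul_mem (hh i) hx) fun h' => hx' ((Subgroup.mul_mem_cancel_left _ (hh _)).1 h')
  | cons hx hx' hg =>
    rw [← mul_assoc]
    exact .cons (mul_mem (hh i) hx)
      (fun h' => hx' ((Subgroup.mul_mem_cancel_left _ (hh _)).1 h')) hg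

lemma Alt.mul_right {i : Bool} {g : P} (hg : Alt K i g) :
    (∀ x ∈ K (!i), Alt K i (g * x)) ∧ ∀ x ∈ K i, Alt K i (g * x) ∨ ∀ j, g * x ∈ K j := by
  induction hg with
  | @single i y hy hy' =>
    refine ⟨fun x hx => ?_, fun x hx => ?_⟩
    · by_cases hxi : x ∈ K i
      · exact .single (mul_mem hy hxi) fun h => hy' ((Subgroup.mul_mem_cancel_right _ hx).1 h)
      · exact .cons hy hy' (.single hx (by rwa [Bool.not_not]))
    · by_cases h : y * x ∈ K (!i)
      · exact Or.inr (forall_mem_of_mem (mul_mem hy hx) h)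
      · exact Or.inl (.single (mul_mem hy hx) h)
  | @cons i y g hy hy' _ ih =>
    rw [Bool.not_not] at ih
    refine ⟨fun x hx => ?_, fun x hx => ?_⟩
    · rw [mul_assoc]
      rcases ih.2 x hx with h | h
      · exact .cons hy hy' h
      · exact .single (mul_mem hy (h _))
          fun h' => hy' ((Subgroup.mul_mem_cancel_right _ (h _)).1 h')
    · rw [mul_assoc]
      exact Or.inl (.cons hy hy' (ih.1 x hx))

lemma alt_mul_right_iff {i : Bool} {g x : P} (hx : x ∈ K i) :
    Alt K (!i) (g * x) ↔ Alt K (!i) g := by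
  refine ⟨fun h => ?_, fun h => h.mul_right.1 x (by rwa [Bool.not_not])⟩
  simpa only [mul_inv_cancel_right] using h.mul_right.1 x⁻¹ (by rw [Bool.not_not]; exact inv_mem hx)

lemma IsAmalgam.not_alt_one (hK : IsAmalgam K) (i : Bool) : ¬ Alt K i 1 :=
  fun h => hK.notMem h fun _ => one_mem _

lemma Alt.mul_left_cases {i j : Bool} {x g : P} (hx : x ∈ K i) (hx' : x ∉ K (!i))
    (hg : Alt K j g) : (∀ j, x * g ∈ K j) ∨ ∃ i, Alt K i (x * g) := by
  obtain rfl | rfl : j = i ∨ j = !i := by cases i <;> cases j <;> simp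
  · cases hg with
    | single hy _ =>
      by_cases h : x * g ∈ K (!j)
      · exact Or.inl (forall_mem_of_mem (mul_mem hx hy) h)
      · exact Or.inr ⟨j, .single (mul_mem hx hy) h⟩
    | @cons _ y g' hy _ hg' =>
      rw [← mul_assoc]
      by_cases h : x * y ∈ K (!j)
      · exact Or.inr ⟨!j, hg'.mul_left (forall_mem_of_mem (mul_mem hx hy) h)⟩
      · exact Or.inr ⟨j, .cons (mul_mem hx hy) h hg'⟩
  · exact Or.inr ⟨i, .cons hx hx' hg⟩

lemma forall_mem_or_exists_alt_mul {i : Bool} {x g : P} (hx : x ∈ K i)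
    (hg : (∀ j, g ∈ K j) ∨ ∃ i, Alt K i g) : (∀ j, x * g ∈ K j) ∨ ∃ i, Alt K i (x * g) := by
  by_cases hx' : x ∈ K (!i)
  · have hxK := forall_mem_of_mem hx hx'
    exact hg.imp (fun hg j => mul_mem (hxK j) (hg j)) fun ⟨j, hg⟩ => ⟨j, hg.mul_left hxK⟩
  · rcases hg with hg | ⟨j, hg⟩
    · exact Or.inr ⟨i, .single (mul_mem hx (hg i))
        fun h => hx' ((Subgroup.mul_mem_cancel_right _ (hg _)).1 h)⟩
    · exact hg.mul_left_cases hx hx'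

lemma IsAmalgam.forall_mem_or_exists_alt (hK : IsAmalgam K) (g : P) :
    (∀ j, g ∈ K j) ∨ ∃ i, Alt K i g := by
  have hg : g ∈ Subgroup.closure (⋃ i, (K i : Set P)) := hK.closure_eq_top ▸ Subgroup.mem_top g
  refine Subgroup.closure_induction_left
    (p := fun g _ => (∀ j, g ∈ K j) ∨ ∃ i, Alt K i g) (Or.inl fun j => one_mem _) ?_ ?_ hg <;>
  · intro x hx g _ hg
    obtain ⟨i, hi⟩ := Set.mem_iUnion.1 hx
    exact forall_mem_or_exists_alt_mul (i := i) (by simpa using hi) hg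

variable (K) in
/-- The vertices of the Bass–Serre tree. -/
abbrev Vert : Type _ := Σ i : Bool, P ⧸ K i

variable (K) in
/-- The vertex of the Bass–Serre tree given by the coset `g K i`. -/
def vert (i : Bool) (g : P) : Vert K := ⟨i, (g : P ⧸ K i)⟩

lemma smul_vert (i : Bool) (g h : P) : g • vert K i h = vert K i (g * h) := rfl

lemma vert_eq_iff {i : Bool} {g h : P} : vert K i g = vert K i h ↔ g⁻¹ * h ∈ K i := by
  simp only [vert, Sigma.mk.injEq, heq_eq_eq, true_and, QuotientGroup.eq]

lemma exists_eq_vert (x : Vert K) : ∃ i g, x = vert K i g := by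
  obtain ⟨i, c⟩ := x
  induction c using QuotientGroup.induction_on with
  | H g => exact ⟨i, g, rfl⟩

variable (K) in
/-- The Bass–Serre tree: the element `g` is an edge between the cosets `g K true` and
`g K false`. -/
def tree : SimpleGraph (Vert K) where
  Adj x y := ∃ i g, x = vert K i g ∧ y = vert K (!i) g
  symm := ⟨by
    rintro _ _ ⟨i, g, rfl, rfl⟩
    exact ⟨!i, g, rfl, by rw [Bool.not_not]⟩⟩
  loopless := ⟨by
    rintro _ ⟨i, g, h1, h2⟩
    exact Bool.not_ne_self i (congrArg Sigma.fst (h2.symm.trans h1))⟩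

lemma tree_adj_vert (i : Bool) (g : P) : (tree K).Adj (vert K i g) (vert K (!i) g) :=
  ⟨i, g, rfl, rfl⟩

lemma tree_adj_smul (g : P) {x y : Vert K} (h : (tree K).Adj x y) :
    (tree K).Adj (g • x) (g • y) := by
  obtain ⟨i, k, rfl, rfl⟩ := h
  exact ⟨i, g * k, rfl, rfl⟩

lemma tree_reachable_smul (g : P) {x y : Vert K} (h : (tree K).Reachable x y) :
    (tree K).Reachable (g • x) (g • y) :=
  h.map (⟨fun x => g • x, tree_adj_smul g⟩ : tree K →g tree K)

lemma tree_reachable_vert_of_mem {i : Bool} {g : P} (hg : g ∈ K i) :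
    (tree K).Reachable (vert K true 1) (vert K true g) := by
  have h : vert K i 1 = vert K i g := vert_eq_iff.2 (by rwa [inv_one, one_mul])
  cases i
  · have h1 := (tree_adj_vert (K := K) true 1).reachable
    rw [Bool.not_true, h] at h1
    exact h1.trans (tree_adj_vert true g).reachable.symm
  · rw [h]

lemma IsAmalgam.tree_reachable (hK : IsAmalgam K) (g : P) :
    (tree K).Reachable (vert K true 1) (vert K true g) := by
  have hg : g ∈ Subgroup.closure (⋃ i, (K i : Set P)) := hK.closure_eq_top ▸ Subgroup.mem_top g
  refine Subgroup.closure_induction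
    (p := fun g _ => (tree K).Reachable (vert K true 1) (vert K true g)) ?_ ?_ ?_ ?_ hg
  · intro x hx
    obtain ⟨i, hi⟩ := Set.mem_iUnion.1 hx
    exact tree_reachable_vert_of_mem hi
  · exact SimpleGraph.Reachable.refl _
  · intro x y _ _ hx hy
    have := tree_reachable_smul x hy
    rw [smul_vert, smul_vert, mul_one] at this
    exact hx.trans this
  · intro x _ hx
    have := tree_reachable_smul x⁻¹ hx
    rw [smul_vert, smul_vert, mul_one, inv_mul_cancel] at this
    exact this.symm

lemma IsAmalgam.connected (hK : IsAmalgam K) : (tree K).Connected := by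
  have reachable : ∀ x, (tree K).Reachable (vert K true 1) x := by
    intro x
    obtain ⟨i, g, rfl⟩ := exists_eq_vert x
    cases i
    · exact (hK.tree_reachable g).trans (tree_adj_vert true g).reachable
    · exact hK.tree_reachable g
  have : Nonempty (Vert K) := ⟨vert K true 1⟩
  exact ⟨fun x y => (reachable x).symm.trans (reachable y)⟩

variable (K) in
/-- The side of the edge `1` that contains the vertex `K q`: a vertex lies there if the reduced
words that represent it do not start in `K (!q)`. -/
def baseSide (q : Bool) (x : Vert K) : Prop :=
  ∃ i g, x = vert K i g ∧ ((i = q ∧ ¬ Alt K (!q) g) ∨ (i = !q ∧ Alt K q g))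

lemma baseSide_vert_iff {q i : Bool} {g : P} : baseSide K q (vert K i g) ↔
    ((i = q ∧ ¬ Alt K (!q) g) ∨ (i = !q ∧ Alt K q g)) := by
  refine ⟨?_, fun h => ⟨i, g, rfl, h⟩⟩
  rintro ⟨j, g', h, h'⟩
  obtain rfl : i = j := congrArg Sigma.fst h
  have halt := alt_mul_right_iff (g := g) (vert_eq_iff.1 h)
  rw [mul_inv_cancel_left] at halt
  rcases h' with ⟨rfl, h'⟩ | ⟨rfl, h'⟩
  · exact Or.inl ⟨rfl, halt.not.1 h'⟩
  · rw [Bool.not_not] at halt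
    exact Or.inr ⟨rfl, halt.1 h'⟩

lemma IsAmalgam.forall_mem_of_crossing (hK : IsAmalgam K) {q i : Bool} {g : P}
    (h : ¬ (baseSide K q (vert K i g) ↔ baseSide K q (vert K (!i) g))) : ∀ j, g ∈ K j := by
  refine (hK.forall_mem_or_exists_alt g).resolve_right fun ⟨j, hj⟩ => h ?_
  have hj' := hK.not_alt hj
  rw [baseSide_vert_iff, baseSide_vert_iff]
  cases i <;> cases q <;> cases j <;> simp_all

/-! ### Lines in the Bass–Serre tree -/

lemma bodd_add_one (k : ℤ) : (k + 1).bodd = !k.bodd := by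
  simp [Int.bodd_add]

lemma bodd_add_two_mul (k l : ℤ) : (k + 2 * l).bodd = k.bodd := by
  simp [Int.bodd_add, Int.bodd_mul, show Int.bodd 2 = false from rfl]

variable (K) in
/-- A bi-infinite path without backtracking in the Bass–Serre tree, given by its edges: the edges
`edge k` and `edge (k + 1)` meet in a vertex of type `k.bodd`. -/
structure Line where
  /-- The group element that is the `k`-th edge. -/
  edge : ℤ → P
  mem : ∀ k, (edge k)⁻¹ * edge (k + 1) ∈ K k.bodd
  notMem : ∀ k, (edge k)⁻¹ * edge (k + 1) ∉ K (!k.bodd)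

namespace Line

variable (A : Line K)

/-- The label of the turn between the edges `k` and `k + 1` of a line. -/
def turn (k : ℤ) : P := (A.edge k)⁻¹ * A.edge (k + 1)

/-- The vertex of a line between its edges `k` and `k + 1`. -/
def vertex (k : ℤ) : Vert K := vert K k.bodd (A.edge k)

lemma vertex_eq (k : ℤ) : A.vertex k = vert K k.bodd (A.edge (k + 1)) := vert_eq_iff.2 (A.mem k)

lemma vertex_succ (k : ℤ) : A.vertex (k + 1) = vert K (!k.bodd) (A.edge (k + 1)) := by
  rw [vertex, bodd_add_one]

lemma vertex_adj (k : ℤ) : (tree K).Adj (A.vertex k) (A.vertex (k + 1)) := by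
  rw [vertex_eq, vertex_succ]
  exact tree_adj_vert _ _

/-- The translate of a line by a group element. -/
def translate (g : P) : Line K where
  edge k := g * A.edge k
  mem k := by simpa [mul_assoc] using A.mem k
  notMem k := by simpa [mul_assoc] using A.notMem k

lemma vertex_translate (g : P) (k : ℤ) : (A.translate g).vertex k = g • A.vertex k := rfl

lemma turn_reverse_mem_iff (i : Bool) (k : ℤ) :
    (A.edge (1 - k))⁻¹ * A.edge (1 - (k + 1)) ∈ K i ↔
      (A.edge (-k))⁻¹ * A.edge (-k + 1) ∈ K i := by
  rw [show 1 - k = -k + 1 by ring, show 1 - (k + 1) = -k by ring, ← inv_mem_iff, mul_inv_rev,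
    inv_inv]

/-- The same line with the opposite orientation; the indices are such that the vertex `0` stays
in place. -/
def reverse : Line K where
  edge k := A.edge (1 - k)
  mem k := by
    rw [A.turn_reverse_mem_iff, ← Int.bodd_neg]
    exact A.mem (-k)
  notMem k := by
    rw [A.turn_reverse_mem_iff, ← Int.bodd_neg]
    exact A.notMem (-k)

lemma vertex_reverse (k : ℤ) : A.reverse.vertex k = A.vertex (-k) := by
  rw [A.vertex_eq, Int.bodd_neg, neg_add_eq_sub]
  rfl

lemma turn_reverse (k : ℤ) : A.reverse.turn k = (A.turn (-k))⁻¹ := by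
  simp only [turn, reverse, mul_inv_rev, inv_inv]
  congr 3 <;> ring

/-- The side of the edge between the vertices `k` and `k + 1` that contains the latter. -/
def side (k : ℤ) (x : Vert K) : Prop := baseSide K (k + 1).bodd ((A.edge (k + 1))⁻¹ • x)

lemma alt_inv_edge_mul_edge {k m : ℤ} (hkm : k < m) :
    Alt K k.bodd ((A.edge k)⁻¹ * A.edge m) := by
  obtain ⟨n, rfl⟩ : ∃ n : ℕ, m = k + 1 + n := ⟨(m - k - 1).toNat, by omega⟩
  induction n generalizing k with
  | zero => simpa using Alt.single (A.mem k) (A.notMem k)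
  | succ n ih =>
    have halt := ih (lt_add_of_pos_right (k + 1) (by omega : (0 : ℤ) < 1 + n) |>.trans_eq (by ring))
    rw [bodd_add_one] at halt
    convert Alt.cons (A.mem k) (A.notMem k) halt using 1
    rw [mul_assoc, mul_inv_cancel_left, Nat.cast_succ, add_comm (n : ℤ), add_assoc (k + 1)]

lemma side_vertex_of_lt (hK : IsAmalgam K) {k m : ℤ} (hkm : k < m) : A.side k (A.vertex m) := by
  rw [side, vertex, smul_vert, baseSide_vert_iff]
  rcases (Int.add_one_le_iff.2 hkm).eq_or_lt with rfl | hlt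
  · rw [inv_mul_cancel]
    exact Or.inl ⟨rfl, hK.not_alt_one _⟩
  · have halt := A.alt_inv_edge_mul_edge hlt
    rcases Bool.eq_or_eq_not m.bodd (k + 1).bodd with h | h
    · exact Or.inl ⟨h, hK.not_alt halt⟩
    · exact Or.inr ⟨h, halt⟩

lemma not_side_vertex_of_le (hK : IsAmalgam K) {k m : ℤ} (hmk : m ≤ k) :
    ¬ A.side k (A.vertex m) := by
  rw [A.vertex_eq, side, smul_vert, baseSide_vert_iff, bodd_add_one, Bool.not_not]
  rcases hmk.eq_or_lt with rfl | hlt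
  · rw [inv_mul_cancel]
    rintro (⟨h, _⟩ | ⟨_, h⟩)
    · exact Bool.not_ne_self _ h.symm
    · exact hK.not_alt_one _ h
  · have halt := A.reverse.alt_inv_edge_mul_edge (k := -k) (m := -m) (by omega)
    simp only [reverse, Int.bodd_neg, sub_neg_eq_add, add_comm (1 : ℤ)] at halt
    rintro (⟨_, h⟩ | ⟨_, h⟩)
    · exact h halt
    · exact hK.not_alt halt h

lemma side_vertex_iff (hK : IsAmalgam K) (k m : ℤ) : A.side k (A.vertex m) ↔ k < m :=
  ⟨fun h => not_le.1 fun hmk => A.not_side_vertex_of_le hK hmk h, A.side_vertex_of_lt hK⟩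

/-- `x` and `y` are, in this or the opposite order, the ends of the edge of a line between its
vertices `k` and `k + 1`. -/
def IsEdge (k : ℤ) (x y : Vert K) : Prop :=
  (x = A.vertex k ∧ y = A.vertex (k + 1)) ∨ (y = A.vertex k ∧ x = A.vertex (k + 1))

lemma isEdge_of_side (hK : IsAmalgam K) {x y : Vert K} (hxy : (tree K).Adj x y) {k : ℤ}
    (h : ¬ (A.side k x ↔ A.side k y)) : A.IsEdge k x y := by
  obtain ⟨i, g, rfl, rfl⟩ := hxy
  rw [side, side, smul_vert, smul_vert] at h
  have hv : ∀ j, vert K j (A.edge (k + 1)) = vert K j g :=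
    fun j => vert_eq_iff.2 (hK.forall_mem_of_crossing h j)
  rw [IsEdge, A.vertex_eq, A.vertex_succ, hv, hv]
  rcases Bool.eq_or_eq_not i k.bodd with rfl | rfl
  · exact Or.inl ⟨rfl, rfl⟩
  · exact Or.inr ⟨by rw [Bool.not_not], rfl⟩

lemma exists_forall_side_iff (hK : IsAmalgam K) (x : Vert K) : ∃ m, ∀ k, A.side k x ↔ k < m := by
  obtain ⟨w⟩ := hK.connected.preconnected (A.vertex 0) x
  have h₀ : ∃ m, ∀ k, A.side k (A.vertex 0) ↔ k < m := ⟨0, fun k => A.side_vertex_iff hK k 0⟩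
  generalize A.vertex 0 = z at w h₀
  induction w with
  | nil => exact h₀
  | @cons x y _ hxy _ ih =>
    refine ih ?_
    obtain ⟨m, hm⟩ := h₀
    by_cases h : ∃ k, ¬ (A.side k x ↔ A.side k y)
    · obtain ⟨k, h⟩ := h
      rcases A.isEdge_of_side hK hxy h with ⟨_, rfl⟩ | ⟨rfl, _⟩
      · exact ⟨k + 1, fun l => A.side_vertex_iff hK l _⟩
      · exact ⟨k, fun l => A.side_vertex_iff hK l _⟩
    · exact ⟨m, fun k => (not_not.1 (not_exists.1 h k)).symm.trans (hm k)⟩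

/-- The projection to a line, as a coordinate; it is meaningful in amalgamated products, by
`side_iff`. -/
noncomputable def proj (x : Vert K) : ℤ := Classical.epsilon fun m => ∀ k, A.side k x ↔ k < m

lemma side_iff (hK : IsAmalgam K) (k : ℤ) (x : Vert K) : A.side k x ↔ k < A.proj x :=
  Classical.epsilon_spec (A.exists_forall_side_iff hK x) k

lemma proj_vertex (hK : IsAmalgam K) (m : ℤ) : A.proj (A.vertex m) = m :=
  eq_of_forall_lt_iff fun k => (A.side_iff hK k _).symm.trans (A.side_vertex_iff hK k m)

lemma proj_translate (g : P) (x : Vert K) : (A.translate g).proj (g • x) = A.proj x := by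
  simp only [proj, side, translate, mul_inv_rev, mul_smul, inv_smul_smul]

lemma isEdge_of_proj (hK : IsAmalgam K) {x y : Vert K} (hxy : (tree K).Adj x y) {k : ℤ}
    (h : ¬ (k < A.proj x ↔ k < A.proj y)) : A.IsEdge k x y :=
  A.isEdge_of_side hK hxy (by rwa [A.side_iff hK, A.side_iff hK])

lemma proj_adj (hK : IsAmalgam K) {x y : Vert K} (hxy : (tree K).Adj x y) :
    A.proj x = A.proj y ∨ ∃ k, A.IsEdge k x y := by
  rcases lt_trichotomy (A.proj x) (A.proj y) with h | h | h
  · exact Or.inr ⟨A.proj x, A.isEdge_of_proj hK hxy (by omega)⟩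
  · exact Or.inl h
  · exact Or.inr ⟨A.proj y, A.isEdge_of_proj hK hxy (by omega)⟩

/-! ### Overlaps of lines -/

variable (B : Line K)

lemma exists_isEdge (hK : IsAmalgam K) {k l n : ℤ} (hk : A.proj (B.vertex k) ≤ n)
    (hl : n < A.proj (B.vertex l)) : ∃ m, A.IsEdge n (B.vertex m) (B.vertex (m + 1)) := by
  by_contra! hcon
  have hstep : ∀ m, n < A.proj (B.vertex m) ↔ n < A.proj (B.vertex (m + 1)) := fun m =>
    not_not.1 fun h => hcon m (A.isEdge_of_proj hK (B.vertex_adj m) h)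
  have hconst : ∀ k, n < A.proj (B.vertex k) ↔ n < A.proj (B.vertex 0) := by
    intro k
    induction k with
    | zero => exact Iff.rfl
    | succ k ih => rwa [← hstep]
    | pred k ih => rwa [hstep, sub_add_cancel]
  exact absurd (((hconst l).trans (hconst k).symm).1 hl) (not_lt.2 hk)

variable {A B} in
lemma proj_of_isEdge (hK : IsAmalgam K) {m n : ℤ}
    (h : A.IsEdge n (B.vertex m) (B.vertex (m + 1))) :
    (B.proj (A.vertex (n + 1)) = B.proj (A.vertex n) + 1 ∨
      B.proj (A.vertex (n + 1)) = B.proj (A.vertex n) - 1) ∧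
    B.vertex (B.proj (A.vertex n)) = A.vertex n ∧
    B.vertex (B.proj (A.vertex (n + 1))) = A.vertex (n + 1) := by
  rcases h with ⟨h1, h2⟩ | ⟨h1, h2⟩ <;> rw [← h1, ← h2] <;> simp [B.proj_vertex hK]

lemma eq_add_or_eq_sub_of_step {f : ℤ → ℤ} {W : ℤ}
    (hstep : ∀ t, 0 ≤ t → t < W → f (t + 1) = f t + 1 ∨ f (t + 1) = f t - 1)
    (hne : ∀ t, 0 ≤ t → t + 1 < W → f (t + 1 + 1) ≠ f t) :
    (∀ t, 0 ≤ t → t ≤ W → f t = f 0 + t) ∨ ∀ t, 0 ≤ t → t ≤ W → f t = f 0 - t := by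
  have hdiff : ∀ t, 0 ≤ t → t < W → f (t + 1) - f t = f 1 - f 0 := by
    intro t ht
    induction t, ht using Int.leInduction with
    | base => intro _; rw [zero_add]
    | succ t ht ih =>
      intro htW
      have := hstep t ht (by omega)
      have := hstep (t + 1) (by omega) htW
      have := hne t ht htW
      have := ih (by omega)
      omega
  have hlin : ∀ t, 0 ≤ t → t ≤ W → f t = f 0 + (f 1 - f 0) * t := by
    intro t ht
    induction t, ht using Int.leInduction with
    | base => intro _; ring
    | succ t ht ih =>
      intro htW
      linear_combination ih (by omega) + hdiff t ht (by omega)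
  by_cases hW : 0 < W
  · refine (hstep 0 le_rfl hW).imp (fun h t h0 ht => ?_) fun h t h0 ht => ?_ <;>
    · rw [zero_add] at h
      rw [hlin t h0 ht, h]
      ring
  · left
    intro t h0 ht
    obtain rfl : t = 0 := by omega
    rw [add_zero]

lemma exists_overlap (hK : IsAmalgam K) {k l W : ℤ} (hW : 1 ≤ W)
    (h : A.proj (B.vertex k) + W ≤ A.proj (B.vertex l)) :
    (∃ s, ∀ t, 0 ≤ t → t ≤ W → B.vertex (s + t) = A.vertex (A.proj (B.vertex k) + t)) ∨
      ∃ s, ∀ t, 0 ≤ t → t ≤ W → B.reverse.vertex (s + t) = A.vertex (A.proj (B.vertex k) + t) := by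
  set p := A.proj (B.vertex k)
  set f : ℤ → ℤ := fun t => B.proj (A.vertex (p + t)) with hf
  have hedge : ∀ t, 0 ≤ t → t < W → (f (t + 1) = f t + 1 ∨ f (t + 1) = f t - 1) ∧
      B.vertex (f t) = A.vertex (p + t) ∧ B.vertex (f (t + 1)) = A.vertex (p + (t + 1)) := by
    intro t h0 ht
    obtain ⟨m, hm⟩ := A.exists_isEdge B hK (k := k) (l := l) (n := p + t) (by omega) (by omega)
    simpa only [hf, add_assoc] using proj_of_isEdge hK hm
  have hvertex : ∀ t, 0 ≤ t → t ≤ W → B.vertex (f t) = A.vertex (p + t) := by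
    intro t h0 ht
    rcases ht.eq_or_lt with rfl | ht
    · simpa only [sub_add_cancel] using (hedge (t - 1) (by omega) (by omega)).2.2
    · exact (hedge t h0 ht).2.1
  have hne : ∀ t, 0 ≤ t → t + 1 < W → f (t + 1 + 1) ≠ f t := by
    intro t h0 ht hft
    have hA : A.vertex (p + (t + 1 + 1)) = A.vertex (p + t) := by
      rw [← hvertex _ (by omega) (by omega), hft, hvertex t h0 (by omega)]
    have := congrArg A.proj hA
    rw [A.proj_vertex hK, A.proj_vertex hK] at this
    omega
  refine (eq_add_or_eq_sub_of_step (fun t h0 ht => (hedge t h0 ht).1) hne).imp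
    (fun h => ⟨f 0, fun t h0 ht => ?_⟩) fun h => ⟨-f 0, fun t h0 ht => ?_⟩
  · rw [← h t h0 ht, hvertex t h0 ht]
  · rw [vertex_reverse, neg_add, neg_neg, ← sub_eq_add_neg, ← h t h0 ht, hvertex t h0 ht]

variable {A B} in
lemma exists_eq_add_two_mul {s p : ℤ} (h : B.vertex s = A.vertex p) : ∃ σ, s = p + 2 * σ := by
  have hbodd : s.bodd = p.bodd := congrArg Sigma.fst h
  refine ⟨s.div2 - p.div2, ?_⟩
  have hs := Int.bodd_add_div2 s
  have hp := Int.bodd_add_div2 p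
  rw [hbodd] at hs
  linear_combination hp - hs

/-- The difference between the edge `k` of a line and the edge `k + 2 * σ` of another one. -/
def twist (σ k : ℤ) : P := (A.edge k)⁻¹ * B.edge (k + 2 * σ)

lemma edge_mul_twist (σ k : ℤ) : A.edge k * A.twist B σ k = B.edge (k + 2 * σ) :=
  mul_inv_cancel_left _ _

lemma turn_add_two_mul (σ k : ℤ) :
    B.turn (k + 2 * σ) = (A.twist B σ k)⁻¹ * A.turn k * A.twist B σ (k + 1) := by
  rw [turn, ← edge_mul_twist A, add_right_comm, ← edge_mul_twist A, turn]
  group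

variable {A B} in
lemma twist_mem {σ k : ℤ} (h : B.vertex (k + 2 * σ) = A.vertex k)
    (h' : B.vertex (k + 1 + 2 * σ) = A.vertex (k + 1)) : ∀ j, A.twist B σ (k + 1) ∈ K j := by
  rw [B.vertex_eq, A.vertex_eq, bodd_add_two_mul, add_right_comm] at h
  rw [vertex, A.vertex_succ, bodd_add_two_mul, bodd_add_one] at h'
  exact forall_mem_of_mem (vert_eq_iff.1 h.symm) (vert_eq_iff.1 h'.symm)

end Line

lemma eq_one_of_mul_eq_mul (hM : Malnormal ((K true).subgroupOf (K false))) {m h h' : P}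
    (hm : m ∈ K false) (hm' : m ∉ K true) (hh : ∀ j, h ∈ K j) (hh' : ∀ j, h' ∈ K j)
    (heq : m * h = h' * m) : h = 1 ∧ h' = 1 := by
  have h'1 : (⟨h', hh' false⟩ : K false) = 1 := by
    refine hM ⟨m, hm⟩ hm' ⟨h', hh' false⟩ (hh' true) ?_
    rw [Subgroup.mem_subgroupOf]
    simpa only [Subgroup.coe_mul, Subgroup.coe_inv, mul_assoc, ← heq, inv_mul_cancel_left]
      using hh true
  obtain rfl : h' = 1 := congrArg Subtype.val h'1
  rw [one_mul] at heq
  exact ⟨mul_eq_left.1 heq, rfl⟩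

namespace Line

variable {A B : Line K}

lemma twist_eq_twist (hM : Malnormal ((K true).subgroupOf (K false))) {y y' : P}
    (hy : ∀ t, A.turn (2 * t) = y) (hy' : ∀ t, B.turn (2 * t) = y') {σ t t' : ℤ}
    (h₁ : ∀ j, A.twist B σ (2 * t) ∈ K j) (h₂ : ∀ j, A.twist B σ (2 * t + 1) ∈ K j)
    (h₁' : ∀ j, A.twist B σ (2 * t') ∈ K j) (h₂' : ∀ j, A.twist B σ (2 * t' + 1) ∈ K j) :
    A.twist B σ (2 * t) = A.twist B σ (2 * t') ∧
      A.twist B σ (2 * t + 1) = A.twist B σ (2 * t' + 1) := by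
  have hturn : ∀ t, y' = (A.twist B σ (2 * t))⁻¹ * y * A.twist B σ (2 * t + 1) := by
    intro t
    rw [← hy t, ← turn_add_two_mul, ← mul_add, hy']
  have heq : y * (A.twist B σ (2 * t + 1) * (A.twist B σ (2 * t' + 1))⁻¹) =
      A.twist B σ (2 * t) * (A.twist B σ (2 * t'))⁻¹ * y := by
    have h := (hturn t).symm.trans (hturn t')
    rw [mul_assoc, inv_mul_eq_iff_eq_mul] at h
    rw [← mul_assoc, h]
    group
  have hyK : y ∈ K false := hy 0 ▸ A.mem 0
  have hyK' : y ∉ K true := hy 0 ▸ A.notMem 0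
  obtain ⟨h2, h1⟩ := eq_one_of_mul_eq_mul hM hyK hyK'
    (fun j => mul_mem (h₂ j) (inv_mem (h₂' j))) (fun j => mul_mem (h₁ j) (inv_mem (h₁' j))) heq
  exact ⟨mul_inv_eq_one.1 h1, mul_inv_eq_one.1 h2⟩

lemma exists_twist (hM : Malnormal ((K true).subgroupOf (K false))) {y y' : P}
    (hy : ∀ t, A.turn (2 * t) = y) (hy' : ∀ t, B.turn (2 * t) = y') {p s W Λ : ℤ}
    (hΛ : 0 ≤ Λ) (hW : 2 * Λ + 3 ≤ W)
    (h : ∀ t, 0 ≤ t → t ≤ W → B.vertex (s + t) = A.vertex (p + t)) :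
    ∃ κ κ' : P, ∃ σ t₁ : ℤ, (∀ j, κ ∈ K j) ∧ (∀ j, κ' ∈ K j) ∧ y' = κ⁻¹ * y * κ' ∧
      (∀ t, t₁ ≤ t → t < t₁ + Λ → B.turn (2 * (t + σ) + 1) = κ'⁻¹ * A.turn (2 * t + 1) * κ) ∧
      A.edge (2 * t₁) * κ = B.edge (2 * (t₁ + σ)) := by
  obtain ⟨σ, rfl⟩ := exists_eq_add_two_mul (s := s) (p := p) (by simpa using h 0 le_rfl (by omega))
  have hvertex : ∀ k, p ≤ k → k ≤ p + W → B.vertex (k + 2 * σ) = A.vertex k := by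
    intro k h1 h2
    convert h (k - p) (by omega) (by omega) using 2 <;> ring
  have hmem : ∀ k, p + 1 ≤ k → k ≤ p + W → ∀ j, A.twist B σ k ∈ K j := by
    intro k h1 h2
    have := twist_mem (hvertex (k - 1) (by omega) (by omega))
    rw [sub_add_cancel] at this
    exact this (hvertex k (by omega) h2)
  obtain ⟨t₁, ht₁, ht₁'⟩ : ∃ t₁, p + 1 ≤ 2 * t₁ ∧ 2 * t₁ ≤ p + 2 :=
    ⟨(p + 2) / 2, by omega, by omega⟩
  have hconst : ∀ t, t₁ ≤ t → t ≤ t₁ + Λ → A.twist B σ (2 * t) = A.twist B σ (2 * t₁) ∧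
      A.twist B σ (2 * t + 1) = A.twist B σ (2 * t₁ + 1) := fun t h1 h2 =>
    twist_eq_twist hM hy hy' (hmem _ (by omega) (by omega)) (hmem _ (by omega) (by omega))
      (hmem _ (by omega) (by omega)) (hmem _ (by omega) (by omega))
  refine ⟨A.twist B σ (2 * t₁), A.twist B σ (2 * t₁ + 1), σ, t₁, hmem _ (by omega) (by omega),
    hmem _ (by omega) (by omega), ?_, fun t h1 h2 => ?_, ?_⟩
  · rw [← hy t₁, ← turn_add_two_mul, ← mul_add, hy']
  · rw [← (hconst t h1 h2.le).2, ← (hconst (t + 1) (by omega) (by omega)).1, mul_add, mul_add,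
      add_right_comm, turn_add_two_mul A B]
    ring_nf
  · rw [edge_mul_twist, mul_add]

end Line

end Amalgam

/-! ### Periodic patterns and their runs -/

section Run

variable {T : Type*}

/-- The sequence `f` is constant on the interval `[t, t + a)`, and this interval cannot be extended
in either direction. -/
structure IsRun (f : ℤ → T) (t a : ℤ) : Prop where
  eq_start : ∀ s, t ≤ s → s < t + a → f s = f t
  ne_before : f (t - 1) ≠ f t
  ne_after : f (t + a) ≠ f t

namespace IsRun

variable {f g : ℤ → T} {t t' a a' s : ℤ}

lemma start_le_of_mem (h : IsRun f t a) (h' : IsRun f t' a') (hs : t ≤ s) (hs' : s < t + a)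
    (hs₁ : t' ≤ s) (hs₁' : s < t' + a') : t' ≤ t := by
  by_contra! hlt
  refine h'.ne_before ?_
  rw [h.eq_start _ (by omega) (by omega), ← h'.eq_start s hs₁ hs₁', h.eq_start s hs hs']

lemma end_le_of_mem (h : IsRun f t a) (h' : IsRun f t' a') (hs : t ≤ s) (hs' : s < t + a)
    (hs₁ : t' ≤ s) (hs₁' : s < t' + a') : t + a ≤ t' + a' := by
  by_contra! hlt
  refine h'.ne_after ?_
  rw [h.eq_start _ (by omega) (by omega), ← h'.eq_start s hs₁ hs₁', h.eq_start s hs hs']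

lemma eq_of_mem (h : IsRun f t a) (h' : IsRun f t' a') (hs : t ≤ s) (hs' : s < t + a)
    (hs₁ : t' ≤ s) (hs₁' : s < t' + a') : t = t' ∧ a = a' := by
  have := h.start_le_of_mem h' hs hs' hs₁ hs₁'
  have := h'.start_le_of_mem h hs₁ hs₁' hs hs'
  have := h.end_le_of_mem h' hs hs' hs₁ hs₁'
  have := h'.end_le_of_mem h hs₁ hs₁' hs hs'
  omega

lemma translate (h : IsRun f t a) (ha : 0 < a) {φ : T → T} (hφ : φ.Injective)
    (hg : ∀ r, t - 1 ≤ r → r ≤ t + a → g (r + s) = φ (f r)) : IsRun g (t + s) a where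
  eq_start r hr hr' := by
    rw [← sub_add_cancel r s, hg _ (by omega) (by omega), hg _ (by omega) (by omega),
      h.eq_start _ (by omega) (by omega)]
  ne_before := by
    rw [← sub_add_eq_add_sub, hg _ (by omega) (by omega), hg _ (by omega) (by omega)]
    exact hφ.ne h.ne_before
  ne_after := by
    rw [add_right_comm, hg _ (by omega) (by omega), hg _ (by omega) (by omega)]
    exact hφ.ne h.ne_after

lemma reflect (h : IsRun f t a) (ha : 0 < a) {φ : T → T} (hφ : φ.Injective)
    (hg : ∀ r, t - 1 ≤ r → r ≤ t + a → g (s - r) = φ (f r)) : IsRun g (s - (t + a - 1)) a := by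
  have h_last : g (s - (t + a - 1)) = φ (f t) := by
    rw [hg _ (by omega) (by omega), h.eq_start _ (by omega) (by omega)]
  refine ⟨fun r hr hr' => ?_, ?_, ?_⟩
  · rw [h_last, ← sub_sub_cancel s r, hg _ (by omega) (by omega),
      h.eq_start _ (by omega) (by omega)]
  · rw [h_last, show s - (t + a - 1) - 1 = s - (t + a) by ring, hg _ (by omega) (by omega)]
    exact hφ.ne h.ne_after
  · rw [h_last, show s - (t + a - 1) + a = s - (t - 1) by ring, hg _ (by omega) (by omega)]
    exact hφ.ne h.ne_before

end IsRun

end Run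

section Pattern

/-- The position of the `k`-th block within a period of `pattern L`. This block has length `L + k`
and is followed by a single separator. -/
def blockOffset (L : ℤ) : ℕ → ℤ
  | 0 => 0
  | k + 1 => blockOffset L k + L + k + 1

/-- The period of `pattern L`: a hundred blocks with their separators, and two more letters. -/
def patternPeriod (L : ℤ) : ℤ := blockOffset L 100 + 2

/-- The position of the `k`-th block of the `n`-th period of `pattern L`. -/
def blockStart (L n : ℤ) (k : ℕ) : ℤ := blockOffset L k + n * patternPeriod L

lemma blockOffset_zero (L : ℤ) : blockOffset L 0 = 0 := rfl

lemma blockOffset_succ (L : ℤ) (k : ℕ) :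
    blockOffset L (k + 1) = blockOffset L k + L + k + 1 := rfl

lemma blockStart_succ (L n : ℤ) (k : ℕ) :
    blockStart L n (k + 1) = blockStart L n k + L + k + 1 := by
  rw [blockStart, blockOffset_succ, blockStart]; ring

lemma blockStart_add_one_zero (L n : ℤ) : blockStart L (n + 1) 0 = blockStart L n 100 + 2 := by
  rw [blockStart, blockOffset_zero, blockStart, patternPeriod]; ring

lemma mul_le_blockOffset (L : ℤ) (k : ℕ) : k * L ≤ blockOffset L k := by
  induction k with
  | zero => rw [blockOffset_zero, Nat.cast_zero, zero_mul]
  | succ k ih => rw [blockOffset_succ]; push_cast; linarith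

lemma hundred_mul_lt_patternPeriod (L : ℤ) : 100 * L < patternPeriod L := by
  have := mul_le_blockOffset L 100
  rw [patternPeriod]
  push_cast at this
  omega

variable {L : ℤ}

lemma blockOffset_strictMono (hL : 0 ≤ L) : StrictMono (blockOffset L) :=
  strictMono_nat_of_lt_succ fun k => by rw [blockOffset_succ]; omega

lemma blockOffset_nonneg (hL : 0 ≤ L) (k : ℕ) : 0 ≤ blockOffset L k :=
  (blockOffset_strictMono hL).monotone k.zero_le

lemma exists_blockOffset_le {s : ℤ} (hs : -1 ≤ s) {l : ℕ} (hsl : s < blockOffset L l - 1) :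
    ∃ k < l, blockOffset L k - 1 ≤ s ∧ s < blockOffset L k + L + k := by
  induction l with
  | zero => rw [blockOffset_zero] at hsl; omega
  | succ l ih =>
    by_cases h : s < blockOffset L l - 1
    · obtain ⟨k, hk, h'⟩ := ih h
      exact ⟨k, by omega, h'⟩
    · rw [blockOffset_succ] at hsl
      exact ⟨l, by omega, by omega, by omega⟩

lemma exists_blockStart_near (hL : 0 < L) (t : ℤ) :
    ∃ n, ∃ k < 100, blockStart L n k - 3 ≤ t ∧ t < blockStart L n k + L + k := by
  have hL' := hundred_mul_lt_patternPeriod L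
  have h_period : patternPeriod L = blockOffset L 100 + 2 := rfl
  have h_nonneg := Int.emod_nonneg t (b := patternPeriod L) (by omega)
  have h_lt := Int.emod_lt_of_pos t (b := patternPeriod L) (by omega)
  have h_div := Int.emod_add_ediv_mul t (patternPeriod L)
  by_cases h : t % patternPeriod L < blockOffset L 100 - 1
  · obtain ⟨k, hk, h₁, h₂⟩ := exists_blockOffset_le (by omega) h
    exact ⟨t / patternPeriod L, k, hk, by rw [blockStart]; omega, by rw [blockStart]; omega⟩
  · refine ⟨t / patternPeriod L + 1, 0, by norm_num, ?_, ?_⟩ <;>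
    · rw [blockStart_add_one_zero, blockStart]
      omega

lemma exists_blocks_in_window (hL : 100 ≤ L) (t : ℤ) : ∃ n : ℤ, ∃ k : ℕ, k + 1 < 100 ∧
    t < blockStart L n k ∧ blockStart L n (k + 1) + L + (k + 1 : ℕ) < t + 7 * L := by
  obtain ⟨n, k, hk, h₁, h₂⟩ := exists_blockStart_near (L := L) (by omega) t
  have e₁ := blockStart_succ L n k
  rcases Nat.lt_or_ge (k + 2) 100 with hk' | hk'
  · have e₂ := blockStart_succ L n (k + 1)
    exact ⟨n, k + 1, hk', by omega, by push_cast at e₂ ⊢; omega⟩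
  · have e₂ := blockStart_add_one_zero L n
    have e₃ := blockStart_succ L (n + 1) 0
    have e₄ := blockStart_succ L n 99
    have e₅ := blockStart_succ L n 98
    push_cast at e₃ e₄ e₅
    obtain rfl | rfl : k = 98 ∨ k = 99 := by omega
    all_goals exact ⟨n + 1, 0, by norm_num, by omega, by push_cast; omega⟩

variable {T : Type*}

open Classical in
/-- The periodic sequence whose period consists of blocks of `p` of the lengths
`L, L + 1, …, L + 99`, each of them followed by the separator `q`, and of the final letters
`z` and `q`. -/
noncomputable def pattern (L : ℤ) (p q z : T) (t : ℤ) : T :=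
  if t % patternPeriod L = patternPeriod L - 2 then z
  else if t % patternPeriod L = patternPeriod L - 1 ∨
    ∃ k < 100, t % patternPeriod L = blockOffset L k + L + k then q
  else p

variable {p q z : T}

lemma pattern_periodic : (pattern L p q z).Periodic (patternPeriod L) := fun t => by
  unfold pattern
  rw [Int.add_emod_right]

lemma pattern_eq_or (t : ℤ) :
    pattern L p q z t = p ∨ pattern L p q z t = q ∨ pattern L p q z t = z := by
  unfold pattern
  split_ifs <;> simp only [true_or, or_true]

lemma pattern_eq_or_of_lt {t : ℤ} (ht : 0 ≤ t) (ht' : t < patternPeriod L - 2) :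
    pattern L p q z t = p ∨ pattern L p q z t = q := by
  rw [pattern, Int.emod_eq_of_lt ht (by omega), if_neg (by omega)]
  split_ifs <;> simp only [true_or, or_true]

lemma emod_patternPeriod {n t s : ℤ} (ht : t = s + n * patternPeriod L) (hs : 0 ≤ s)
    (hs' : s < patternPeriod L) : t % patternPeriod L = s := by
  rw [ht, Int.add_mul_emod_self_right, Int.emod_eq_of_lt hs hs']

lemma blockOffset_succ_le (hL : 0 ≤ L) {k l : ℕ} (hkl : k < l) :
    blockOffset L k + L + k + 1 ≤ blockOffset L l :=
  (blockOffset_strictMono hL).monotone (Nat.succ_le_of_lt hkl)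

lemma pattern_block (hL : 0 ≤ L) {n t : ℤ} {k : ℕ} (hk : k < 100) (ht : blockStart L n k ≤ t)
    (ht' : t < blockStart L n k + L + k) : pattern L p q z t = p := by
  have h_period : patternPeriod L = blockOffset L 100 + 2 := rfl
  have h_nonneg := blockOffset_nonneg hL k
  have h_le := blockOffset_succ_le hL hk
  rw [blockStart] at ht ht'
  rw [pattern, emod_patternPeriod (sub_add_cancel t (n * patternPeriod L)).symm (by omega)
    (by omega), if_neg (by omega), if_neg]
  rintro (h | ⟨l, -, h⟩)
  · omega
  · rcases lt_trichotomy k l with hkl | rfl | hkl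
    · have := blockOffset_succ_le hL hkl; omega
    · omega
    · have := blockOffset_succ_le hL hkl; omega

lemma pattern_after (hL : 0 ≤ L) (n : ℤ) {k : ℕ} (hk : k < 100) :
    pattern L p q z (blockStart L n k + L + k) = q := by
  have h_period : patternPeriod L = blockOffset L 100 + 2 := rfl
  have h_nonneg := blockOffset_nonneg hL k
  have h_le := blockOffset_succ_le hL hk
  rw [pattern, emod_patternPeriod (s := blockOffset L k + L + k) (n := n)
    (by rw [blockStart]; ring) (by omega) (by omega), if_neg (by omega),
    if_pos (Or.inr ⟨k, hk, rfl⟩)]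

lemma pattern_period_sub_one (hL : 0 ≤ L) : pattern L p q z (patternPeriod L - 1) = q := by
  have h := hundred_mul_lt_patternPeriod L
  rw [pattern, Int.emod_eq_of_lt (by omega) (by omega), if_neg (by omega), if_pos (Or.inl rfl)]

lemma pattern_period_sub_two (hL : 0 ≤ L) : pattern L p q z (patternPeriod L - 2) = z := by
  have h_period : patternPeriod L = blockOffset L 100 + 2 := rfl
  have h := blockOffset_nonneg hL 100
  rw [pattern, Int.emod_eq_of_lt (by omega) (by omega), if_pos rfl]

lemma pattern_before (hL : 0 ≤ L) (n : ℤ) {k : ℕ} (hk : k < 100) :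
    pattern L p q z (blockStart L n k - 1) = q := by
  cases k with
  | zero =>
    have h := hundred_mul_lt_patternPeriod L
    rw [pattern, emod_patternPeriod (s := patternPeriod L - 1) (n := n - 1)
      (by rw [blockStart, blockOffset_zero]; ring) (by omega) (by omega), if_neg (by omega),
      if_pos (Or.inl rfl)]
  | succ k =>
    rw [blockStart_succ, add_sub_cancel_right]
    exact pattern_after hL n (by omega)

lemma isRun_pattern (hL : 0 < L) (hpq : p ≠ q) (n : ℤ) {k : ℕ} (hk : k < 100) :
    IsRun (pattern L p q z) (blockStart L n k) (L + k) := by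
  have h_start : pattern L p q z (blockStart L n k) = p :=
    pattern_block hL.le hk le_rfl (by omega)
  constructor
  · intro s hs hs'
    rw [h_start, pattern_block hL.le hk hs (by omega)]
  · rw [h_start, pattern_before hL.le n hk]
    exact hpq.symm
  · rw [h_start, ← add_assoc, pattern_after hL.le n hk]
    exact hpq.symm

lemma exists_eq_blockStart_of_isRun (hL : 0 < L) (hpq : p ≠ q) {t a : ℤ} (ha : 4 ≤ a)
    (h : IsRun (pattern L p q z) t a) :
    ∃ n : ℤ, ∃ k < 100, t = blockStart L n k ∧ a = L + k := by
  obtain ⟨n, k, hk, h₁, h₂⟩ := exists_blockStart_near hL t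
  refine ⟨n, k, hk, h.eq_of_mem (isRun_pattern hL hpq n hk) (s := max t (blockStart L n k))
    (le_max_left _ _) ?_ (le_max_right _ _) ?_⟩ <;> omega

end Pattern

section IntProd

variable {P : Type*} [Group P] {u : ℤ → P}

/-- The product `u 0 * u 1 * ⋯ * u (k - 1)`, extended to negative `k` in such a way that
`intProd_add_one` holds for all integers. -/
noncomputable def intProd (u : ℤ → P) (k : ℤ) : P :=
  Int.inductionOn' k 0 1 (fun k _ e => e * u k) fun k _ e => e * (u (k - 1))⁻¹

lemma intProd_zero (u : ℤ → P) : intProd u 0 = 1 := Int.inductionOn'_self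

lemma intProd_add_one (u : ℤ → P) (k : ℤ) : intProd u (k + 1) = intProd u k * u k := by
  rcases le_or_gt 0 k with hk | hk
  · exact Int.inductionOn'_add_one hk
  · have h : intProd u (k + 1 - 1) = intProd u (k + 1) * (u (k + 1 - 1))⁻¹ :=
      Int.inductionOn'_sub_one hk
    rw [add_sub_cancel_right] at h
    rw [h, inv_mul_cancel_right]

lemma eq_mul_intProd {e : ℤ → P} (he : ∀ k, e (k + 1) = e k * u k) (k : ℤ) :
    e k = e 0 * intProd u k := by
  induction k with
  | zero => rw [intProd_zero, mul_one]
  | succ k ih => rw [he, intProd_add_one, ih, mul_assoc]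
  | pred k ih =>
    refine mul_right_cancel (b := u (-k - 1)) ?_
    rw [← he, mul_assoc, ← intProd_add_one, sub_add_cancel, ih]

lemma intProd_add_period {N : ℤ} (hu : u.Periodic N) (k : ℤ) :
    intProd u (k + N) = intProd u N * intProd u k := by
  have h := eq_mul_intProd (e := fun k => intProd u (k + N)) (u := u)
    (fun k => by rw [add_right_comm, intProd_add_one, hu k]) k
  rwa [zero_add] at h

lemma intProd_add_mul_period {N : ℤ} (hu : u.Periodic N) (n k : ℤ) :
    intProd u (k + n * N) = intProd u N ^ n * intProd u k := by
  have h := intProd_add_period (hu.int_mul n) k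
  rw [Int.cast_id] at h
  rw [h]
  congr 1
  clear h
  induction n with
  | zero => rw [zero_mul, intProd_zero, zpow_zero]
  | succ n ih => rw [add_mul, one_mul, intProd_add_period hu, ih, mul_self_zpow]
  | pred n ih =>
    refine mul_left_cancel (a := intProd u N) ?_
    rw [← intProd_add_period hu, ← zpow_one_add, sub_mul, one_mul, sub_add_cancel, ih]
    congr 1; ring

end IntProd

/-! ### Relators -/

section IsShortProd

open scoped Pointwise

variable {G H : Type*} [Monoid G] [Monoid H] {S T : Set G} {m n : ℕ} {g h : G}

/-- The element `g` is a product of at least one and at most `n` elements of `S`. -/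
def IsShortProd (S : Set G) (n : ℕ) (g : G) : Prop :=
  ∃ m, 1 ≤ m ∧ m ≤ n ∧ g ∈ S ^ m

lemma isShortProd_one_of_mem (hg : g ∈ S) : IsShortProd S 1 g :=
  ⟨1, le_rfl, le_rfl, by rwa [pow_one]⟩

namespace IsShortProd

lemma mul (hg : IsShortProd S m g) (hh : IsShortProd S n h) : IsShortProd S (m + n) (g * h) := by
  obtain ⟨k, hk, hkm, hgk⟩ := hg
  obtain ⟨l, hl, hln, hhl⟩ := hh
  exact ⟨k + l, by omega, by omega, pow_add S k l ▸ Set.mul_mem_mul hgk hhl⟩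

lemma mono (hg : IsShortProd S m g) (hST : S ⊆ T) (hmn : m ≤ n) : IsShortProd T n g := by
  obtain ⟨k, hk, hkm, hgk⟩ := hg
  exact ⟨k, hk, hkm.trans hmn, Set.pow_subset_pow_left hST hgk⟩

lemma map (hg : IsShortProd S n g) (f : G →* H) : IsShortProd (f '' S) n (f g) := by
  obtain ⟨k, hk, hkn, hgk⟩ := hg
  exact ⟨k, hk, hkn, Set.image_pow f S k ▸ Set.mem_image_of_mem f hgk⟩

lemma exists_map_eq {f : G →* H} {h : H} (hh : IsShortProd (f '' S) n h) :
    ∃ g, IsShortProd S n g ∧ f g = h := by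
  obtain ⟨k, hk, hkn, hhk⟩ := hh
  rw [← Set.image_pow] at hhk
  obtain ⟨g, hg, rfl⟩ := hhk
  exact ⟨g, ⟨k, hk, hkn, hg⟩, rfl⟩

lemma mem_of_subset (hg : IsShortProd S n g) {L : Submonoid G} (hS : S ⊆ L) : g ∈ L := by
  obtain ⟨k, -, -, hgk⟩ := hg
  exact Submonoid.pow_subset hS hgk

lemma exists_ofFn_prod_eq (hg : IsShortProd S n g) :
    ∃ m, 1 ≤ m ∧ m ≤ n ∧ ∃ a : Fin m → G, (∀ i, a i ∈ S) ∧ g = (List.ofFn a).prod := by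
  obtain ⟨m, hm, hmn, hgm⟩ := hg
  obtain ⟨a, rfl⟩ := Set.mem_pow.1 hgm
  exact ⟨m, hm, hmn, fun i => a i, fun i => (a i).2, rfl⟩

end IsShortProd

end IsShortProd

/-- The bound for the length of the positive words that the relators of index `i` provide. -/
noncomputable def wordBound (i : ℕ) : ℕ := 3 * (patternPeriod (100 * (i + 1))).toNat

section Relator

variable {P : Type*} [Group P] (K : Bool → Subgroup P)

/-- The data of a relator that expresses `h` as a positive word in `y`, `x` and `c`. The lengths of
its blocks are determined by `index`. -/
structure Relator where
  y : P
  x : P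
  c : P
  h : P
  index : ℕ
  y_mem : y ∈ K false
  y_notMem : y ∉ K true
  x_mem : x ∈ K true
  x_notMem : x ∉ K false
  c_mem : ∀ j, c ∈ K j
  c_ne : c ≠ 1
  h_mem : ∀ j, h ∈ K j

namespace Relator

variable {K} (R : Relator K)

/-- The length of the first block of the relator. -/
def blockLen : ℤ := 100 * (R.index + 1)

lemma hundred_le_blockLen : 100 ≤ R.blockLen := by unfold blockLen; omega

lemma blockLen_pos : 0 < R.blockLen := by unfold blockLen; omega

/-- Half of the length of the relator. -/
def period : ℤ := patternPeriod R.blockLen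

lemma hundred_mul_blockLen_lt_period : 100 * R.blockLen < R.period :=
  hundred_mul_lt_patternPeriod _

/-- The letters of the relator at the odd positions; the other ones are `y`. The letter `x * h⁻¹`
occurs once in each period, so that the relator can be solved for `h`. -/
noncomputable def letter : ℤ → P := pattern R.blockLen R.x (R.c * R.x) (R.x * R.h⁻¹)

lemma x_ne : R.x ≠ R.c * R.x := fun h => R.c_ne (mul_eq_right.1 h.symm)

lemma letter_periodic : R.letter.Periodic R.period := pattern_periodic

lemma letter_mem (t : ℤ) : R.letter t ∈ K true := by
  rcases pattern_eq_or t with h | h | h <;> rw [letter, h]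
  · exact R.x_mem
  · exact mul_mem (R.c_mem _) R.x_mem
  · exact mul_mem R.x_mem (inv_mem (R.h_mem _))

lemma letter_notMem (t : ℤ) : R.letter t ∉ K false := by
  rcases pattern_eq_or t with h | h | h <;> rw [letter, h]
  · exact R.x_notMem
  · rw [Subgroup.mul_mem_cancel_left _ (R.c_mem _)]
    exact R.x_notMem
  · rw [Subgroup.mul_mem_cancel_right _ (inv_mem (R.h_mem _))]
    exact R.x_notMem

/-- The bi-infinite power of the relator, as a sequence of letters. -/
noncomputable def word (k : ℤ) : P := if k.bodd then R.letter (k / 2) else R.y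

lemma bodd_two_mul (t : ℤ) : (2 * t).bodd = false := by
  rw [← zero_add (2 * t), bodd_add_two_mul, Int.bodd_zero]

lemma bodd_two_mul_add_one (t : ℤ) : (2 * t + 1).bodd = true := by
  rw [bodd_add_one, bodd_two_mul, Bool.not_false]

lemma word_two_mul (t : ℤ) : R.word (2 * t) = R.y := by
  rw [word, bodd_two_mul, if_neg Bool.false_ne_true]

lemma word_two_mul_add_one (t : ℤ) : R.word (2 * t + 1) = R.letter t := by
  rw [word, bodd_two_mul_add_one, if_pos rfl]
  congr 1; omega

lemma word_periodic : R.word.Periodic (2 * R.period) := by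
  intro k
  obtain ⟨t, rfl | rfl⟩ := Int.even_or_odd' k
  · rw [← mul_add, word_two_mul, word_two_mul]
  · rw [add_right_comm, ← mul_add, word_two_mul_add_one, word_two_mul_add_one, R.letter_periodic]

lemma word_mem (k : ℤ) : R.word k ∈ K k.bodd := by
  obtain ⟨t, rfl | rfl⟩ := Int.even_or_odd' k
  · rw [word_two_mul, bodd_two_mul]; exact R.y_mem
  · rw [word_two_mul_add_one, bodd_two_mul_add_one]; exact R.letter_mem t

lemma word_notMem (k : ℤ) : R.word k ∉ K (!k.bodd) := by
  obtain ⟨t, rfl | rfl⟩ := Int.even_or_odd' k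
  · rw [word_two_mul, bodd_two_mul]; exact R.y_notMem
  · rw [word_two_mul_add_one, bodd_two_mul_add_one]; exact R.letter_notMem t

/-- The axis of the relator in the Bass–Serre tree. -/
noncomputable def line : Line K where
  edge := intProd R.word
  mem k := by rw [intProd_add_one, inv_mul_cancel_left]; exact R.word_mem k
  notMem k := by rw [intProd_add_one, inv_mul_cancel_left]; exact R.word_notMem k

lemma edge_add_one (k : ℤ) : R.line.edge (k + 1) = R.line.edge k * R.word k :=
  intProd_add_one _ _

lemma turn_line (k : ℤ) : R.line.turn k = R.word k := by
  rw [Line.turn, edge_add_one, inv_mul_cancel_left]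

/-- The relator as an element of the group. -/
noncomputable def elt : P := intProd R.word (2 * R.period)

lemma edge_add_mul_period (n k : ℤ) :
    R.line.edge (k + 2 * (n * R.period)) = R.elt ^ n * R.line.edge k := by
  rw [mul_left_comm]
  exact intProd_add_mul_period R.word_periodic n k

lemma edge_two_mul_add_one (t : ℤ) :
    R.line.edge (2 * (t + 1)) = R.line.edge (2 * t) * R.y * R.letter t := by
  rw [mul_add, mul_one, ← one_add_one_eq_two, ← add_assoc, edge_add_one, edge_add_one,
    one_add_one_eq_two, word_two_mul, word_two_mul_add_one]

lemma isShortProd_mul_edge {g : P} {m : ℕ} (hg : IsShortProd {R.y, R.x, R.c} m g) {n : ℕ}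
    (hn : (n : ℤ) ≤ R.period - 2) :
    IsShortProd {R.y, R.x, R.c} (m + 3 * n) (g * R.line.edge (2 * n)) := by
  have hy : IsShortProd {R.y, R.x, R.c} 1 R.y := isShortProd_one_of_mem (by simp)
  have hx : IsShortProd {R.y, R.x, R.c} 1 R.x := isShortProd_one_of_mem (by simp)
  have hc : IsShortProd {R.y, R.x, R.c} 1 R.c := isShortProd_one_of_mem (by simp)
  induction n with
  | zero => simpa [line, intProd_zero] using hg
  | succ n ih =>
    have hedge := (ih (by omega)).mul hy
    rw [Nat.cast_succ, edge_two_mul_add_one, ← mul_assoc, ← mul_assoc]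
    have hletter : R.letter n = R.x ∨ R.letter n = R.c * R.x :=
      pattern_eq_or_of_lt (by omega) (by rw [period] at hn; omega)
    rcases hletter with h | h <;> rw [h]
    · exact (hedge.mul hx).mono subset_rfl (by omega)
    · exact (hedge.mul (hc.mul hx)).mono subset_rfl (by omega)

lemma elt_eq : R.elt =
    R.line.edge (2 * (R.period - 2)) * R.y * (R.x * R.h⁻¹) * R.y * (R.c * R.x) := by
  have h₁ : R.letter (R.period - 1) = R.c * R.x := pattern_period_sub_one R.blockLen_pos.le
  have h₂ : R.letter (R.period - 2) = R.x * R.h⁻¹ := pattern_period_sub_two R.blockLen_pos.le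
  calc R.elt = R.line.edge (2 * (R.period - 2 + 1 + 1)) := by
        rw [elt, line, show R.period - 2 + 1 + 1 = R.period by ring]
    _ = _ := by
        rw [edge_two_mul_add_one, edge_two_mul_add_one, h₂,
          show R.period - 2 + 1 = R.period - 1 by ring, h₁]

lemma exists_isShortProd :
    ∃ s, IsShortProd {R.y, R.x, R.c} (wordBound R.index) (R.h * (s⁻¹ * R.elt * s)) := by
  have hN := R.hundred_mul_blockLen_lt_period
  have hL := R.blockLen_pos
  have hy : IsShortProd {R.y, R.x, R.c} 1 R.y := isShortProd_one_of_mem (by simp)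
  have hx : IsShortProd {R.y, R.x, R.c} 1 R.x := isShortProd_one_of_mem (by simp)
  have hc : IsShortProd {R.y, R.x, R.c} 1 R.c := isShortProd_one_of_mem (by simp)
  have hprod := ((R.isShortProd_mul_edge ((hy.mul hc).mul hx) (n := (R.period - 2).toNat)
    (by omega)).mul hy).mul hx
  have hlen : wordBound R.index = 3 * R.period.toNat := rfl
  refine ⟨R.line.edge (2 * (R.period - 2)) * R.y * R.x, ?_⟩
  convert hprod.mono subset_rfl (by omega : _ ≤ wordBound R.index) using 1
  rw [elt_eq, Int.toNat_of_nonneg (by omega)]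
  group

/-! ### Matching relators -/

lemma isRun_letter (n : ℤ) {k : ℕ} (hk : k < 100) :
    IsRun R.letter (blockStart R.blockLen n k) (R.blockLen + k) :=
  isRun_pattern R.blockLen_pos R.x_ne n hk

lemma letter_block {n t : ℤ} {k : ℕ} (hk : k < 100) (ht : blockStart R.blockLen n k ≤ t)
    (ht' : t < blockStart R.blockLen n k + R.blockLen + k) : R.letter t = R.x :=
  pattern_block R.blockLen_pos.le hk ht ht'

lemma letter_before (n : ℤ) {k : ℕ} (hk : k < 100) :
    R.letter (blockStart R.blockLen n k - 1) = R.c * R.x :=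
  pattern_before R.blockLen_pos.le n hk

variable {R} {R' : Relator K}

lemma blockLen_eq_of_index_eq (h : R'.index = R.index) : R'.blockLen = R.blockLen := by
  rw [blockLen, h, blockLen]

lemma index_eq_of_isRun {t : ℤ} {k : ℕ} (hk : k < 100)
    (h : IsRun R'.letter t (R.blockLen + k)) :
    R'.index = R.index ∧ ∃ n, t = blockStart R.blockLen n k := by
  have hL := R.hundred_le_blockLen
  obtain ⟨n, k', hk', ht, hlen⟩ :=
    exists_eq_blockStart_of_isRun R'.blockLen_pos R'.x_ne (by omega) h
  have hindex : R'.index = R.index := by unfold blockLen at hlen; omega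
  rw [blockLen_eq_of_index_eq hindex] at ht hlen
  obtain rfl : k' = k := by omega
  exact ⟨hindex, n, ht⟩

lemma index_eq_of_letter_add_eq {φ : P → P} (hφ : φ.Injective) {σ t₁ : ℤ}
    (h : ∀ t, t₁ ≤ t → t < t₁ + 7 * R.blockLen → R'.letter (t + σ) = φ (R.letter t)) :
    R'.index = R.index ∧ ∃ m, σ = m * R.period := by
  have hL := R.hundred_le_blockLen
  obtain ⟨n, k, hk, h₁, h₂⟩ := exists_blocks_in_window hL t₁
  have hsucc := blockStart_succ R.blockLen n k
  obtain ⟨hindex, n', hn'⟩ := index_eq_of_isRun (by omega)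
    ((R.isRun_letter n (by omega : k < 100)).translate (by omega) hφ
      fun t ht ht' => h t (by omega) (by omega))
  refine ⟨hindex, n' - n, ?_⟩
  rw [blockStart, blockStart] at hn'
  rw [period]
  linear_combination hn'

lemma x_eq_and_c_eq_of_letter_eq (hindex : R'.index = R.index) {t₁ : ℤ}
    (h : ∀ t, t₁ ≤ t → t < t₁ + 7 * R.blockLen → R'.letter t = R.letter t) :
    R'.x = R.x ∧ R'.c = R.c := by
  have hL := R.hundred_le_blockLen
  have hlen := blockLen_eq_of_index_eq hindex
  obtain ⟨n, k, hk, h₁, h₂⟩ := exists_blocks_in_window hL t₁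
  have hsucc := blockStart_succ R.blockLen n k
  have hx : R'.x = R.x := by
    rw [← R.letter_block (n := n) (k := k) (by omega) le_rfl (by omega),
      ← R'.letter_block (n := n) (k := k) (by omega) le_rfl (by omega), hlen]
    exact h _ (by omega) (by omega)
  refine ⟨hx, mul_right_cancel (b := R.x) ?_⟩
  rw [← R.letter_before n (by omega : k < 100), ← hx, ← R'.letter_before n (by omega : k < 100),
    hlen]
  exact h _ (by omega) (by omega)

/- The lengths of the blocks increase with `k`, so that two consecutive blocks cannot occur in the
opposite order unless they belong to different periods; but then they are far apart. -/
lemma not_letter_sub_eq {φ : P → P} (hφ : φ.Injective) {σ t₁ : ℤ}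
    (h : ∀ t, t₁ ≤ t → t < t₁ + 7 * R.blockLen → R'.letter (σ - t) = φ (R.letter t)) : False := by
  have hL := R.hundred_le_blockLen
  obtain ⟨n, k, hk, h₁, h₂⟩ := exists_blocks_in_window hL t₁
  have hsucc := blockStart_succ R.blockLen n k
  obtain ⟨-, n₁, hn₁⟩ := index_eq_of_isRun (by omega)
    ((R.isRun_letter n (by omega : k < 100)).reflect (by omega) hφ
      fun t ht ht' => h t (by omega) (by omega))
  obtain ⟨-, n₂, hn₂⟩ := index_eq_of_isRun hk
    ((R.isRun_letter n hk).reflect (by omega) hφ fun t ht ht' => h t (by omega) (by omega))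
  have hdiff : (n₁ - n₂) * R.period = 2 * (R.blockLen + k) + 3 := by
    have e₁ := blockStart_succ R.blockLen n₂ k
    rw [hsucc, e₁] at hn₂
    simp only [blockStart, Nat.cast_add, Nat.cast_one] at hn₁ hn₂
    rw [period]
    linear_combination hn₂ - hn₁
  have hN := R.hundred_mul_blockLen_lt_period
  rcases le_or_gt (n₁ - n₂) 0 with hneg | hpos
  · have := mul_nonpos_of_nonpos_of_nonneg hneg (by omega : 0 ≤ R.period)
    omega
  · have := le_mul_of_one_le_left (by omega : 0 ≤ R.period) (Int.add_one_le_iff.2 hpos)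
    omega

end Relator

end Relator

/-! ### The axes of a family of relators -/

section RelatorFamily

/-- The index of an axis: an element of a family of relators and a translation. -/
@[ext]
structure AxisIndex (P J : Type*) where
  elt : P
  idx : J

variable {P J : Type*} [Group P] {K : Bool → Subgroup P} (R : J → Relator K)

namespace AxisIndex

instance : MulAction P (AxisIndex P J) where
  smul g A := ⟨g * A.elt, A.idx⟩
  one_smul A := AxisIndex.ext (one_mul A.elt) rfl
  mul_smul g h A := AxisIndex.ext (mul_assoc g h A.elt) rfl

lemma smul_mk (g a : P) (j : J) : g • (⟨a, j⟩ : AxisIndex P J) = ⟨g * a, j⟩ := rfl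

variable (A : AxisIndex P J)

/-- The axis of index `A`. -/
noncomputable def line : Line K := (R A.idx).line.translate A.elt

lemma line_smul (g : P) : (g • A).line R = (A.line R).translate g := by
  simp only [line, Line.translate, HSMul.hSMul, SMul.smul, mul_assoc]

lemma turn_line (k : ℤ) : (A.line R).turn k = (R A.idx).word k := by
  rw [← (R A.idx).turn_line]
  simp only [line, Line.turn, Line.translate, mul_inv_rev, mul_assoc, inv_mul_cancel_left]

/-- The conjugate of a relator that translates the axis of index `A` along itself. -/
noncomputable def shift : P := A.elt * (R A.idx).elt * A.elt⁻¹

lemma edge_line_add_mul_period (n k : ℤ) :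
    (A.line R).edge (k + 2 * (n * (R A.idx).period)) = A.shift R ^ n * (A.line R).edge k := by
  rw [shift, conj_zpow]
  simp only [line, Line.translate, Relator.edge_add_mul_period, mul_assoc, inv_mul_cancel_left]

lemma vertex_line_mul_zpow (n k : ℤ) :
    (line R ⟨A.elt * (R A.idx).elt ^ n, A.idx⟩).vertex k =
      (A.line R).vertex (k + 2 * (n * (R A.idx).period)) := by
  simp only [line, Line.vertex, Line.translate, Relator.edge_add_mul_period, mul_assoc,
    bodd_add_two_mul]

/-- Indices of the same axis with base points that differ by a translation along the axis. -/
def Parallel (A B : AxisIndex P J) : Prop := ∃ n : ℤ, B = ⟨A.elt * (R A.idx).elt ^ n, A.idx⟩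

lemma equivalence_parallel : Equivalence (Parallel R) where
  refl A := ⟨0, by rw [zpow_zero, mul_one]⟩
  symm := by
    rintro A _ ⟨n, rfl⟩
    exact ⟨-n, AxisIndex.ext (by simp only [zpow_neg, mul_inv_cancel_right]) rfl⟩
  trans := by
    rintro A _ _ ⟨m, rfl⟩ ⟨n, rfl⟩
    exact ⟨m + n, AxisIndex.ext (by simp only [zpow_add, mul_assoc]) rfl⟩

end AxisIndex

/-- The relators of the family `R` are determined by their letters `y`, `x` and `c`, and relators of
equal length share the letter `y`. -/
structure IsSeparated : Prop where
  y_eq : ∀ {i j}, (R i).index = (R j).index → (R i).y = (R j).y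
  eq_of_eq : ∀ {i j}, (R i).y = (R j).y → (R i).x = (R j).x → (R i).c = (R j).c → i = j

variable {R}

lemma IsSeparated.parallel_of_vertex_eq (hR : IsSeparated R)
    (hM : Malnormal ((K true).subgroupOf (K false))) {A B : AxisIndex P J} {p s : ℤ}
    (h : ∀ t, 0 ≤ t → t ≤ 15 * (R A.idx).blockLen →
      (B.line R).vertex (s + t) = (A.line R).vertex (p + t)) : A.Parallel R B := by
  have hL := (R A.idx).hundred_le_blockLen
  obtain ⟨κ, κ', σ, t₁, hκ, hκ', hy, hturn, hedge⟩ := Line.exists_twist hM (y := (R A.idx).y)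
    (y' := (R B.idx).y) (Λ := 7 * (R A.idx).blockLen)
    (fun t => by rw [A.turn_line, Relator.word_two_mul])
    (fun t => by rw [B.turn_line, Relator.word_two_mul]) (by omega) (by omega) h
  simp only [AxisIndex.turn_line, Relator.word_two_mul_add_one] at hturn
  obtain ⟨hindex, m, rfl⟩ := Relator.index_eq_of_letter_add_eq
    (φ := fun w => κ'⁻¹ * w * κ) (fun a b hab => by simpa using hab) hturn
  rw [hR.y_eq hindex, mul_assoc, eq_inv_mul_iff_mul_eq] at hy
  obtain ⟨rfl, rfl⟩ := eq_one_of_mul_eq_mul hM (R A.idx).y_mem (R A.idx).y_notMem hκ' hκ hy.symm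
  have hperiod : (R B.idx).period = (R A.idx).period := by
    rw [Relator.period, Relator.blockLen_eq_of_index_eq hindex, Relator.period]
  obtain ⟨hx, hc⟩ := Relator.x_eq_and_c_eq_of_letter_eq hindex (t₁ := t₁) fun t ht ht' => by
    have := (R B.idx).letter_periodic.int_mul m t
    rw [Int.cast_id, hperiod, hturn t ht ht', inv_one, one_mul, mul_one] at this
    exact this.symm
  obtain ⟨b, j⟩ := B
  obtain rfl : j = A.idx := hR.eq_of_eq (hR.y_eq hindex) hx hc
  refine ⟨-m, AxisIndex.ext ?_ rfl⟩
  rw [mul_one, mul_add] at hedge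
  change A.elt * _ = b * _ at hedge
  rw [Relator.edge_add_mul_period, ← mul_assoc, mul_left_inj] at hedge
  rw [hedge, zpow_neg, mul_inv_cancel_right]

lemma not_vertex_reverse_eq (hM : Malnormal ((K true).subgroupOf (K false)))
    {A B : AxisIndex P J} {p s : ℤ}
    (h : ∀ t, 0 ≤ t → t ≤ 15 * (R A.idx).blockLen →
      (B.line R).reverse.vertex (s + t) = (A.line R).vertex (p + t)) : False := by
  have hL := (R A.idx).hundred_le_blockLen
  obtain ⟨κ, κ', σ, t₁, -, -, -, hturn, -⟩ := Line.exists_twist hM (y := (R A.idx).y)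
    (y' := (R B.idx).y⁻¹) (Λ := 7 * (R A.idx).blockLen)
    (fun t => by rw [A.turn_line, Relator.word_two_mul])
    (fun t => by rw [Line.turn_reverse, ← mul_neg, B.turn_line, Relator.word_two_mul])
    (by omega) (by omega) h
  refine Relator.not_letter_sub_eq (R := R A.idx) (R' := R B.idx) (σ := -σ - 1)
    (t₁ := t₁) (φ := fun w => (κ'⁻¹ * w * κ)⁻¹) (fun a b hab => by simpa using hab)
    fun t ht ht' => ?_
  have := hturn t ht ht'
  rw [Line.turn_reverse, A.turn_line, B.turn_line,
    show -(2 * (t + σ) + 1) = 2 * (-σ - 1 - t) + 1 by ring, Relator.word_two_mul_add_one,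
    Relator.word_two_mul_add_one] at this
  rw [← this, inv_inv]

lemma IsSeparated.parallel_of_overlap (hR : IsSeparated R) (hK : IsAmalgam K)
    (hM : Malnormal ((K true).subgroupOf (K false))) {A B : AxisIndex P J} {k l : ℤ}
    (h : (A.line R).proj ((B.line R).vertex k) + 15 * (R A.idx).blockLen ≤
      (A.line R).proj ((B.line R).vertex l)) : A.Parallel R B := by
  have hL := (R A.idx).blockLen_pos
  rcases (A.line R).exists_overlap (B.line R) hK (by omega) h with ⟨s, hs⟩ | ⟨s, hs⟩
  · exact hR.parallel_of_vertex_eq hM hs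
  · exact (not_vertex_reverse_eq hM hs).elim

lemma Line.vertex_add_of_edge_add {A : Line K} {g : P} {N : ℤ}
    (h : ∀ k, A.edge (k + 2 * N) = g * A.edge k) (k : ℤ) :
    A.vertex (k + 2 * N) = g • A.vertex k := by
  rw [vertex, h, bodd_add_two_mul, ← smul_vert, vertex]

lemma Line.proj_smul_of_edge_add {A : Line K} (hK : IsAmalgam K) {g : P} {N : ℤ}
    (h : ∀ k, A.edge (k + 2 * N) = g * A.edge k) (x : Vert K) :
    A.proj (g • x) = A.proj x + 2 * N := by
  have hside : ∀ k, A.side (k + 2 * N) (g • x) ↔ A.side k x := fun k => by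
    rw [side, add_right_comm, h, bodd_add_two_mul, mul_inv_rev, mul_smul, inv_smul_smul, side]
  refine eq_of_forall_lt_iff fun k => ?_
  rw [← A.side_iff hK, ← sub_add_cancel k (2 * N), hside, A.side_iff hK]
  omega

lemma AxisIndex.abs_proj_sub_le (hR : IsSeparated R) (hK : IsAmalgam K)
    (hM : Malnormal ((K true).subgroupOf (K false))) {A B : AxisIndex P J}
    (hAB : ¬ A.Parallel R B) (k l : ℤ) :
    |(A.line R).proj ((B.line R).vertex k) - (A.line R).proj ((B.line R).vertex l)| ≤
      15 * (R A.idx).blockLen := by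
  have key : ∀ k l, (A.line R).proj ((B.line R).vertex l) - 15 * (R A.idx).blockLen <
      (A.line R).proj ((B.line R).vertex k) := fun k l => by
    by_contra! h
    exact hAB (hR.parallel_of_overlap hK hM (k := k) (l := l) (by omega))
  have h₁ := key k l
  have h₂ := key l k
  rw [abs_le]
  omega

/-- The system of the axes of all conjugates of a separated family of relators. -/
noncomputable def axisSystem (hK : IsAmalgam K) (hM : Malnormal ((K true).subgroupOf (K false)))
    (hR : IsSeparated R) : AxisSystem P (Vert K) (AxisIndex P J) (tree K) where
  axis A := (A.line R).vertex
  proj A := (A.line R).proj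
  shift A := A.shift R
  period A := 2 * (R A.idx).period
  bound A := 15 * (R A.idx).blockLen
  Parallel := AxisIndex.Parallel R
  connected := hK.connected
  adj_smul := tree_adj_smul
  axis_adj A := Line.vertex_adj _
  proj_axis A := Line.proj_vertex _ hK
  proj_adj A _ _ h := Line.proj_adj _ hK h
  proj_smul g A x := by rw [AxisIndex.line_smul, Line.proj_translate]
  axis_smul g A k := by rw [AxisIndex.line_smul, Line.vertex_translate]
  shift_smul g A := by
    obtain ⟨a, j⟩ := A
    simp only [AxisIndex.shift, AxisIndex.smul_mk, mul_inv_rev, mul_assoc]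
  bound_smul g A := rfl
  proj_shift A := Line.proj_smul_of_edge_add hK fun k => by
    simpa only [one_mul, zpow_one] using A.edge_line_add_mul_period R 1 k
  axis_shift A := Line.vertex_add_of_edge_add fun k => by
    simpa only [one_mul, zpow_one] using A.edge_line_add_mul_period R 1 k
  equivalence_parallel := AxisIndex.equivalence_parallel R
  parallel_smul := by
    rintro g A _ ⟨n, rfl⟩
    exact ⟨n, AxisIndex.ext (mul_assoc _ _ _).symm rfl⟩
  shift_eq_of_parallel := by
    rintro A _ ⟨n, rfl⟩
    simp only [AxisIndex.shift]
    group
  exists_zpow_eq := by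
    rintro g A ⟨n, h⟩
    have h : g * A.elt = A.elt * (R A.idx).elt ^ n := congrArg AxisIndex.elt h
    exact ⟨n, by rw [AxisIndex.shift, conj_zpow, ← h, mul_inv_cancel_right]⟩
  exists_axis_eq_of_parallel := by
    rintro A _ ⟨n, rfl⟩ k
    refine ⟨k + 2 * (-n * (R A.idx).period), ?_⟩
    rw [AxisIndex.vertex_line_mul_zpow]
    congr 1
    ring
  overlap_le hAB := AxisIndex.abs_proj_sub_le hR hK hM hAB
  bound_pos A := by
    have := (R A.idx).blockLen_pos
    omega
  ten_mul_bound_le_period A := by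
    have := (R A.idx).hundred_mul_blockLen_lt_period
    have := (R A.idx).blockLen_pos
    omega

end RelatorFamily

/-! ### Malnormality of the factors -/

section Malnormal

variable {P J : Type*} [Group P] {K : Bool → Subgroup P}

lemma Alt.eq_one_of_conj_mem (hK : IsAmalgam K) (hM : Malnormal ((K true).subgroupOf (K false)))
    {g l : P} (hg : Alt K false g) (hl : l ∈ K true) (h : g⁻¹ * l * g ∈ K true) : l = 1 := by
  by_cases hlM : l ∈ K false
  · have hlH := forall_mem_of_mem (i := true) hl hlM
    cases hg with
    | single hm hm' =>
      have hconj := mul_mem (mul_mem (inv_mem hm) hlM) hm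
      exact (eq_one_of_mul_eq_mul hM hm hm' (forall_mem_of_mem (i := true) h hconj) hlH
        (by group)).2
    | @cons _ m g hm hm' hg =>
      have hconj := mul_mem (mul_mem (inv_mem hm) hlM) hm
      by_cases hconj' : m⁻¹ * l * m ∈ K true
      · exact (eq_one_of_mul_eq_mul hM hm hm' (forall_mem_of_mem (i := true) hconj' hconj) hlH
          (by group)).2
      · have halt : Alt K false (g * ((m * g)⁻¹ * l * (m * g))) := by
          convert Alt.cons hconj hconj' hg using 1
          group
        exact (hg.mul_right.2 _ h).elim (fun h => (hK.not_alt halt h).elim)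
          fun h => (hK.notMem halt h).elim
  · have halt : Alt K true (g * (g⁻¹ * l * g)) := by
      convert Alt.cons hl hlM hg using 1
      group
    exact (hK.not_alt halt (hg.mul_right.1 _ h)).elim

theorem IsAmalgam.malnormal (hK : IsAmalgam K)
    (hM : Malnormal ((K true).subgroupOf (K false))) : Malnormal (K true) := by
  intro g hg l hl h
  rcases hK.forall_mem_or_exists_alt g with hgK | ⟨_ | _, hgK⟩
  · exact absurd (hgK true) hg
  · exact hgK.eq_one_of_conj_mem hK hM hl h
  · cases hgK with
    | single hx _ => exact absurd hx hg
    | @cons _ x g hx _ hg' =>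
      have hconj : x⁻¹ * l * x = 1 :=
        hg'.eq_one_of_conj_mem hK hM (mul_mem (mul_mem (inv_mem hx) hl) hx) (by
          convert h using 1
          group)
      rwa [mul_assoc, inv_mul_eq_one, right_eq_mul] at hconj

section Quotient

variable {R : J → Relator K} (hK : IsAmalgam K) (hM : Malnormal ((K true).subgroupOf (K false)))
  (hR : IsSeparated R)
include hK hM hR

lemma elt_mem_shiftGroup (j : J) : (R j).elt ∈ (axisSystem hK hM hR).shiftGroup Set.univ := by
  convert (axisSystem hK hM hR).shift_mem_shiftGroup (A := ⟨1, j⟩) (Set.mem_univ _) using 1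
  simp [axisSystem, AxisIndex.shift]

lemma eq_of_inv_mul_mem_shiftGroup {l m : P} (hl : l ∈ K true) (hm : m ∈ K false)
    (h : m⁻¹ * l ∈ (axisSystem hK hM hR).shiftGroup Set.univ) : m = l := by
  by_contra hne
  obtain ⟨A, hA⟩ := (axisSystem hK hM hR).exists_sub_le_abs_proj_sub (vert K true 1) h
    (fun h => hne (inv_mul_eq_one.1 h))
  have hproj := (axisSystem hK hM hR).abs_proj_sub_le_dist A (vert K true 1)
    ((m⁻¹ * l) • vert K true 1)
  have hdist : (tree K).dist (vert K true 1) ((m⁻¹ * l) • vert K true 1) ≤ 2 := by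
    have htrue : (m⁻¹ * l) • vert K true 1 = vert K true m⁻¹ := by
      rw [smul_vert, mul_one]
      exact vert_eq_iff.2 (by simpa using hl)
    have hfalse : vert K false 1 = vert K false m⁻¹ := vert_eq_iff.2 (by simpa using hm)
    have hadj : (tree K).Adj (vert K false 1) (vert K true m⁻¹) :=
      hfalse ▸ tree_adj_vert false m⁻¹
    rw [htrue]
    exact SimpleGraph.dist_le (.cons (tree_adj_vert true 1) (.cons hadj .nil))
  have hperiod := (R A.idx).hundred_mul_blockLen_lt_period
  have hpos := (R A.idx).blockLen_pos
  change 2 * (R A.idx).period - 3 * (15 * (R A.idx).blockLen) ≤ _ at hA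
  omega

lemma malnormal_map_mk_shiftGroup :
    Malnormal ((K true).map (QuotientGroup.mk' ((axisSystem hK hM hR).shiftGroup Set.univ))) := by
  have hfix {l : P} (hl : l ∈ K true) : l • vert K true 1 = vert K true 1 := by
    rw [smul_vert, mul_one]
    exact vert_eq_iff.2 (by simpa using hl)
  rintro q hq _ ⟨l', hl', rfl⟩ ⟨l, hl, h⟩
  obtain ⟨g, rfl⟩ := QuotientGroup.mk_surjective q
  have hmem : (g * l)⁻¹ * (l' * g) ∈ (axisSystem hK hM hR).shiftGroup Set.univ := by
    rw [← QuotientGroup.eq, QuotientGroup.mk_mul, QuotientGroup.mk_mul]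
    rw [mul_assoc, eq_inv_mul_iff_mul_eq] at h
    exact h
  obtain ⟨g₀, hg₀, heq⟩ := AxisSystem.exists_mul_eq_mul (hfix hl) (hfix hl') hmem
  have hg₀' : g₀ ∉ K true := fun h => hq ⟨g₀, h, (QuotientGroup.eq.2 hg₀).symm⟩
  rw [hK.malnormal hM g₀ hg₀' l' hl' (by rwa [mul_assoc, heq, inv_mul_cancel_left]), map_one]

end Quotient

end Malnormal

section Pushout

open Monoid

variable {G : Bool → Type*} {H : Type*} [∀ i, Group (G i)] [Group H] {φ : ∀ i, H →* G i}

lemma forall_mem_range_of_iff (hφ : ∀ i, Function.Injective (φ i)) (g : PushoutI φ) :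
    (∀ i, g ∈ (PushoutI.of (φ := φ) i).range) ↔ g ∈ (PushoutI.base φ).range := by
  rw [← PushoutI.inf_of_range_eq_base_range hφ (i := true) (j := false) (by decide),
    Subgroup.mem_inf, Bool.forall_bool, and_comm]

lemma of_mem_range_of_iff (hφ : ∀ i, Function.Injective (φ i)) {i j : Bool} (hij : i ≠ j)
    (g : G i) :
    PushoutI.of (φ := φ) i g ∈ (PushoutI.of (φ := φ) j).range ↔ g ∈ (φ i).range := by
  constructor
  · intro h
    have hbase : PushoutI.of (φ := φ) i g ∈ (PushoutI.base φ).range := by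
      rw [← PushoutI.inf_of_range_eq_base_range hφ hij]
      exact ⟨⟨g, rfl⟩, h⟩
    obtain ⟨k, hk⟩ := hbase
    exact ⟨k, PushoutI.of_injective hφ i (by rw [PushoutI.of_apply_eq_base, hk])⟩
  · rintro ⟨k, rfl⟩
    exact ⟨φ j k, by rw [PushoutI.of_apply_eq_base, PushoutI.of_apply_eq_base]⟩

lemma exists_normalWord_of_alt (hφ : ∀ i, Function.Injective (φ i))
    (d : PushoutI.NormalWord.Transversal φ) {i : Bool} {g : PushoutI φ}
    (hg : Alt (fun i => (PushoutI.of (φ := φ) i).range) i g) :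
    ∃ w : PushoutI.NormalWord d, w.prod = g ∧ w.fstIdx = some i := by
  induction hg with
  | @single i x hx hx' =>
    obtain ⟨k, rfl⟩ := hx
    rw [of_mem_range_of_iff hφ (by simp)] at hx'
    have hempty : (PushoutI.NormalWord.empty (d := d)).fstIdx ≠ some i := by
      simp [PushoutI.NormalWord.empty, CoprodI.Word.fstIdx]
    refine ⟨PushoutI.NormalWord.cons k .empty hempty hx', by simp, ?_⟩
    simp [PushoutI.NormalWord.cons, CoprodI.Word.fstIdx, CoprodI.Word.cons]
  | @cons i x g hx hx' _ ih =>
    obtain ⟨k, rfl⟩ := hx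
    obtain ⟨w, rfl, hwi⟩ := ih
    rw [of_mem_range_of_iff hφ (by simp)] at hx'
    refine ⟨PushoutI.NormalWord.cons k w (by rw [hwi]; simp) hx', by simp, ?_⟩
    simp [PushoutI.NormalWord.cons, CoprodI.Word.fstIdx, CoprodI.Word.cons]

lemma isAmalgam_pushout (hφ : ∀ i, Function.Injective (φ i)) :
    IsAmalgam fun i => (PushoutI.of (φ := φ) i).range := by
  obtain ⟨d⟩ := PushoutI.NormalWord.transversal_nonempty φ hφ
  refine ⟨eq_top_iff.2 fun g _ => ?_, fun {i g} hg h => ?_, fun {i g} hg h => ?_⟩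
  · induction g using PushoutI.induction_on with
    | of i g => exact Subgroup.subset_closure (Set.mem_iUnion.2 ⟨i, g, rfl⟩)
    | base h =>
      rw [← PushoutI.of_apply_eq_base φ true]
      exact Subgroup.subset_closure (Set.mem_iUnion.2 ⟨true, _, rfl⟩)
    | mul x y hx hy => exact mul_mem (hx trivial) (hy trivial)
  · obtain ⟨w, hw, hwi⟩ := exists_normalWord_of_alt hφ d hg
    obtain ⟨k, hk⟩ := (forall_mem_range_of_iff hφ g).1 h
    have hprod : PushoutI.NormalWord.prod (d := d) ⟨.empty, k, by simp⟩ = PushoutI.base φ k := by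
      simp [PushoutI.NormalWord.prod]
    rw [PushoutI.NormalWord.prod_injective (hw.trans (hk.symm.trans hprod.symm))] at hwi
    simp [CoprodI.Word.fstIdx] at hwi
  · obtain ⟨w, hw, hwi⟩ := exists_normalWord_of_alt hφ d hg
    obtain ⟨w', hw', hwi'⟩ := exists_normalWord_of_alt hφ d h
    rw [PushoutI.NormalWord.prod_injective (hw.trans hw'.symm), hwi'] at hwi
    simp at hwi

lemma malnormal_subgroupOf_range_of (hφ : ∀ i, Function.Injective (φ i))
    (hM : Malnormal (φ false).range) :
    Malnormal ((PushoutI.of (φ := φ) true).range.subgroupOf (PushoutI.of false).range) := by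
  rintro ⟨_, m, rfl⟩ hm ⟨_, k, rfl⟩ hk hconj
  rw [Subgroup.mem_subgroupOf, of_mem_range_of_iff hφ (by decide)] at hm hk
  simp only [Subgroup.mem_subgroupOf, Subgroup.coe_mul, Subgroup.coe_inv, ← map_inv,
    ← map_mul] at hconj
  rw [of_mem_range_of_iff hφ (by decide)] at hconj
  obtain rfl := hM m hm k hk hconj
  exact Subtype.ext (map_one _)

lemma countable_pushout [∀ i, Countable (G i)] : Countable (PushoutI φ) := by
  let f : List (Σ i, G i) → PushoutI φ := fun l => (l.map fun s => PushoutI.of s.1 s.2).prod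
  refine Function.Surjective.countable (f := f) fun x => ?_
  induction x using PushoutI.induction_on with
  | of i g => exact ⟨[⟨i, g⟩], by simp [f]⟩
  | base h => exact ⟨[⟨true, φ true h⟩], by simp [f, PushoutI.of_apply_eq_base]⟩
  | mul x y hx hy =>
    obtain ⟨l, rfl⟩ := hx
    obtain ⟨l', rfl⟩ := hy
    exact ⟨l ++ l', by simp [f]⟩

end Pushout

/-! ### Chains of pushouts -/

section PushoutQuotient

open Monoid

universe u v

variable {G : Bool → Type u} {H : Type v} [∀ i, Group (G i)] [Group H] (φ : ∀ i, H →* G i)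

/-- The letters of a relator in a pushout: elements of the two factors outside the amalgamated
subgroup, and a nontrivial element of that subgroup. -/
@[ext]
structure Letters where
  y : G false
  x : G true
  c : H
  y_notMem : y ∉ (φ false).range
  x_notMem : x ∉ (φ true).range
  c_ne : c ≠ 1

variable {φ}

/-- The relator in the pushout that expresses `target s.y s.x s.c` as a positive word in the
letters `s`. -/
def pushoutRelator (hφ : ∀ i, Function.Injective (φ i)) (index : G false → ℕ)
    (target : G false → G true → H → H) (s : Letters φ) :
    Relator fun i => (PushoutI.of (φ := φ) i).range where
  y := PushoutI.of false s.y
  x := PushoutI.of true s.x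
  c := PushoutI.base φ s.c
  h := PushoutI.base φ (target s.y s.x s.c)
  index := index s.y
  y_mem := ⟨_, rfl⟩
  y_notMem h := s.y_notMem ((of_mem_range_of_iff hφ (by decide) _).1 h)
  x_mem := ⟨_, rfl⟩
  x_notMem h := s.x_notMem ((of_mem_range_of_iff hφ (by decide) _).1 h)
  c_mem := (forall_mem_range_of_iff hφ _).2 ⟨_, rfl⟩
  c_ne h := s.c_ne (PushoutI.base_injective hφ (h.trans (map_one _).symm))
  h_mem := (forall_mem_range_of_iff hφ _).2 ⟨_, rfl⟩

lemma isSeparated_pushoutRelator (hφ : ∀ i, Function.Injective (φ i)) {index : G false → ℕ}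
    (hindex : Function.Injective index) (target : G false → G true → H → H) :
    IsSeparated (pushoutRelator hφ index target) where
  y_eq h := congrArg (PushoutI.of false) (hindex h)
  eq_of_eq hy hx hc := Letters.ext (PushoutI.of_injective hφ _ hy) (PushoutI.of_injective hφ _ hx)
    (PushoutI.base_injective hφ hc)

theorem exists_pushout_quotient [∀ i, Countable (G i)] (hφ : ∀ i, Function.Injective (φ i))
    (hM : Malnormal (φ false).range) {index : G false → ℕ} (hindex : Function.Injective index)
    (target : G false → G true → H → H) :
    ∃ (Q : Type (max u v)) (_ : Group Q) (f : ∀ i, G i →* Q), Countable Q ∧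
      (∀ i, Function.Injective (f i)) ∧
      (∀ h, f true (φ true h) = f false (φ false h)) ∧
      (∀ l m, f true l = f false m → l ∈ (φ true).range) ∧
      Malnormal (f true).range ∧
      ∀ y ∉ (φ false).range, ∀ x ∉ (φ true).range, ∀ c, c ≠ 1 →
        IsShortProd {f false y, f true x, f true (φ true c)} (wordBound (index y))
          (f true (φ true (target y x c))) := by
  have hK := isAmalgam_pushout hφ
  have hM' := malnormal_subgroupOf_range_of hφ hM
  have hR := isSeparated_pushoutRelator hφ hindex target
  let N := (axisSystem hK hM' hR).shiftGroup Set.univ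
  let f (i : Bool) : G i →* PushoutI φ ⧸ N := (QuotientGroup.mk' N).comp (PushoutI.of i)
  have hbase (h : H) (i : Bool) : f i (φ i h) = QuotientGroup.mk' N (PushoutI.base φ h) :=
    congrArg _ (PushoutI.of_apply_eq_base φ i h)
  have heq {l : G true} {m : G false} (h : f true l = f false m) :
      PushoutI.of (φ := φ) false m = PushoutI.of true l :=
    eq_of_inv_mul_mem_shiftGroup hK hM' hR ⟨l, rfl⟩ ⟨m, rfl⟩ (QuotientGroup.eq.1 h.symm)
  have : Countable (PushoutI φ) := countable_pushout
  refine ⟨PushoutI φ ⧸ N, inferInstance, f, QuotientGroup.mk_surjective.countable, ?_,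
    fun h => (hbase h true).trans (hbase h false).symm, fun l m h => ?_, ?_,
    fun y hy x hx c hc => ?_⟩
  · refine Bool.forall_bool.2 ⟨(injective_iff_map_eq_one _).2 fun m hm => ?_,
      (injective_iff_map_eq_one _).2 fun l hl => ?_⟩
    · exact PushoutI.of_injective hφ _ ((heq ((map_one _).trans hm.symm)).trans (by simp))
    · exact PushoutI.of_injective hφ _ ((heq (hl.trans (map_one _).symm)).symm.trans (by simp))
  · exact (of_mem_range_of_iff hφ (j := false) (by decide) l).1 ⟨m, heq h⟩
  · rw [MonoidHom.range_comp]
    exact malnormal_map_mk_shiftGroup hK hM' hR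
  · let s : Letters φ := ⟨y, x, c, hy, hx, hc⟩
    obtain ⟨t, ht⟩ := (pushoutRelator hφ index target s).exists_isShortProd
    have helt : QuotientGroup.mk' N (pushoutRelator hφ index target s).elt = 1 :=
      (QuotientGroup.eq_one_iff _).2 (elt_mem_shiftGroup hK hM' hR s)
    convert ht.map (QuotientGroup.mk' N) using 1
    · simp only [Set.image_insert_eq, Set.image_singleton, hbase c true]
      rfl
    · rfl
    · rw [hbase, map_mul, map_mul, map_mul, helt, mul_one, ← map_mul, inv_mul_cancel, map_one,
        mul_one]
      rfl

end PushoutQuotient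

section Colimit

universe u

lemma exists_sequential_colimit (K : ℕ → Type u) [∀ n, Group (K n)] (j : ∀ n, K n →* K (n + 1))
    (hj : ∀ n, Function.Injective (j n)) :
    ∃ (Q : Type u) (_ : Group Q) (f : ∀ n, K n →* Q), (∀ n, Function.Injective (f n)) ∧
      (∀ n k, f (n + 1) (j n k) = f n k) ∧ ∀ q, ∃ n k, f n k = q := by
  let tr (m n : ℕ) (h : m ≤ n) : K m →* K n :=
    Nat.leRec (motive := fun n _ => K m →* K n) (MonoidHom.id _) (fun n _ g => (j n).comp g) h
  have tr_self (m) : tr m m le_rfl = MonoidHom.id _ := Nat.leRec_self _ _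
  have tr_succ (m n) (h : m ≤ n) : tr m (n + 1) (h.trans n.le_succ) = (j n).comp (tr m n h) :=
    Nat.leRec_succ _ _ h
  have tr_comp (m n p) (h : m ≤ n) (h' : n ≤ p) :
      (tr n p h').comp (tr m n h) = tr m p (h.trans h') := by
    induction p, h' using Nat.le_induction with
    | base => rw [tr_self, MonoidHom.id_comp]
    | succ p h' ih => rw [tr_succ n p h', tr_succ m p (h.trans h'), MonoidHom.comp_assoc, ih]
  have tr_injective (m n) (h : m ≤ n) : Function.Injective (tr m n h) := by
    induction n, h using Nat.le_induction with
    | base => exact tr_self m ▸ Function.injective_id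
    | succ n h ih => exact tr_succ m n h ▸ (hj n).comp ih
  have : DirectedSystem K fun m n h => tr m n h :=
    ⟨fun m k => by rw [tr_self, MonoidHom.id_apply],
      fun p n m h h' k => DFunLike.congr_fun (tr_comp m n p h h') k⟩
  refine ⟨DirectLimit K tr, inferInstance,
    fun n => MonoidHom.mk' (fun k => ⟦⟨n, k⟩⟧) fun a b => (DirectLimit.mul_def n a b).symm,
    fun n => DirectLimit.mk_injective tr tr_injective n, fun n k => ?_, fun q => ?_⟩
  · have hjk : j n k = tr n (n + 1) n.le_succ k := by
      rw [tr_succ n n le_rfl, tr_self, MonoidHom.comp_id]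
    rw [hjk]
    exact DirectLimit.mk_apply n (n + 1) k n.le_succ
  · obtain ⟨n, k, rfl⟩ := DirectLimit.exists_eq_mk tr q
    exact ⟨n, k, rfl⟩

variable {G K : Type*} [Group G]

lemma exists_hom_of_monotone [Group K] {A : ℕ → Subgroup G} (hA : Monotone A)
    (hex : ∀ g, ∃ n, g ∈ A n) (f : ∀ n, A n →* K)
    (hf : ∀ n g, f (n + 1) (Subgroup.inclusion (hA n.le_succ) g) = f n g) :
    ∃ F : G →* K, ∀ n (g : A n), F g = f n g := by
  have hle (m n) (h : m ≤ n) (g) : f n (Subgroup.inclusion (hA h) g) = f m g := by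
    induction n, h using Nat.le_induction with
    | base => rfl
    | succ n h ih => exact (hf n _).trans ih
  have heq (m n g) (hm : g ∈ A m) (hn : g ∈ A n) : f m ⟨g, hm⟩ = f n ⟨g, hn⟩ := by
    rcases le_total m n with h | h
    · exact (hle m n h ⟨g, hm⟩).symm
    · exact hle n m h ⟨g, hn⟩
  choose level hlevel using hex
  refine ⟨MonoidHom.mk' (fun g => f (level g) ⟨g, hlevel g⟩) fun g h => ?_,
    fun n g => heq _ _ _ _ g.2⟩
  have hg := hA (le_max_left (level g) (level h)) (hlevel g)
  have hh := hA (le_max_right (level g) (level h)) (hlevel h)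
  rw [heq _ _ _ _ (mul_mem hg hh), heq _ _ _ _ hg, heq _ _ _ _ hh, ← map_mul]
  rfl

lemma exists_le_of_fg {ι : Type*} [Nonempty ι] {A : ι → Subgroup G} (hA : Directed (· ≤ ·) A)
    {U : Subgroup G} (hU : U.FG) (h : ∀ g ∈ U, ∃ i, g ∈ A i) : ∃ i, U ≤ A i := by
  obtain ⟨S, rfl⟩ := hU
  have hS : (S : Set G) ⊆ ⋃ i, (A i : Set G) := fun g hg =>
    Set.mem_iUnion.2 (h g (Subgroup.subset_closure hg))
  obtain ⟨i, hi⟩ := Directed.exists_mem_subset_of_finset_subset_biUnion hA hS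
  exact ⟨i, (Subgroup.closure_le _).2 hi⟩

variable (G) in
lemma exists_monotone_fg [Countable G] :
    ∃ A : ℕ → Subgroup G, Monotone A ∧ A 0 = ⊥ ∧ (∀ n, (A n).FG) ∧ ∀ g, ∃ n, g ∈ A n := by
  obtain ⟨enum, henum⟩ := exists_surjective_nat G
  refine ⟨fun n => Subgroup.closure (enum '' Set.Iio n),
    fun m n h => Subgroup.closure_mono (Set.image_mono (Set.Iio_subset_Iio h)), by simp,
    fun n => (Subgroup.fg_iff _).2 ⟨_, rfl, (Set.finite_Iio n).image _⟩, fun g => ?_⟩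
  obtain ⟨n, rfl⟩ := henum g
  exact ⟨n + 1, Subgroup.subset_closure ⟨n, n.lt_succ_self, rfl⟩⟩

end Colimit

section Stage

universe u

/-- The injective map `index` numbers a set, using only numbers whose first component with respect
to `Nat.unpair` is at most `n`, so that infinitely many numbers stay available. -/
structure IsNumbering {K : Type*} (n : ℕ) (index : K → ℕ) : Prop where
  injective : Function.Injective index
  fst_unpair_le : ∀ k, (index k).unpair.1 ≤ n

lemma IsNumbering.exists_succ {K Q : Type*} [Countable Q] {n : ℕ} {index : K → ℕ}
    (h : IsNumbering n index) {f : K → Q} (hf : Function.Injective f) :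
    ∃ index' : Q → ℕ, IsNumbering (n + 1) index' ∧ ∀ k, index' (f k) = index k := by
  obtain ⟨code, hcode⟩ := exists_injective_nat Q
  let index' : Q → ℕ := Function.extend f index fun q => Nat.pair (n + 1) (code q)
  have hmem (k) : index' (f k) = index k := hf.extend_apply _ _ k
  have hnotMem {q} (hq : ¬ ∃ k, f k = q) : index' q = Nat.pair (n + 1) (code q) :=
    Function.extend_apply' _ _ _ hq
  have hne (k) {q} (hq : ¬ ∃ k, f k = q) : index' (f k) ≠ index' q := by
    intro heq
    have hle := h.fst_unpair_le k
    rw [← hmem, heq, hnotMem hq, Nat.unpair_pair] at hle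
    exact n.not_succ_le_self hle
  refine ⟨index', ⟨fun q q' heq => ?_, fun q => ?_⟩, hmem⟩
  · by_cases hq : ∃ k, f k = q <;> by_cases hq' : ∃ k, f k = q'
    · obtain ⟨⟨k, rfl⟩, k', rfl⟩ := And.intro hq hq'
      rw [hmem, hmem] at heq
      rw [h.injective heq]
    · obtain ⟨k, rfl⟩ := hq
      exact absurd heq (hne k hq')
    · obtain ⟨k', rfl⟩ := hq'
      exact absurd heq.symm (hne k' hq)
    · rw [hnotMem hq, hnotMem hq', Nat.pair_eq_pair] at heq
      exact hcode heq.2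
  · by_cases hq : ∃ k, f k = q
    · obtain ⟨k, rfl⟩ := hq
      exact hmem k ▸ (h.fst_unpair_le k).trans n.le_succ
    · rw [hnotMem hq, Nat.unpair_pair]

variable {G : Type u} [Group G] {A B : Subgroup G} {n : ℕ}

/-- A countable proper overgroup of `A` in which `A` is malnormal, with a numbering of its
elements. -/
structure Stage (A : Subgroup G) (n : ℕ) where
  K : Type u
  [group : Group K]
  [countable : Countable K]
  incl : A →* K
  injective : Function.Injective incl
  malnormal : Malnormal incl.range
  exists_notMem : ∃ t, t ∉ incl.range
  index : K → ℕ
  isNumbering : IsNumbering n index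

attribute [instance] Stage.group Stage.countable

/-- The embedding `j` exhibits `T` as an extension of `S` in which every element `y` of `S` outside
`A`, together with any `x` in `B` outside `A` and any nontrivial `c` in `A`, gives the element
`col x` as a positive word, of a length that depends only on the number of `y`. -/
structure Stage.IsExtension (col : G → G) (S : Stage A n) (T : Stage B (n + 1)) (j : S.K →* T.K) :
    Prop where
  injective : Function.Injective j
  incl_eq : ∀ {g} (hA : g ∈ A) (hB : g ∈ B), T.incl ⟨g, hB⟩ = j (S.incl ⟨g, hA⟩)
  mem_of_incl_eq : ∀ {b k}, T.incl b = j k → (b : G) ∈ A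
  index_map : ∀ k, T.index (j k) = S.index k
  isShortProd : ∀ y ∉ S.incl.range, ∀ x (hx : x ∈ B), x ∉ A → ∀ c (hc : c ∈ A), c ≠ 1 →
    ∀ hcol : col x ∈ A, IsShortProd {j y, T.incl ⟨x, hx⟩, j (S.incl ⟨c, hc⟩)}
      (wordBound (S.index y)) (j (S.incl ⟨col x, hcol⟩))

/-- The two groups `L` and `M`, as a family indexed by the booleans. -/
def Factor (L M : Type u) : Bool → Type u
  | true => L
  | false => M

instance (L M : Type u) [Group L] [Group M] : ∀ i, Group (Factor L M i)
  | true => inferInstanceAs (Group L)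
  | false => inferInstanceAs (Group M)

instance (L M : Type u) [Countable L] [Countable M] : ∀ i, Countable (Factor L M i)
  | true => inferInstanceAs (Countable L)
  | false => inferInstanceAs (Countable M)

/-- The two homomorphisms `φ` and `ψ`, as a family indexed by the booleans. -/
def factorHom {H L M : Type u} [Group H] [Group L] [Group M] (φ : H →* L) (ψ : H →* M) :
    ∀ i, H →* Factor L M i
  | true => φ
  | false => ψ

lemma Stage.exists_isExtension [Countable G] (hAB : A ≤ B) (S : Stage A n) (col : G → G) :
    ∃ (T : Stage B (n + 1)) (j : S.K →* T.K), S.IsExtension col T j := by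
  classical
  obtain ⟨Q, _, f, _, hf, hcomp, hrange, hmal, hword⟩ :=
    exists_pushout_quotient (φ := factorHom (Subgroup.inclusion hAB) S.incl)
      (Bool.forall_bool.2 ⟨S.injective, Subgroup.inclusion_injective hAB⟩) S.malnormal
      S.isNumbering.injective
      (fun _ (x : B) _ => if h : col x ∈ A then (⟨col x, h⟩ : A) else 1)
  obtain ⟨index, hindex, hindex_eq⟩ := S.isNumbering.exists_succ (hf false)
  let j : S.K →* Q := f false
  let incl : B →* Q := f true
  have hincl {g} (hA : g ∈ A) (hB : g ∈ B) : incl ⟨g, hB⟩ = j (S.incl ⟨g, hA⟩) := hcomp ⟨g, hA⟩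
  have hmem {b k} (h : incl b = j k) : (b : G) ∈ A := by
    obtain ⟨a, rfl⟩ := hrange b k h
    exact a.2
  have hnotMem : ∃ t, t ∉ incl.range := by
    obtain ⟨t, ht⟩ := S.exists_notMem
    refine ⟨j t, fun ⟨b, hb⟩ => ht ⟨⟨b, hmem hb⟩, hf false ?_⟩⟩
    exact (hincl (hmem hb) b.2).symm.trans hb
  refine ⟨⟨Q, incl, hf true, hmal, hnotMem, index, hindex⟩, j, hf false, hincl, hmem, hindex_eq,
    fun y hy x hx hxA c hc hc1 hcol => ?_⟩
  convert hword y hy ⟨x, hx⟩ (fun ⟨a, ha⟩ => hxA (by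
      obtain rfl : (a : G) = x := congrArg Subtype.val ha
      exact a.2)) ⟨c, hc⟩
    (fun h => hc1 (congrArg Subtype.val h)) using 1
  · rw [← hincl hc (hAB hc)]
    rfl
  · rw [dif_pos hcol, ← hincl hcol (hAB hcol)]
    rfl

lemma nonempty_stage_bot : Nonempty (Stage (⊥ : Subgroup G) 0) := by
  obtain ⟨code, hcode⟩ := exists_injective_nat (FreeGroup PUnit.{u + 1})
  exact ⟨{
    K := FreeGroup PUnit
    incl := 1
    injective := Function.injective_of_subsingleton _
    malnormal := by
      rintro _ _ _ ⟨g, rfl⟩ _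
      rfl
    exists_notMem := ⟨FreeGroup.of .unit, fun ⟨_, h⟩ => FreeGroup.of_ne_one _ h.symm⟩
    index := fun k => Nat.pair 0 (code k)
    isNumbering := ⟨fun _ _ h => hcode (Nat.pair_eq_pair.1 h).2, by simp⟩ }⟩

end Stage

section StageChain

universe u

variable {G : Type u} [Group G] {A : ℕ → Subgroup G} {col : G → G}

/-- A sequence of stages over the subgroups `A n`, each extending the previous one. -/
structure StageChain (A : ℕ → Subgroup G) (col : G → G) where
  stage : ∀ n, Stage (A n) n
  map : ∀ n, (stage n).K →* (stage (n + 1)).K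
  isExtension : ∀ n, (stage n).IsExtension col (stage (n + 1)) (map n)

lemma nonempty_stageChain [Countable G] (hA : Monotone A) (h0 : A 0 = ⊥) (col : G → G) :
    Nonempty (StageChain A col) := by
  obtain ⟨S₀⟩ : Nonempty (Stage (A 0) 0) := h0 ▸ nonempty_stage_bot
  choose next map hmap using
    fun n (S : Stage (A n) n) => S.exists_isExtension (hA n.le_succ) col
  let stage (n : ℕ) : Stage (A n) n := Nat.rec S₀ next n
  exact ⟨⟨stage, fun n => map n (stage n), fun n => hmap n (stage n)⟩⟩

namespace StageChain

/-- The group `K` is the union of the stages of `C`, and thus an overgroup of `G` when `G` is the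
union of the subgroups `A n`. -/
structure Limit (C : StageChain A col) (K : Type*) [Group K] where
  hom : ∀ n, (C.stage n).K →* K
  injective : ∀ n, Function.Injective (hom n)
  hom_map : ∀ n k, hom (n + 1) (C.map n k) = hom n k
  exists_eq : ∀ q, ∃ n k, hom n k = q
  incl : G →* K
  incl_coe : ∀ n (g : A n), incl g = hom n ((C.stage n).incl g)

lemma exists_limit (C : StageChain A col) (hA : Monotone A) (hex : ∀ g, ∃ n, g ∈ A n) :
    ∃ (K : Type u) (_ : Group K), Nonempty (C.Limit K) := by
  obtain ⟨K, _, f, hf, hfmap, hfex⟩ :=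
    exists_sequential_colimit _ C.map fun n => (C.isExtension n).injective
  obtain ⟨ι, hι⟩ := exists_hom_of_monotone hA hex (fun n => (f n).comp (C.stage n).incl)
    fun n g => (congrArg _ ((C.isExtension n).incl_eq g.2 _)).trans (hfmap n _)
  exact ⟨K, _, ⟨f, hf, hfmap, hfex, ι, hι⟩⟩

namespace Limit

variable {C : StageChain A col} {K : Type*} [Group K] (L : C.Limit K) {m n : ℕ}

lemma exists_hom_eq (hmn : m ≤ n) (k : (C.stage m).K) :
    ∃ k', L.hom n k' = L.hom m k ∧ (C.stage n).index k' = (C.stage m).index k := by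
  induction n, hmn using Nat.le_induction with
  | base => exact ⟨k, rfl, rfl⟩
  | succ n _ ih =>
    obtain ⟨k', hk', hindex⟩ := ih
    exact ⟨C.map n k', by rw [L.hom_map, hk'], by rw [(C.isExtension n).index_map, hindex]⟩

lemma monotone_range : Monotone fun n => (L.hom n).range := by
  rintro m n hmn _ ⟨k, rfl⟩
  obtain ⟨k', hk', -⟩ := L.exists_hom_eq hmn k
  exact ⟨k', hk'⟩

lemma mem_of_incl_eq (hA : Monotone A) {g : G} (hg : ∃ n, g ∈ A n) {k : (C.stage m).K}
    (h : L.incl g = L.hom m k) : g ∈ A m := by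
  obtain ⟨n, hn⟩ := hg
  rcases le_total n m with hnm | hmn
  · exact hA hnm hn
  induction n, hmn using Nat.le_induction with
  | base => exact hn
  | succ n hmn ih =>
    obtain ⟨k', hk', -⟩ := L.exists_hom_eq hmn k
    refine ih ((C.isExtension n).mem_of_incl_eq (b := ⟨g, hn⟩) (k := k') (L.injective (n + 1) ?_))
    rw [← L.incl_coe, L.hom_map, hk', h]

lemma incl_injective (hex : ∀ g, ∃ n, g ∈ A n) : Function.Injective L.incl := by
  refine (injective_iff_map_eq_one _).2 fun g h => ?_
  obtain ⟨n, hn⟩ := hex g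
  have hone : (⟨g, hn⟩ : A n) = 1 := by
    refine (C.stage n).injective (L.injective n ?_)
    rw [← L.incl_coe, h, map_one, map_one]
  exact congrArg Subtype.val hone

lemma exists_notMem_range_incl (hA : Monotone A) (hex : ∀ g, ∃ n, g ∈ A n) :
    ∃ t, t ∉ L.incl.range := by
  obtain ⟨t, ht⟩ := (C.stage 0).exists_notMem
  refine ⟨L.hom 0 t, fun ⟨g, hg⟩ => ht ?_⟩
  have hg0 := L.mem_of_incl_eq hA (hex g) hg
  exact ⟨⟨g, hg0⟩, L.injective 0 ((L.incl_coe 0 ⟨g, hg0⟩).symm.trans hg)⟩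

lemma exists_fg_comap_le (hA : Monotone A) (hex : ∀ g, ∃ n, g ∈ A n) {U : Subgroup K}
    (hU : U.FG) : ∃ n, U.comap L.incl ≤ A n := by
  obtain ⟨n, hn⟩ := exists_le_of_fg L.monotone_range.directed_le hU fun q _ => L.exists_eq q
  refine ⟨n, fun g hg => ?_⟩
  obtain ⟨k, hk⟩ := hn hg
  exact L.mem_of_incl_eq hA (hex g) hk.symm

lemma isShortProd {y : (C.stage m).K} (hy : L.hom m y ∉ L.incl.range)
    (hmn : m ≤ n) {x c : G} (hx : x ∈ A (n + 1)) (hxn : x ∉ A n) (hc : c ∈ A n) (hc1 : c ≠ 1)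
    (hcol : col x ∈ A n) :
    IsShortProd {L.hom m y, L.incl x, L.incl c} (wordBound ((C.stage m).index y))
      (L.incl (col x)) := by
  obtain ⟨y', hy', hindex⟩ := L.exists_hom_eq hmn y
  have hynotMem : y' ∉ (C.stage n).incl.range := by
    rintro ⟨g, rfl⟩
    exact hy ⟨g, by rw [L.incl_coe, hy']⟩
  convert ((C.isExtension n).isShortProd y' hynotMem x hx hxn c hc hc1 hcol).map
    (L.hom (n + 1)) using 1
  · simp only [Set.image_insert_eq, Set.image_singleton, L.hom_map, hy', ← L.incl_coe]
  · rw [hindex]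
  · rw [L.hom_map, ← L.incl_coe]

end Limit

end StageChain

theorem exists_extension [Countable G] (col : G → G) :
    ∃ (K : Type u) (_ : Group K) (ι : G →* K), Function.Injective ι ∧ (∃ t, t ∉ ι.range) ∧
      (∀ U : Subgroup K, U.FG → ∃ B : Subgroup G, B.FG ∧ U.comap ι ≤ B) ∧
      ∀ y ∉ ι.range, ∃ n, ∀ c, c ≠ 1 → ∀ g, ∃ B : Subgroup G, B.FG ∧
        ∀ x ∉ B, col x = g → IsShortProd {y, ι x, ι c} n (ι g) := by
  obtain ⟨A, hA, hA0, hAfg, hex⟩ := exists_monotone_fg G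
  obtain ⟨C⟩ := nonempty_stageChain hA hA0 col
  obtain ⟨K, _, ⟨L⟩⟩ := C.exists_limit hA hex
  refine ⟨K, _, L.incl, L.incl_injective hex, L.exists_notMem_range_incl hA hex,
    fun U hU => ?_, fun y hy => ?_⟩
  · obtain ⟨n, hn⟩ := L.exists_fg_comap_le hA hex hU
    exact ⟨A n, hAfg n, hn⟩
  · obtain ⟨m, y, rfl⟩ := L.exists_eq y
    refine ⟨wordBound ((C.stage m).index y), fun c hc g => ?_⟩
    obtain ⟨p, hp⟩ := hex c
    obtain ⟨q, hq⟩ := hex g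
    obtain ⟨n, hmn, hpn, hqn⟩ : ∃ n, m ≤ n ∧ p ≤ n ∧ q ≤ n :=
      ⟨max m (max p q), by omega, by omega, by omega⟩
    refine ⟨A n, hAfg n, ?_⟩
    rintro x hx rfl
    obtain ⟨l, hl⟩ := hex x
    obtain ⟨k, hk, hk'⟩ := Nat.exists_not_and_succ_of_not_zero_of_exists
      (p := fun k => x ∈ A (n + k)) hx ⟨l, hA (Nat.le_add_left l n) hl⟩
    have hle : n ≤ n + k := Nat.le_add_right n k
    exact L.isShortProd hy (hmn.trans hle) hk' hk (hA (hpn.trans hle) hp) hc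
      (hA (hqn.trans hle) hq)

end StageChain

/-! ### Initial segments of the generators -/

section InitialSegments

open FreeGroup (lift)
open Set Subgroup

universe u

section FinitelyGenerated

variable {G H : Type*} [Group G] [Group H]

lemma fg_map {U : Subgroup G} (hU : U.FG) (f : G →* H) : (U.map f).FG := by
  classical
  obtain ⟨s, rfl⟩ := hU
  exact ⟨s.image f, by rw [Finset.coe_image, MonoidHom.map_closure]⟩

lemma fg_zpowers (g : G) : (zpowers g).FG :=
  ⟨{g}, by rw [Finset.coe_singleton, zpowers_eq_closure]⟩

lemma exists_fg_map_eq (f : G →* H) {L : Subgroup G} {U : Subgroup H} (hU : U.FG)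
    (hUL : U ≤ L.map f) : ∃ V ≤ L, V.FG ∧ V.map f = U := by
  classical
  obtain ⟨s, rfl⟩ := hU
  obtain ⟨t, htL, rfl⟩ := Finset.subset_set_image_iff.1
    (show (s : Set H) ⊆ f '' (L : Set G) from (closure_le _).1 hUL)
  exact ⟨closure t, (closure_le _).2 htL, ⟨t, rfl⟩, by rw [MonoidHom.map_closure, Finset.coe_image]⟩

end FinitelyGenerated

section Relations

variable {X G G' : Type*} [Group G] [Group G'] {v : X → G} {v' : X → G'}

/-- The families `v` and `v'` satisfy the same relations among those in `L`. -/
def SameRelations (L : Subgroup (FreeGroup X)) (v : X → G) (v' : X → G') : Prop :=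
  ∀ w ∈ L, lift v w = 1 ↔ lift v' w = 1

namespace SameRelations

variable {L U : Subgroup (FreeGroup X)} {w w' : FreeGroup X} (h : SameRelations L v v')

include h

lemma symm : SameRelations L v' v := fun w hw => (h w hw).symm

lemma lift_eq_lift (hw : w ∈ L) (hw' : w' ∈ L) (heq : lift v w = lift v w') :
    lift v' w = lift v' w' := by
  have hone := (h (w⁻¹ * w') (mul_mem (inv_mem hw) hw')).1
    (by rw [map_mul, map_inv, heq, inv_mul_cancel])
  rwa [map_mul, map_inv, inv_mul_eq_one] at hone

lemma lift_mem_map (hU : U ≤ L) (hw : w ∈ L) (hmem : lift v w ∈ U.map (lift v)) :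
    lift v' w ∈ U.map (lift v') := by
  obtain ⟨u, hu, huw⟩ := hmem
  exact ⟨u, hu, h.lift_eq_lift (hU hu) hw huw⟩

lemma isShortProd_lift {S : Set (FreeGroup X)} {n : ℕ} (hS : S ⊆ L) (hw : w ∈ L)
    (hprod : IsShortProd (lift v '' S) n (lift v w)) :
    IsShortProd (lift v' '' S) n (lift v' w) := by
  obtain ⟨w', hw', heq⟩ := hprod.exists_map_eq
  have hw'L : w' ∈ L := hw'.mem_of_subset (L := L.toSubmonoid) hS
  exact h.lift_eq_lift hw'L hw heq ▸ hw'.map (lift v')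

end SameRelations

lemma lift_presentedGroup_of_eq_one {R : Set (FreeGroup X)} {w : FreeGroup X} :
    lift (PresentedGroup.of (rels := R)) w = 1 ↔ w ∈ normalClosure R := by
  rw [← PresentedGroup.mk_eq_one_iff,
    show lift PresentedGroup.of = PresentedGroup.mk R from FreeGroup.ext_hom _ _ fun _ => by
      rw [FreeGroup.lift_apply_of, PresentedGroup.of]]

end Relations

variable {X : Type u} [LinearOrder X] {G G' : Type*} [Group G] [Group G'] {v : X → G} {v' : X → G'}
  {α β γ : X} {g x : G} {w : FreeGroup X}

variable (v α) in
/-- The subgroup generated by the generators `v γ` with `γ < α`. -/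
def genLt : Subgroup G := closure (v '' Iio α)

variable (v α) in
/-- The subgroup generated by the generators `v γ` with `γ ≤ α`. -/
def genLe : Subgroup G := closure (v '' Iic α)

lemma genLt_le_genLe : genLt v α ≤ genLe v α := closure_mono (image_mono Iio_subset_Iic_self)

lemma genLe_le_genLt (h : α < β) : genLe v α ≤ genLt v β :=
  closure_mono (image_mono (Iic_subset_Iio.2 h))

lemma genLe_mono : Monotone (genLe v) := fun _ _ h =>
  closure_mono (image_mono (Iic_subset_Iic.2 h))

lemma genLt_mono : Monotone (genLt v) := fun _ _ h =>
  closure_mono (image_mono (Iio_subset_Iio h))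

lemma generator_mem_genLe : v α ∈ genLe v α := subset_closure ⟨α, le_rfl, rfl⟩

variable (v α) in
lemma map_lift_genLt : (genLt FreeGroup.of α).map (lift v) = genLt v α := by
  simp only [genLt, MonoidHom.map_closure, image_image, FreeGroup.lift_apply_of]

variable (v α) in
lemma map_lift_genLe : (genLe FreeGroup.of α).map (lift v) = genLe v α := by
  simp only [genLe, MonoidHom.map_closure, image_image, FreeGroup.lift_apply_of]

lemma lift_mem_genLt (hw : w ∈ genLt FreeGroup.of α) : lift v w ∈ genLt v α :=
  map_lift_genLt v α ▸ mem_map_of_mem _ hw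

lemma exists_lift_eq_of_mem_genLt (hg : g ∈ genLt v α) :
    ∃ w ∈ genLt FreeGroup.of α, lift v w = g := by
  rwa [← map_lift_genLt] at hg

lemma exists_le_genLe_of_fg {s : Set X} (hs : s.Nonempty) {U : Subgroup G} (hU : U.FG)
    (hUs : U ≤ closure (v '' s)) : ∃ γ ∈ s, U ≤ genLe v γ := by
  have := hs.to_subtype
  have hdir : Directed (· ≤ ·) fun γ : s => genLe v γ :=
    directed_of_isDirected_le fun _ _ h => genLe_mono h
  have hsup : closure (v '' s) ≤ ⨆ γ : s, genLe v γ := by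
    rw [closure_le, image_subset_iff]
    exact fun γ hγ => mem_iSup_of_mem (⟨γ, hγ⟩ : s) generator_mem_genLe
  obtain ⟨γ, hγ⟩ := exists_le_of_fg hdir hU fun g hg =>
    (mem_iSup_of_directed hdir).1 (hsup (hUs hg))
  exact ⟨γ, γ.2, hγ⟩

lemma exists_mem_genLe [Nonempty X] (hv : closure (range v) = ⊤) (g : G) : ∃ α, g ∈ genLe v α := by
  obtain ⟨α, -, hα⟩ := exists_le_genLe_of_fg univ_nonempty (fg_zpowers g)
    (show zpowers g ≤ closure (v '' univ) by rw [image_univ, hv]; exact le_top)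
  exact ⟨α, hα (mem_zpowers g)⟩

variable (v) in
/-- The element `g` occurs for the first time in the subgroup generated by the `v γ` with
`γ ≤ α`. -/
def IsLevel (g : G) (α : X) : Prop := g ∈ genLe v α ∧ g ∉ genLt v α

lemma IsLevel.ne_one (h : IsLevel v g α) : g ≠ 1 := fun h1 => h.2 (h1 ▸ one_mem _)

lemma IsLevel.lt_of_mem_genLt (h : IsLevel v g α) (hg : g ∈ genLt v β) : α < β :=
  lt_of_not_ge fun hle => h.2 (genLt_mono hle hg)

lemma IsLevel.unique (h : IsLevel v g α) (h' : IsLevel v g β) : α = β :=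
  le_antisymm (not_lt.1 fun hlt => (h.lt_of_mem_genLt (genLe_le_genLt hlt h'.1)).false)
    (not_lt.1 fun hlt => (h'.lt_of_mem_genLt (genLe_le_genLt hlt h.1)).false)

lemma exists_isLevel [WellFoundedLT X] [Nonempty X] (hv : closure (range v) = ⊤) (hg : g ≠ 1) :
    ∃ α, IsLevel v g α := by
  obtain ⟨α, hα, hmin⟩ := wellFounded_lt.has_min {α | g ∈ genLe v α} (exists_mem_genLe hv g)
  refine ⟨α, hα, fun hlt => ?_⟩
  rcases (Iio α).eq_empty_or_nonempty with hα' | hα'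
  · rw [genLt, hα', image_empty, Subgroup.closure_empty, mem_bot] at hlt
    exact hg hlt
  · obtain ⟨γ, hγ, hgγ⟩ := exists_le_genLe_of_fg hα' (fg_zpowers g) (zpowers_le.2 hlt)
    exact hmin γ (hgγ (mem_zpowers g)) hγ

lemma SameRelations.isLevel {L : Subgroup (FreeGroup X)} (h : SameRelations L v v')
    (hL : genLe FreeGroup.of γ ≤ L) (hw : w ∈ L)
    (hγ : IsLevel v (lift v w) γ) : IsLevel v' (lift v' w) γ := by
  rw [IsLevel, ← map_lift_genLe, ← map_lift_genLt] at hγ ⊢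
  exact ⟨h.lift_mem_map hL hw hγ.1,
    fun hmem => hγ.2 (h.symm.lift_mem_map (genLt_le_genLe.trans hL) hw hmem)⟩

/-- Let `D` assign a word to every level. For every nontrivial `c` and every word `w` in the
generators below `β`, up to finitely generated subgroups, every `x` at a level to which `D` assigns
`w` expresses the value of `w` as a positive word of length at most `n` in `y`, `x` and `c`. -/
def IsWordBound (D : X → FreeGroup X) (v : X → G) (β : X) (y : G) (n : ℕ) : Prop :=
  ∀ c ∈ genLt v β, c ≠ 1 → ∀ w ∈ genLt FreeGroup.of β, ∃ B ≤ genLt v β, B.FG ∧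
    ∀ x ∈ genLt v β, x ∉ B → ∀ γ, IsLevel v x γ → D γ = w → IsShortProd {y, x, c} n (lift v w)

/-- The group generated by the `v γ` with `γ ≤ β` extends the group generated by those with `γ < β`
as in `exists_extension`, with the elements to be expressed prescribed by `D` as in
`IsWordBound`. -/
structure IsStage (D : X → FreeGroup X) (v : X → G) (β : X) : Prop where
  isLevel : IsLevel v (v β) β
  exists_fg : ∀ U ≤ genLe v β, U.FG → ∃ B ≤ genLt v β, B.FG ∧ U ⊓ genLt v β ≤ B
  exists_isWordBound : ∀ y, IsLevel v y β → ∃ n, IsWordBound D v β y n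

variable {D : X → FreeGroup X} {n : ℕ}

lemma IsWordBound.congr (h : SameRelations (genLe FreeGroup.of β) v v')
    (hw : w ∈ genLe FreeGroup.of β) (hn : IsWordBound D v β (lift v w) n) :
    IsWordBound D v' β (lift v' w) n := by
  intro c hc hc1 u hu
  obtain ⟨c, hcL, rfl⟩ := exists_lift_eq_of_mem_genLt hc
  obtain ⟨B, hB, hBfg, hBw⟩ := hn (lift v c) (lift_mem_genLt hcL)
    (fun h1 => hc1 ((h c (genLt_le_genLe hcL)).1 h1)) u hu
  rw [← map_lift_genLt] at hB
  obtain ⟨B, hBL, hB₀, rfl⟩ := exists_fg_map_eq _ hBfg hB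
  refine ⟨B.map (lift v'), map_lift_genLt v' β ▸ map_mono hBL, fg_map hB₀ _, ?_⟩
  intro x hx hxB γ hγ hDγ
  obtain ⟨x, hxL, rfl⟩ := exists_lift_eq_of_mem_genLt hx
  have hprod := hBw (lift v x) (lift_mem_genLt hxL)
    (fun hmem => hxB (h.lift_mem_map (hBL.trans genLt_le_genLe) (genLt_le_genLe hxL) hmem)) γ
    (h.symm.isLevel (genLe_mono (hγ.lt_of_mem_genLt hx).le) (genLt_le_genLe hxL) hγ) hDγ
  have hletters : ({w, x, c} : Set (FreeGroup X)) ⊆ genLe FreeGroup.of β :=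
    insert_subset hw (insert_subset (genLt_le_genLe hxL)
      (singleton_subset_iff.2 (genLt_le_genLe hcL)))
  simpa only [image_insert_eq, image_singleton] using h.isShortProd_lift hletters
    (genLt_le_genLe hu) (by simpa only [image_insert_eq, image_singleton] using hprod)

lemma IsStage.congr (h : SameRelations (genLe FreeGroup.of β) v v') (hv : IsStage D v β) :
    IsStage D v' β where
  isLevel := by
    simpa only [FreeGroup.lift_apply_of] using h.isLevel le_rfl generator_mem_genLe
      (by simpa only [FreeGroup.lift_apply_of] using hv.isLevel)
  exists_fg U hU hUfg := by
    rw [← map_lift_genLe] at hU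
    obtain ⟨U, hUL, hU₀, rfl⟩ := exists_fg_map_eq _ hUfg hU
    obtain ⟨B, hB, hBfg, hUB⟩ := hv.exists_fg (U.map (lift v))
      (map_lift_genLe v β ▸ map_mono hUL) (fg_map hU₀ _)
    rw [← map_lift_genLt] at hB
    obtain ⟨B, hBL, hB₀, rfl⟩ := exists_fg_map_eq _ hBfg hB
    refine ⟨B.map (lift v'), map_lift_genLt v' β ▸ map_mono hBL, fg_map hB₀ _, ?_⟩
    rintro g ⟨hgU, hg⟩
    obtain ⟨w, hw, rfl⟩ := exists_lift_eq_of_mem_genLt hg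
    exact h.lift_mem_map (hBL.trans genLt_le_genLe) (genLt_le_genLe hw)
      (hUB ⟨h.symm.lift_mem_map hUL (genLt_le_genLe hw) hgU, lift_mem_genLt hw⟩)
  exists_isWordBound y hy := by
    obtain ⟨w, hw, rfl⟩ : y ∈ (genLe FreeGroup.of β).map (lift v') := map_lift_genLe v' β ▸ hy.1
    exact (hv.exists_isWordBound _ (h.symm.isLevel le_rfl hw hy)).imp fun n hn => hn.congr h hw

/-! ### Adding one generator -/

lemma countable_closure {s : Set G} (hs : s.Countable) : Countable (closure s) := by
  have := hs.to_subtype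
  rw [FreeGroup.closure_eq_range]
  exact (countable_range _).to_subtype

lemma exists_forall_isLevel_eq_lift (D : X → FreeGroup X) (v : X → G) (β : X) :
    ∃ col : genLt v β → genLt v β, ∀ (x : genLt v β) (γ), IsLevel v (x : G) γ →
      D γ ∈ genLt FreeGroup.of β → (col x : G) = lift v (D γ) := by
  have hcol (x : genLt v β) : ∃ g : genLt v β, ∀ γ, IsLevel v (x : G) γ →
      D γ ∈ genLt FreeGroup.of β → (g : G) = lift v (D γ) := by
    by_cases hx : ∃ γ, IsLevel v (x : G) γ ∧ D γ ∈ genLt FreeGroup.of β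
    · obtain ⟨γ, hγ, hD⟩ := hx
      exact ⟨⟨lift v (D γ), lift_mem_genLt hD⟩, fun γ' hγ' _ =>
        congrArg (fun δ => lift v (D δ)) (hγ.unique hγ')⟩
    · exact ⟨1, fun γ hγ hD => absurd ⟨γ, hγ, hD⟩ hx⟩
  choose col hcol using hcol
  exact ⟨col, hcol⟩

lemma exists_forall_lift_eq (v : X → G) (β : X) (ι : genLt v β →* G') (t : G') :
    ∃ v' : X → G', v' β = t ∧
      ∀ w (hw : w ∈ genLt FreeGroup.of β), lift v' w = ι ⟨lift v w, lift_mem_genLt hw⟩ := by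
  classical
  let v' (γ : X) : G' := if h : γ < β then ι ⟨v γ, subset_closure ⟨γ, h, rfl⟩⟩ else t
  refine ⟨v', dif_neg (lt_irrefl β), fun w hw => ?_⟩
  induction hw using closure_induction with
  | mem w hw =>
    obtain ⟨γ, hγ, rfl⟩ := hw
    simp only [FreeGroup.lift_apply_of]
    exact dif_pos hγ
  | one =>
    simp only [map_one]
    exact (map_one ι).symm
  | mul w w' hw hw' h h' =>
    simp only [map_mul, h, h']
    exact (map_mul ι _ _).symm
  | inv w hw h =>
    simp only [map_inv, h]
    exact (map_inv ι _).symm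

lemma exists_mk_lift_eq (a : genLt v β) :
    ∃ w, ∃ hw : w ∈ genLt FreeGroup.of β, ⟨lift v w, lift_mem_genLt hw⟩ = a := by
  obtain ⟨w, hw, hwa⟩ := exists_lift_eq_of_mem_genLt a.2
  exact ⟨w, hw, Subtype.ext hwa⟩

lemma range_eq_genLt {ι : genLt v β →* G'}
    (hv' : ∀ w (hw : w ∈ genLt FreeGroup.of β), lift v' w = ι ⟨lift v w, lift_mem_genLt hw⟩) :
    ι.range = genLt v' β := by
  refine le_antisymm ?_ fun g hg => ?_
  · rintro _ ⟨a, rfl⟩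
    obtain ⟨w, hw, rfl⟩ := exists_mk_lift_eq a
    exact hv' w hw ▸ lift_mem_genLt hw
  · obtain ⟨w, hw, rfl⟩ := exists_lift_eq_of_mem_genLt hg
    exact ⟨_, (hv' w hw).symm⟩

theorem exists_isStage {G : Type u} [Group G] [Countable (Iio β)] (D : X → FreeGroup X)
    (v : X → G) : ∃ (K : Type u) (_ : Group K) (v' : X → K), IsStage D v' β ∧
      SameRelations (genLt FreeGroup.of β) v' v := by
  have : Countable (genLt v β) := countable_closure ((Iio β).to_countable.image v)
  obtain ⟨col, hcol⟩ := exists_forall_isLevel_eq_lift D v β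
  obtain ⟨K, _, ι, hι, ⟨t, ht⟩, hfg, hword⟩ := exists_extension col
  obtain ⟨v', rfl, hv'⟩ := exists_forall_lift_eq v β ι t
  have hrange : ι.range = genLt v' β := range_eq_genLt hv'
  have hrel : SameRelations (genLt FreeGroup.of β) v' v := fun w hw => by
    rw [hv' w hw, map_eq_one_iff ι hι, Subtype.ext_iff, OneMemClass.coe_one]
  refine ⟨K, _, v', ⟨⟨generator_mem_genLe, hrange ▸ ht⟩, fun U _ hU => ?_, fun y hy => ?_⟩, hrel⟩
  · obtain ⟨B, hB, hUB⟩ := hfg U hU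
    refine ⟨B.map ι, hrange ▸ map_le_range ι B, fg_map hB ι, ?_⟩
    rw [← hrange]
    rintro _ ⟨hgU, a, rfl⟩
    exact mem_map_of_mem ι (hUB hgU)
  · obtain ⟨n, hn⟩ := hword y (hrange ▸ hy.2)
    refine ⟨n, fun c hc hc1 w hw => ?_⟩
    obtain ⟨c, rfl⟩ : c ∈ ι.range := hrange ▸ hc
    obtain ⟨B, hB, hBw⟩ := hn c (fun h => hc1 (h ▸ map_one ι)) ⟨lift v w, lift_mem_genLt hw⟩
    refine ⟨B.map ι, hrange ▸ map_le_range ι B, fg_map hB ι, fun x hx hxB γ hγ hDγ => ?_⟩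
    have hγβ : γ < β := hγ.lt_of_mem_genLt hx
    obtain ⟨x, rfl⟩ : x ∈ ι.range := hrange ▸ hx
    have hlev : IsLevel v (x : G) γ := by
      obtain ⟨u, hu, rfl⟩ := exists_mk_lift_eq x
      exact hrel.isLevel (genLe_le_genLt hγβ) hu (hv' u hu ▸ hγ)
    rw [hv' w hw]
    subst hDγ
    exact hBw x (fun h => hxB (mem_map_of_mem ι h)) (Subtype.ext (hcol x γ hlev hw))

/-! ### Transfinite recursion -/

lemma exists_mem_normalClosure_of_mem_iUnion {ι : Type*} [Nonempty ι] {R : ι → Set G}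
    (hR : Directed (· ⊆ ·) R) (hg : g ∈ normalClosure (⋃ i, R i)) :
    ∃ i, g ∈ normalClosure (R i) := by
  have hdir : Directed (· ≤ ·) fun i => normalClosure (R i) :=
    hR.mono_comp (g := normalClosure) _ fun _ _ h => normalClosure_mono h
  have hsub : ⋃ i, R i ⊆ (⨆ i, normalClosure (R i) : Subgroup G) :=
    iUnion_subset fun i => subset_normalClosure.trans (le_iSup (fun i => normalClosure (R i)) i)
  exact (mem_iSup_of_directed hdir).1 (normalClosure_le_normal hsub hg)

/-- The set `S` consists of all relations between the generators `γ ≤ β` of some group which is a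
stage for `D` and in which the generators `γ < β` satisfy precisely the consequences of `R`. -/
def IsStep (D : X → FreeGroup X) (β : X) (R S : Set (FreeGroup X)) : Prop :=
  ∃ (K : Type u) (_ : Group K) (v : X → K), IsStage D v β ∧
    SameRelations (genLt FreeGroup.of β) v (PresentedGroup.of (rels := R)) ∧
      S = {w ∈ genLe FreeGroup.of β | lift v w = 1}

lemma exists_forall_isStep [WellFoundedLT X] [∀ a : X, Countable (Iio a)]
    (D : X → X → FreeGroup X) :
    ∃ S : X → Set (FreeGroup X), ∀ β, IsStep (D β) β (⋃ γ : Iio β, S γ) (S β) := by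
  have hstep (β : X) (R : Set (FreeGroup X)) : ∃ S, IsStep (D β) β R S := by
    obtain ⟨K, _, v, hv, hrel⟩ := exists_isStage (β := β) (D β) (PresentedGroup.of (rels := R))
    exact ⟨_, K, _, v, hv, hrel, rfl⟩
  choose step hstep using hstep
  let S : X → Set (FreeGroup X) :=
    (wellFounded_lt (α := X)).fix fun β ih => step β (⋃ γ : Iio β, ih γ γ.2)
  have hS (β : X) : S β = step β (⋃ γ : Iio β, S γ) := WellFounded.fix_eq _ _ _
  exact ⟨S, fun β => by rw [hS β]; exact hstep _ _⟩

namespace IsStep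

variable {D : X → X → FreeGroup X} {S : X → Set (FreeGroup X)}
  (hS : ∀ β, IsStep (D β) β (⋃ γ : Iio β, S γ) (S β))

include hS

lemma mem_genLe (hw : w ∈ S β) : w ∈ genLe FreeGroup.of β := by
  obtain ⟨K, _, v, -, -, hSβ⟩ := hS β
  rw [hSβ] at hw
  exact hw.1

lemma mem_iff_of_mem_genLt (hw : w ∈ genLt FreeGroup.of β) :
    w ∈ S β ↔ w ∈ normalClosure (⋃ γ : Iio β, S γ) := by
  obtain ⟨K, _, v, -, hrel, hSβ⟩ := hS β
  rw [← lift_presentedGroup_of_eq_one, ← hrel w hw, hSβ]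
  exact and_iff_right (genLt_le_genLe hw)

lemma monotone : Monotone S := monotone_iff_forall_lt.2 fun γ _ hγβ _ hw =>
  (mem_iff_of_mem_genLt hS (genLe_le_genLt hγβ (mem_genLe hS hw))).2
    (subset_normalClosure (mem_iUnion.2 ⟨⟨γ, hγβ⟩, hw⟩))

lemma mem_of_mem_normalClosure_of_le (hγβ : γ ≤ β) (hwβ : w ∈ genLe FreeGroup.of β)
    (hw : w ∈ normalClosure (S γ)) : w ∈ S β := by
  have hsub : S γ ⊆ S β := monotone hS hγβ
  obtain ⟨K, _, v, -, -, hSβ⟩ := hS β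
  have hker : S β ⊆ (lift v).ker := hSβ ▸ fun _ hw => hw.2
  rw [hSβ]
  exact ⟨hwβ, normalClosure_le_normal (hsub.trans hker) hw⟩

lemma mem_of_mem_normalClosure [WellFoundedLT X] (hwβ : w ∈ genLe FreeGroup.of β)
    (hw : w ∈ normalClosure (S γ)) : w ∈ S β := by
  induction γ using WellFoundedLT.induction with
  | ind γ ih =>
    rcases le_or_gt γ β with hγβ | hβγ
    · exact mem_of_mem_normalClosure_of_le hS hγβ hwβ hw
    · have hwγ : w ∈ genLt FreeGroup.of γ := genLe_le_genLt hβγ hwβ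
      have : Nonempty (Iio γ) := ⟨⟨β, hβγ⟩⟩
      have hwS : w ∈ S γ := mem_of_mem_normalClosure_of_le hS le_rfl (genLt_le_genLe hwγ) hw
      obtain ⟨δ, hδ⟩ := exists_mem_normalClosure_of_mem_iUnion
        (R := fun δ : Iio γ => S δ) (directed_of_isDirected_le fun _ _ h => monotone hS h)
        ((mem_iff_of_mem_genLt hS hwγ).1 hwS)
      exact ih δ δ.2 hδ

lemma isStage_presentedGroup [WellFoundedLT X] (β : X) :
    IsStage (D β) (PresentedGroup.of (rels := ⋃ γ, S γ)) β := by
  have : Nonempty X := ⟨β⟩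
  have hmem (w) (hw : w ∈ genLe FreeGroup.of β) : w ∈ S β ↔ w ∈ normalClosure (⋃ γ, S γ) := by
    refine ⟨fun h => subset_normalClosure (mem_iUnion_of_mem β h), fun h => ?_⟩
    obtain ⟨γ, hγ⟩ := exists_mem_normalClosure_of_mem_iUnion (monotone hS).directed_le h
    exact mem_of_mem_normalClosure hS hw hγ
  obtain ⟨K, _, v, hv, -, hSβ⟩ := hS β
  refine hv.congr fun w hw => ?_
  rw [lift_presentedGroup_of_eq_one, ← hmem w hw, hSβ]
  exact (and_iff_right hw).symm

end IsStep

theorem exists_forall_isStage [WellFoundedLT X] [∀ a : X, Countable (Iio a)]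
    (D : X → X → FreeGroup X) : ∃ (G : Type u) (_ : Group G) (v : X → G),
      closure (range v) = ⊤ ∧ ∀ β, IsStage (D β) v β := by
  obtain ⟨S, hS⟩ := exists_forall_isStep D
  exact ⟨_, _, _, PresentedGroup.closure_range_of _, IsStep.isStage_presentedGroup hS⟩

/-! ### Uncountable sets generate in boundedly many steps -/

section UncountableSets

variable {D : X → X → FreeGroup X} {Y : Set G}

lemma finite_setOf_isLevel [WellFoundedLT X] (hst : ∀ β, IsStage (D β) v β) {U : Subgroup G}
    (hU : U.FG) (hUα : U ≤ genLt v α) : {γ | ∃ g ∈ U, IsLevel v g γ}.Finite := by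
  induction α using WellFoundedLT.induction generalizing U with
  | ind α ih =>
    rcases (Iio α).eq_empty_or_nonempty with hα | hα
    · rw [genLt, hα, image_empty, Subgroup.closure_empty] at hUα
      refine finite_empty.subset ?_
      rintro γ ⟨g, hg, hγ⟩
      exact hγ.ne_one (mem_bot.1 (hUα hg))
    · obtain ⟨γ, hγ, hUγ⟩ := exists_le_genLe_of_fg hα hU hUα
      obtain ⟨B, hB, hBfg, hUB⟩ := (hst γ).exists_fg U hUγ hU
      refine ((ih γ hγ hBfg hB).insert γ).subset ?_
      rintro δ ⟨g, hg, hδ⟩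
      by_cases hgγ : g ∈ genLt v γ
      · exact Or.inr ⟨g, hUB ⟨hg, hgγ⟩, hδ⟩
      · exact Or.inl (hδ.unique ⟨hUγ hg, hgγ⟩)

lemma IsWordBound.exists_finset [WellFoundedLT X] (hst : ∀ β, IsStage (D β) v β) {y c : G}
    (hy : y ∈ Y) (hc : c ∈ Y) (hcγ : IsLevel v c γ) (hγ : γ < α) (hn : IsWordBound (D α) v α y n)
    (hw : w ∈ genLt FreeGroup.of α) : ∃ F : Finset X, ∀ β ∉ F, β < α → D α β = w →
      ∀ x ∈ Y, IsLevel v x β → IsShortProd Y n (lift v w) := by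
  obtain ⟨B, hB, hBfg, hBw⟩ := hn c (genLe_le_genLt hγ hcγ.1) hcγ.ne_one w hw
  have hfin := finite_setOf_isLevel hst hBfg hB
  refine ⟨hfin.toFinset, fun β hβ hβα hD x hx hxβ => ?_⟩
  have hxB : x ∉ B := fun hxB => hβ (hfin.mem_toFinset.2 ⟨x, hxB, hxβ⟩)
  exact (hBw x (genLe_le_genLt hβα hxβ.1) hxB β hxβ hD).mono
    (insert_subset hy (insert_subset hx (singleton_subset_iff.2 hc))) le_rfl

lemma mk_eq_mk_of_isLevel {G : Type u} [Group G] {v : X → G} [Infinite X]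
    (hv : closure (range v) = ⊤) (hlevel : ∀ α, IsLevel v (v α) α) :
    Cardinal.mk G = Cardinal.mk X := by
  have hsurj : Function.Surjective (lift v) := by
    rw [← MonoidHom.range_eq_top, FreeGroup.range_lift_eq_closure, hv]
  have hinj : Function.Injective v := fun α β h => (hlevel α).unique (h ▸ hlevel β)
  refine le_antisymm ?_ (Cardinal.mk_le_of_injective hinj)
  calc Cardinal.mk G ≤ Cardinal.mk (FreeGroup X) := Cardinal.mk_le_of_surjective hsurj
    _ = Cardinal.mk X := by rw [Cardinal.mk_freeGroup, max_eq_left (Cardinal.aleph0_le_mk X)]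

variable [WellFoundedLT X] [Nonempty X] [∀ a : X, Countable (Iio a)]

lemma not_countable_setOf_isLevel (hv : closure (range v) = ⊤) (hY : ¬Y.Countable) :
    ¬{α | ∃ y ∈ Y, IsLevel v y α}.Countable := by
  intro h
  have hle (α : X) : (genLe v α : Set G).Countable :=
    (countable_closure ((countable_Iic_of_countable_Iio α).image v)).to_set
  refine hY (((h.biUnion fun α _ => hle α).insert 1).mono fun y hy => ?_)
  rcases eq_or_ne y 1 with hy1 | hy1
  · exact Or.inl hy1
  · obtain ⟨α, hα⟩ := exists_isLevel hv hy1
    exact Or.inr (mem_biUnion (⟨y, hy, hα⟩ : ∃ y ∈ Y, IsLevel v y α) hα.1)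

lemma exists_not_countable_setOf_isWordBound (hv : closure (range v) = ⊤)
    (hst : ∀ β, IsStage (D β) v β) (hY : ¬Y.Countable) :
    ∃ n, ¬{α | ∃ y ∈ Y, IsLevel v y α ∧ IsWordBound (D α) v α y n}.Countable := by
  by_contra! h
  refine not_countable_setOf_isLevel hv hY ((countable_iUnion h).mono ?_)
  rintro α ⟨y, hy, hα⟩
  obtain ⟨n, hn⟩ := (hst α).exists_isWordBound y hα
  exact mem_iUnion.2 ⟨n, y, hy, hα, hn⟩

theorem exists_forall_isShortProd {color : X → X → FreeGroup X} (hcolor : IsStrongColoring color)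
    (hv : closure (range v) = ⊤) (hst : ∀ β, IsStage (fun γ => color γ β) v β)
    (hY : ¬Y.Countable) : ∃ n, ∀ g, IsShortProd Y n g := by
  obtain ⟨n, hn⟩ := exists_not_countable_setOf_isWordBound hv hst hY
  set Z := {α | ∃ y ∈ Y, IsLevel v y α ∧ IsWordBound (fun γ => color γ α) v α y n}
  obtain ⟨α₀, c, hc, hcα₀, -⟩ : Z.Nonempty :=
    nonempty_iff_ne_empty.2 fun h => hn (h ▸ countable_empty)
  refine ⟨n, fun g => ?_⟩
  obtain ⟨δ, hδ⟩ := exists_mem_genLe hv g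
  obtain ⟨w, hw, rfl⟩ := map_lift_genLe v δ ▸ hδ
  have hZ' : ¬(Z \ Iic (max α₀ δ)).Countable := fun h =>
    hn (h.of_sdiff (countable_Iic_of_countable_Iio _))
  have hF (b : X) : ∃ F : Finset X, b ∈ Z \ Iic (max α₀ δ) → ∀ a ∉ F, a < b → color a b = w →
      ∀ x ∈ Y, IsLevel v x a → IsShortProd Y n (lift v w) := by
    by_cases hb : b ∈ Z \ Iic (max α₀ δ)
    · obtain ⟨⟨y, hy, -, hyn⟩, hlt⟩ := hb
      obtain ⟨hα₀, hδ⟩ := max_lt_iff.1 (not_le.1 hlt)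
      exact (hyn.exists_finset hst hy hc hcα₀ hα₀ (genLe_le_genLt hδ hw)).imp fun F hF _ => hF
    · exact ⟨∅, fun h => absurd h hb⟩
  choose F hF using hF
  obtain ⟨a, ⟨⟨x, hx, hxa, -⟩, -⟩, b, hb, hab, haF, hcol⟩ := hcolor _ hZ' F w
  exact hF b hb a haF hab hcol x hx hxa

end UncountableSets

theorem exists_group_forall_isShortProd [WellFoundedLT X] [∀ a : X, Countable (Iio a)]
    (hX : Cardinal.mk X = Cardinal.aleph 1) :
    ∃ (G : Type u) (_ : Group G), Cardinal.mk G = Cardinal.aleph 1 ∧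
      ∀ Y : Set G, ¬Y.Countable → ∃ n, ∀ g, IsShortProd Y n g := by
  have : Infinite X := Cardinal.infinite_iff.2 (hX ▸ Cardinal.aleph0_le_aleph 1)
  obtain ⟨f, hf⟩ := exists_isStrongColoring hX
  obtain ⟨e⟩ : Nonempty (X ≃ FreeGroup X) := Cardinal.eq.1 (by
    rw [Cardinal.mk_freeGroup, max_eq_left (Cardinal.aleph0_le_mk X)])
  have hcolor := hf.comp e.surjective
  obtain ⟨G, _, v, hv, hst⟩ := exists_forall_isStage fun β γ => e (f γ β)
  exact ⟨G, _, (mk_eq_mk_of_isLevel hv fun β => (hst β).isLevel).trans hX,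
    fun Y hY => exists_forall_isShortProd hcolor hv hst hY⟩

end InitialSegments

end JonssonSemigroup

theorem exists_jonsson_semigroup :
    ∃ (G : Type) (_ : Group G),
      Cardinal.mk G = Cardinal.aleph 1 ∧
      ∀ Y : Set G, ¬Y.Countable →
        ∃ n : ℕ, ∀ g : G, ∃ m : ℕ, 1 ≤ m ∧ m ≤ n ∧
          ∃ a : Fin m → G, (∀ i, a i ∈ Y) ∧ g = (List.ofFn a).prod := by
  have hX : Cardinal.mk (Cardinal.aleph 1).ord.ToType = Cardinal.aleph 1 := Cardinal.mk_ord_toType _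
  have hIio (a : (Cardinal.aleph 1).ord.ToType) : Countable (Set.Iio a) := by
    rw [← Cardinal.mk_le_aleph0_iff, ← Order.lt_succ_iff, Cardinal.succ_aleph0]
    exact (Cardinal.mk_Iio_lt a (by simp)).trans_eq hX
  obtain ⟨G, _, hG, hY⟩ := JonssonSemigroup.exists_group_forall_isShortProd hX
  exact ⟨G, _, hG, fun Y hYc => (hY Y hYc).imp fun n hn g => (hn g).exists_ofFn_prod_eq⟩
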